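/- arXiv:math/0601308 — 2 statements merged into one kernel-verified Lean document; each statement's English description precedes it below -/
import Mathlib

section
/- Let m ≥ 2 be an integer and let f(t,x;τ,ξ) be a polynomial of degree m+1 in (τ,ξ) ∈ ℝ×ℝⁿ whose coefficients are real-analytic on an open set U ⊂ ℝ×ℝⁿ, with homogeneous decomposition f = Σ_{l=0}^{m+1} f_l. Let ψ be real-analytic with Σ = {(t,x)∈U : t=ψ(x)}, and assume for a nonzero constant a that 0 ≠ 1 − |∇ψ(x)|² = ((−m+1)^m·a^m/m^{m−1})·f_{m+1}(ψ(x),x;−1,∇ψ(x)) and f_m(ψ(x),x;−1,∇ψ(x)) = 0 for all relevant x. Then there exist an open neighborhood Ω of Σ and a function w(s,x), real-analytic in a neighborhood of {0}×{x}, such that u(t,x) = a·(t−ψ(x))^{(m−1)/m} + (t−ψ(x))·w((t−ψ(x))^{1/m}, x) is a real-analytic solution of u_tt − Δu = f(t,x;∂_t u,∇u) on Ω ∩ {t > ψ(x)}; consequently u(t,x) ∼ a·(t−ψ(x))^{(m−1)/m} (vanishing) and ∂_t u(t,x) ∼ a·((m−1)/m)·(t−ψ(x))^{−1/m} (blow-up)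 as t−ψ(x) → 0⁺, and u is analytic in ((t−ψ)^{1/m}, x) with no logarithm involved. -/
open Real Filter

/-- partial derivative in `t` of a function `u(t,x)` -/
noncomputable def ptd {n : ℕ} (u : ℝ → (Fin n → ℝ) → ℝ) (t : ℝ) (x : Fin n → ℝ) : ℝ :=
  deriv (fun s => u s x) t

/-- partial derivative in `x i` of a function `u(t,x)` -/
noncomputable def pxd {n : ℕ} (i : Fin n) (u : ℝ → (Fin n → ℝ) → ℝ) (t : ℝ)
    (x : Fin n → ℝ) : ℝ :=
  deriv (fun y => u t (Function.update x i y)) (x i)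

/-- Laplacian in `x` of a function `u(t,x)` -/
noncomputable def lapx {n : ℕ} (u : ℝ → (Fin n → ℝ) → ℝ) (t : ℝ) (x : Fin n → ℝ) : ℝ :=
  ∑ i, pxd i (pxd i u) t x

/-- gradient in `x` of a function `u(t,x)` -/
noncomputable def gradx {n : ℕ} (u : ℝ → (Fin n → ℝ) → ℝ) (t : ℝ) (x : Fin n → ℝ) :
    Fin n → ℝ :=
  fun i => pxd i u t x

/-- gradient of a function of `x` alone -/
noncomputable def gradp {n : ℕ} (ψ : (Fin n → ℝ) → ℝ) (x : Fin n → ℝ) : Fin n → ℝ :=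
  fun i => deriv (fun y => ψ (Function.update x i y)) (x i)

/-- `g(t,x;τ,ξ)` is a polynomial homogeneous of degree `l` in `(τ,ξ) ∈ ℝ × ℝⁿ` whose
coefficients are real-analytic functions of `(t,x)` on `U`. -/
def HomogPoly {n : ℕ} (l : ℕ) (U : Set (ℝ × (Fin n → ℝ)))
    (g : ℝ → (Fin n → ℝ) → ℝ → (Fin n → ℝ) → ℝ) : Prop :=
  ∃ c : (Fin l → Fin (n + 1)) → ℝ → (Fin n → ℝ) → ℝ,
    (∀ μ, AnalyticOnNhd ℝ (fun p : ℝ × (Fin n → ℝ) => c μ p.1 p.2) U) ∧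
    ∀ t x τ ξ, g t x τ ξ =
      ∑ μ : Fin l → Fin (n + 1), c μ t x * ∏ k, (Fin.cons τ ξ : Fin (n + 1) → ℝ) (μ k)

/-- `u` solves the wave equation `u_tt - Δu = Σ_{l=0}^{m+1} f_l(t,x; ∂_t u, ∇u)`
at every point of `S`. -/
def SolvesWaveSum {n : ℕ} (m : ℕ) (F : ℕ → ℝ → (Fin n → ℝ) → ℝ → (Fin n → ℝ) → ℝ)
    (u : ℝ → (Fin n → ℝ) → ℝ) (S : Set (ℝ × (Fin n → ℝ))) : Prop :=
  ∀ t x, (t, x) ∈ S →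
    ptd (ptd u) t x - lapx u t x =
      ∑ l ∈ Finset.range (m + 2), F l t x (ptd u t x) (gradx u t x)

set_option linter.unusedSectionVars false
set_option linter.unusedSimpArgs false
set_option linter.unusedDecidableInType false

section RepTheory
open MvPowerSeries Topology

variable {ι : Type} [Fintype ι] [DecidableEq ι]

/-- monomial -/
noncomputable def mon (y : ι → ℝ) (β : ι →₀ ℕ) : ℝ := ∏ i, y i ^ β i

/-- the function `g` is represented near `b` by the absolutely convergent power series `f`. -/
def PSRep (b : ι → ℝ) (f : MvPowerSeries ι ℝ) (g : (ι → ℝ) → ℝ) : Prop :=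
  ∃ ρ : ℝ, 0 < ρ ∧ Summable (fun β : ι →₀ ℕ => |coeff β f| * ρ ^ β.degree) ∧
    ∀ y : ι → ℝ, ‖y‖ ≤ ρ → HasSum (fun β => coeff β f * mon y β) (g (b + y))

lemma mon_add (y : ι → ℝ) (β γ : ι →₀ ℕ) : mon y (β + γ) = mon y β * mon y γ := by
  simp [mon, pow_add, Finset.prod_mul_distrib]

lemma abs_mon_le {y : ι → ℝ} {ρ : ℝ} (hy : ‖y‖ ≤ ρ) (β : ι →₀ ℕ) :
    |mon y β| ≤ ρ ^ β.degree := by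
  rw [mon, Finset.abs_prod, Finsupp.degree_eq_sum, ← Finset.prod_pow_eq_pow_sum]
  apply Finset.prod_le_prod
  · intros; positivity
  · intro i _
    rw [abs_pow]
    exact pow_le_pow_left₀ (abs_nonneg _) ((norm_le_pi_norm y i).trans hy) _

lemma PSRep.ev {b : ι → ℝ} {f : MvPowerSeries ι ℝ} {g : (ι → ℝ) → ℝ} (h : PSRep b f g) :
    ∃ ρ₀ : ℝ, 0 < ρ₀ ∧ ∀ ρ, 0 < ρ → ρ ≤ ρ₀ →
      Summable (fun β : ι →₀ ℕ => |coeff β f| * ρ ^ β.degree) ∧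
      ∀ y : ι → ℝ, ‖y‖ ≤ ρ → HasSum (fun β => coeff β f * mon y β) (g (b + y)) := by
  obtain ⟨ρ₀, h0, hs, hh⟩ := h
  refine ⟨ρ₀, h0, fun ρ hp hle => ⟨?_, fun y hy => hh y (hy.trans hle)⟩⟩
  refine Summable.of_nonneg_of_le (fun β => by positivity) (fun β => ?_) hs
  gcongr

lemma PSRep.congr {b : ι → ℝ} {f : MvPowerSeries ι ℝ} {g g' : (ι → ℝ) → ℝ} (h : PSRep b f g)
    (hg : g =ᶠ[𝓝 b] g') : PSRep b f g' := by
  obtain ⟨ρ₀, h0, hh⟩ := h.ev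
  obtain ⟨ε, he, hb⟩ := Metric.eventually_nhds_iff_ball.1 hg
  refine ⟨min ρ₀ (ε / 2), by positivity, (hh _ (by positivity) (min_le_left _ _)).1, ?_⟩
  intro y hy
  rw [← hb (b + y) ?_]
  · exact (hh _ (by positivity) (min_le_left _ _)).2 y hy
  · rw [mem_ball_iff_norm, add_sub_cancel_left]
    have := hy.trans (min_le_right _ _)
    linarith

lemma PSRep.add {b : ι → ℝ} {f f' : MvPowerSeries ι ℝ} {g g' : (ι → ℝ) → ℝ} (h : PSRep b f g)
    (h' : PSRep b f' g') : PSRep b (f + f') (g + g') := by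
  obtain ⟨ρ₀, h0, hh⟩ := h.ev
  obtain ⟨ρ₁, h1, hh'⟩ := h'.ev
  have hp : 0 < min ρ₀ ρ₁ := by positivity
  obtain ⟨hs, ha⟩ := hh _ hp (min_le_left _ _)
  obtain ⟨hs', ha'⟩ := hh' _ hp (min_le_right _ _)
  refine ⟨min ρ₀ ρ₁, hp, ?_, ?_⟩
  · refine Summable.of_nonneg_of_le (fun β => by positivity) (fun β => ?_) (hs.add hs')
    rw [map_add, ← add_mul]
    gcongr
    exact abs_add_le _ _
  · intro y hy
    simpa [add_mul] using (ha y hy).add (ha' y hy)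

lemma PSRep.mul {b : ι → ℝ} {f f' : MvPowerSeries ι ℝ} {g g' : (ι → ℝ) → ℝ} (h : PSRep b f g)
    (h' : PSRep b f' g') : PSRep b (f * f') (g * g') := by
  obtain ⟨ρ₀, h0, hh⟩ := h.ev
  obtain ⟨ρ₁, h1, hh'⟩ := h'.ev
  have hp : 0 < min ρ₀ ρ₁ := by positivity
  set ρ := min ρ₀ ρ₁
  obtain ⟨hs, ha⟩ := hh ρ hp (min_le_left _ _)
  obtain ⟨hs', ha'⟩ := hh' ρ hp (min_le_right _ _)
  refine ⟨ρ, hp, ?_, ?_⟩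
  · have hn : ∀ (F : MvPowerSeries ι ℝ), (fun β : ι →₀ ℕ => ‖|coeff β F| * ρ ^ β.degree‖) =
        fun β : ι →₀ ℕ => |coeff β F| * ρ ^ β.degree := fun F => by
      funext β
      exact Real.norm_of_nonneg (mul_nonneg (abs_nonneg _) (pow_nonneg hp.le _))
    have h1 := summable_mul_of_summable_norm (f := fun β : ι →₀ ℕ => |coeff β f| * ρ ^ β.degree)
      (g := fun β : ι →₀ ℕ => |coeff β f'| * ρ ^ β.degree) (by rw [hn]; exact hs)
        (by rw [hn]; exact hs')
    have h2 := summable_sum_mul_antidiagonal_of_summable_mul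
      (f := fun β : ι →₀ ℕ => |coeff β f| * ρ ^ β.degree)
      (g := fun β : ι →₀ ℕ => |coeff β f'| * ρ ^ β.degree) h1
    refine Summable.of_nonneg_of_le (fun β => mul_nonneg (abs_nonneg _) (pow_nonneg hp.le _))
      (fun β => ?_) h2
    rw [coeff_mul]
    refine (mul_le_mul_of_nonneg_right (Finset.abs_sum_le_sum_abs _ _) (by positivity)).trans ?_
    rw [Finset.sum_mul]
    refine Finset.sum_le_sum fun p hp => le_of_eq ?_
    rw [← Finset.HasAntidiagonal.mem_antidiagonal.1 hp, abs_mul, map_add, pow_add]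
    ring
  · intro y hy
    have hbd : ∀ (F : MvPowerSeries ι ℝ), Summable (fun β : ι →₀ ℕ => |coeff β F| * ρ ^ β.degree) →
        Summable (fun β => ‖coeff β F * mon y β‖) := fun F hF => by
      refine Summable.of_nonneg_of_le (fun β => by positivity) (fun β => ?_) hF
      rw [norm_mul]
      gcongr
      · exact le_rfl
      · exact abs_mon_le hy β
    have hm := summable_mul_of_summable_norm (hbd f hs) (hbd f' hs')
    have h3 := (ha y hy).summable.tsum_mul_tsum_eq_tsum_sum_antidiagonal (ha' y hy).summable hm
    have h4 := (summable_sum_mul_antidiagonal_of_summable_mul (f := fun β => coeff β f * mon y β)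
      (g := fun β => coeff β f' * mon y β) hm).hasSum
    rw [← h3, (ha y hy).tsum_eq, (ha' y hy).tsum_eq] at h4
    have h5 : (fun β => coeff β (f * f') * mon y β) = fun n : ι →₀ ℕ =>
        ∑ kl ∈ Finset.HasAntidiagonal.antidiagonal n,
          coeff kl.1 f * mon y kl.1 * (coeff kl.2 f' * mon y kl.2) := ?_
    · rw [h5]; exact h4
    funext β
    rw [coeff_mul, Finset.sum_mul]
    refine Finset.sum_congr rfl fun p hp => ?_
    rw [← Finset.HasAntidiagonal.mem_antidiagonal.1 hp, mon_add]
    ring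

lemma exists_multilin (l : List ι) :
    ∃ M : ContinuousMultilinearMap ℝ (fun _ : Fin l.length => ι → ℝ) ℝ, ‖M‖ ≤ 1 ∧
      ∀ y, M (fun _ => y) = (l.map y).prod := by
  refine ⟨(ContinuousMultilinearMap.mkPiAlgebra ℝ (Fin l.length) ℝ).compContinuousLinearMap
    (fun j => ContinuousLinearMap.proj (l.get j)), ?_, ?_⟩
  · refine ContinuousMultilinearMap.opNorm_le_bound zero_le_one fun v => ?_
    simp only [ContinuousMultilinearMap.compContinuousLinearMap_apply,
      ContinuousMultilinearMap.mkPiAlgebra_apply, norm_prod, one_mul]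
    exact Finset.prod_le_prod (fun _ _ => norm_nonneg _) fun j _ => norm_le_pi_norm (v j) _
  · intro y
    simp only [ContinuousMultilinearMap.compContinuousLinearMap_apply,
      ContinuousMultilinearMap.mkPiAlgebra_apply]
    simp [← List.prod_ofFn]

lemma exists_multilin' (β : ι →₀ ℕ) (k : ℕ) :
    ∃ M : ContinuousMultilinearMap ℝ (fun _ : Fin k => ι → ℝ) ℝ, ‖M‖ ≤ 1 ∧
      (β.degree = k → ∀ y, M (fun _ => y) = mon y β) := by
  by_cases h : β.degree = k
  · have hl : (Finsupp.toMultiset β).toList.length = k := by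
      rw [Multiset.length_toList, Finsupp.card_toMultiset, ← h, Finsupp.degree_apply]
      rfl
    subst hl
    obtain ⟨M, h1, h2⟩ := exists_multilin (Finsupp.toMultiset β).toList
    refine ⟨M, h1, fun _ y => ?_⟩
    rw [h2, ← Multiset.prod_coe, ← Multiset.map_coe, Multiset.coe_toList, Finsupp.toMultiset_apply,
      Finsupp.sum, ← Multiset.coe_mapAddMonoidHom, map_sum, Multiset.prod_sum, mon]
    simp only [map_nsmul, Multiset.coe_mapAddMonoidHom, Multiset.map_singleton,
      Multiset.prod_nsmul, Multiset.prod_singleton]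
    apply Finset.prod_subset (Finset.subset_univ _)
    intro i _ hi
    simp [Finsupp.notMem_support_iff.1 hi]
  · exact ⟨0, by simp, fun h' => absurd h' h⟩

lemma PSRep.analyticAt {b : ι → ℝ} {f : MvPowerSeries ι ℝ} {g : (ι → ℝ) → ℝ} (h : PSRep b f g) :
    AnalyticAt ℝ g b := by
  classical
  obtain ⟨ρ, h0, hs, hh⟩ := h
  choose M hM1 hM2 using exists_multilin' (ι := ι)
  have : ∀ k, Fintype {β : ι →₀ ℕ // β.degree = k} := fun k =>
    (Finsupp.finite_of_degree_eq k).fintype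
  let p : FormalMultilinearSeries ℝ (ι → ℝ) ℝ := fun k =>
    ∑ β : {β : ι →₀ ℕ // β.degree = k}, coeff β.1 f • M β.1 k
  refine ⟨p, ENNReal.ofReal ρ, ?_, by simpa using h0, ?_⟩
  · refine p.le_radius_of_bound (r := ρ.toNNReal)
      (∑' β : ι →₀ ℕ, |coeff β f| * ρ ^ β.degree) fun k => ?_
    rw [Real.coe_toNNReal _ h0.le]
    calc ‖p k‖ * ρ ^ k ≤ (∑ β : {β : ι →₀ ℕ // β.degree = k}, |coeff β.1 f|) * ρ ^ k := by
          gcongr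
          refine norm_sum_le_of_le _ fun β _ => ?_
          rw [norm_smul]
          exact mul_le_of_le_one_right (norm_nonneg _) (hM1 _ _)
      _ = ∑ β : {β : ι →₀ ℕ // β.degree = k}, |coeff β.1 f| * ρ ^ (β.1.degree) := by
          rw [Finset.sum_mul]
          exact Finset.sum_congr rfl fun β _ => by rw [β.2]
      _ = ∑ β ∈ Finset.univ.map (Function.Embedding.subtype fun β : ι →₀ ℕ => β.degree = k),
            |coeff β f| * ρ ^ (β.degree) := by
          rw [Finset.sum_map]; rfl
      _ ≤ _ := hs.sum_le_tsum _ fun β _ => by positivity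
  · intro y hy
    have hy' : ‖y‖ ≤ ρ := by
      rw [mem_eball_zero_iff, ← ofReal_norm, ENNReal.ofReal_lt_ofReal_iff h0] at hy
      exact hy.le
    have h1 := hh y hy'
    rw [← (Equiv.sigmaFiberEquiv (fun β : ι →₀ ℕ => β.degree)).hasSum_iff] at h1
    refine h1.sigma fun k => ?_
    convert! hasSum_fintype _ using 1
    simp only [p, sum_apply, smul_apply]
    refine Finset.sum_congr rfl fun β _ => ?_
    rw [hM2 _ _ β.2]
    rfl

end RepTheory

section RepTheory2
open MvPowerSeries Topology

variable {ι : Type} [Fintype ι] [DecidableEq ι]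

/-- partial derivative -/
noncomputable def pdv (μ : ι) (g : (ι → ℝ) → ℝ) (y : ι → ℝ) : ℝ := fderiv ℝ g y (Pi.single μ 1)

lemma mon_update (y : ι → ℝ) (μ : ι) (t : ℝ) (β : ι →₀ ℕ) :
    mon (Function.update y μ t) β = t ^ β μ * ∏ i ∈ Finset.univ.erase μ, y i ^ β i := by
  rw [mon, ← Finset.mul_prod_erase _ _ (Finset.mem_univ μ)]
  congr 1
  · simp
  · refine Finset.prod_congr rfl fun i hi => ?_
    rw [Function.update_of_ne (Finset.ne_of_mem_erase hi)]

lemma hasDerivAt_mon (y : ι → ℝ) (μ : ι) (t : ℝ) (β : ι →₀ ℕ) :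
    HasDerivAt (fun s => mon (Function.update y μ s) β)
      (β μ * mon (Function.update y μ t) (β - Finsupp.single μ 1)) t := by
  simp only [mon_update]
  have h := (hasDerivAt_pow (β μ) t).mul_const (∏ i ∈ Finset.univ.erase μ, y i ^ β i)
  have h2 : (β μ : ℝ) * (t ^ (β - Finsupp.single μ 1 : ι →₀ ℕ) μ *
      ∏ i ∈ Finset.univ.erase μ, y i ^ (β - Finsupp.single μ 1 : ι →₀ ℕ) i) =
      β μ * t ^ (β μ - 1) * ∏ i ∈ Finset.univ.erase μ, y i ^ β i := by
    rw [mul_assoc]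
    congr 2
    · simp
    · refine Finset.prod_congr rfl fun i hi => ?_
      simp [Finsupp.single_apply, (Finset.ne_of_mem_erase hi).symm]
  rw [h2]
  exact h

lemma PSRep.pd {b : ι → ℝ} {f : MvPowerSeries ι ℝ} {g : (ι → ℝ) → ℝ} (μ : ι) (h : PSRep b f g) :
    PSRep b (pderivFun μ f) (pdv μ g) := by
  have han := h.analyticAt.eventually_analyticAt
  obtain ⟨ε, he, hb⟩ := Metric.eventually_nhds_iff_ball.1 han
  obtain ⟨ρ₀, h0, hh⟩ := h.ev
  have hp : 0 < min ρ₀ ε := by positivity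
  obtain ⟨hs, ha⟩ := hh _ hp (min_le_left _ _)
  have hle : min ρ₀ ε ≤ ε := min_le_right _ _
  set ρ := min ρ₀ ε
  have hinj : Function.Injective (fun γ : ι →₀ ℕ => γ + Finsupp.single μ 1) :=
    add_left_injective _
  have hzero : ∀ x : ι →₀ ℕ, x ∉ Set.range (fun γ : ι →₀ ℕ => γ + Finsupp.single μ 1) →
      x μ = 0 := by
    intro x hx
    by_contra hne
    refine hx ⟨x - Finsupp.single μ 1, ?_⟩
    ext i
    by_cases hi : μ = i
    · subst hi; simp; omega
    · simp [Finsupp.single_apply, hi]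
  -- the key bound
  have hbound : ∀ β : ι →₀ ℕ, |coeff β f| * (β μ * (ρ / 2) ^ (β.degree - 1)) ≤
      (2 / ρ) * (|coeff β f| * ρ ^ β.degree) := by
    intro β
    rcases Nat.eq_zero_or_pos β.degree with hd | hd
    · have : β μ = 0 := Nat.eq_zero_of_le_zero (hd ▸ Finsupp.le_degree μ β)
      rw [this]; simp only [Nat.cast_zero, zero_mul, mul_zero]; positivity
    · obtain ⟨d, hd'⟩ : ∃ d, β.degree = d + 1 := ⟨β.degree - 1, by omega⟩
      have h1 : (β μ : ℝ) ≤ 2 * 2 ^ d := by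
        have h2 : β μ ≤ d + 1 := hd' ▸ Finsupp.le_degree μ β
        have h3 : d + 1 < 2 ^ (d + 1) := Nat.lt_two_pow_self
        have h4 : β μ ≤ 2 ^ (d + 1) := by omega
        have h5 : (β μ : ℝ) ≤ 2 ^ (d + 1) := by exact_mod_cast h4
        rwa [pow_succ, mul_comm] at h5
      rw [hd', Nat.add_sub_cancel, div_pow]
      have : (2 / ρ) * (|coeff β f| * ρ ^ (d + 1)) = |coeff β f| * (2 * 2 ^ d * (ρ ^ d / 2 ^ d)) := by
        field_simp
        ring
      rw [this]
      gcongr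
  have hsum2 : Summable fun β : ι →₀ ℕ => |coeff β f| * (β μ * (ρ / 2) ^ (β.degree - 1)) :=
    Summable.of_nonneg_of_le (fun β => by positivity) hbound (hs.mul_left _)
  have hdeg : ∀ γ : ι →₀ ℕ, (γ + Finsupp.single μ 1).degree - 1 = γ.degree := fun γ => by
    rw [map_add, Finsupp.degree_single, Nat.add_sub_cancel]
  refine ⟨ρ / 4, by positivity, ?_, ?_⟩
  · have := hsum2.comp_injective hinj
    refine Summable.of_nonneg_of_le (fun β => by positivity) (fun γ => ?_) this
    simp only [Function.comp_apply, hdeg, coeff_pderivFun, abs_mul]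
    rw [mul_assoc]
    have h1 : |(γ μ : ℝ) + 1| = ((γ + Finsupp.single μ 1 : ι →₀ ℕ) μ : ℝ) := by
      rw [abs_of_nonneg (by positivity)]; simp
    rw [h1]
    gcongr
    linarith
  · intro y hy
    have hy2 : ∀ t ∈ Set.Ioo (-(ρ / 2)) (ρ / 2), ‖Function.update y μ t‖ ≤ ρ / 2 := by
      intro t ht
      refine (pi_norm_le_iff_of_nonneg (by positivity)).2 fun i => ?_
      by_cases hi : i = μ
      · subst hi
        rw [Function.update_self, Real.norm_eq_abs, abs_le]
        exact ⟨ht.1.le, ht.2.le⟩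
      · rw [Function.update_of_ne hi]
        refine (norm_le_pi_norm y i).trans (hy.trans (by linarith))
    have hyt : y μ ∈ Set.Ioo (-(ρ / 2)) (ρ / 2) := by
      have := (norm_le_pi_norm y μ).trans hy
      rw [Real.norm_eq_abs, abs_le] at this
      constructor <;> linarith
    have hder := hasDerivAt_tsum_of_isPreconnected
      (g := fun β s => coeff β f * mon (Function.update y μ s) β)
      (g' := fun β s => coeff β f * (β μ * mon (Function.update y μ s) (β - Finsupp.single μ 1)))
      hsum2 isOpen_Ioo isPreconnected_Ioo
      (fun β t _ => (hasDerivAt_mon y μ t β).const_mul _)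
      (fun β t ht => by
        rw [norm_mul, norm_mul, Real.norm_eq_abs, Real.norm_natCast]
        by_cases hβ : β μ = 0
        · simp [hβ]
        gcongr
        refine (abs_mon_le (hy2 t ht) _).trans (le_of_eq ?_)
        congr 1
        have h1 : β - Finsupp.single μ 1 + Finsupp.single μ 1 = β := by
          apply tsub_add_cancel_of_le
          rw [Finsupp.single_le_iff]; omega
        rw [← hdeg, h1])
      hyt (by
        have := (ha (Function.update y μ (y μ)) ((hy2 _ hyt).trans (by linarith))).summable
        exact this) hyt
    have hg1 : HasDerivAt (fun s => g (b + Function.update y μ s)) (pdv μ g (b + y)) (y μ) := by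
      have hga : AnalyticAt ℝ g (b + y) := by
        refine hb _ ?_
        rw [mem_ball_iff_norm, add_sub_cancel_left]
        linarith
      have h1 : HasFDerivAt g (fderiv ℝ g (b + y)) (b + Function.update y μ (y μ)) := by
        rw [Function.update_eq_self]
        exact hga.differentiableAt.hasFDerivAt
      have h2 := h1.comp_hasDerivAt (y μ) ((hasDerivAt_update y μ (y μ)).const_add b)
      exact h2
    have heq : (fun s => g (b + Function.update y μ s)) =ᶠ[𝓝 (y μ)]
        (fun s => ∑' β, coeff β f * mon (Function.update y μ s) β) := by
      filter_upwards [isOpen_Ioo.mem_nhds hyt] with t ht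
      exact ((ha _ ((hy2 t ht).trans (by linarith))).tsum_eq).symm
    have hval := hg1.unique (hder.congr_of_eventuallyEq heq)
    rw [Function.update_eq_self] at hval
    have hsm : Summable fun β : ι →₀ ℕ =>
        coeff β f * (β μ * mon y (β - Finsupp.single μ 1)) := by
      refine Summable.of_norm_bounded hsum2 fun β => ?_
      rw [norm_mul, norm_mul, Real.norm_eq_abs, Real.norm_natCast]
      by_cases hβ : β μ = 0
      · simp [hβ]
      gcongr
      refine (abs_mon_le (hy.trans (by linarith : ρ / 4 ≤ ρ / 2)) _).trans (le_of_eq ?_)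
      congr 1
      have h1 : β - Finsupp.single μ 1 + Finsupp.single μ 1 = β := by
        apply tsub_add_cancel_of_le
        rw [Finsupp.single_le_iff]; omega
      rw [← hdeg, h1]
    have hfin := hsm.hasSum
    rw [← hval, ← hinj.hasSum_iff (fun x hx => by simp [hzero x hx])] at hfin
    have hc : (fun γ : ι →₀ ℕ => coeff γ (pderivFun μ f) * mon y γ) =
        (fun β : ι →₀ ℕ => coeff β f * (β μ * mon y (β - Finsupp.single μ 1))) ∘
          (fun γ : ι →₀ ℕ => γ + Finsupp.single μ 1) := by
      funext γ
      simp only [Function.comp_apply, coeff_pderivFun, add_tsub_cancel_right]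
      simp [mul_assoc]
    rw [hc]
    exact hfin

lemma PSRep.coeff_zero {b : ι → ℝ} {f : MvPowerSeries ι ℝ} {g : (ι → ℝ) → ℝ} (h : PSRep b f g) :
    coeff 0 f = g b := by
  obtain ⟨ρ, h0, hs, hh⟩ := h
  have h1 := hh 0 (by simpa using h0.le)
  rw [add_zero] at h1
  have h2 : HasSum (fun β : ι →₀ ℕ => coeff β f * mon 0 β) (coeff 0 f * mon 0 (0 : ι →₀ ℕ)) := by
    refine hasSum_single 0 fun β hβ => ?_
    obtain ⟨μ, hμ⟩ : ∃ μ, β μ ≠ 0 := by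
      by_contra hcon
      push Not at hcon
      exact hβ (Finsupp.ext hcon)
    rw [mon, Finset.prod_eq_zero (Finset.mem_univ μ) (by simp [hμ]), mul_zero]
  rw [h1.unique h2]
  simp [mon]

lemma PSRep.eq_zero {b : ι → ℝ} : ∀ (d : ℕ) (f : MvPowerSeries ι ℝ), PSRep b f 0 →
    ∀ β : ι →₀ ℕ, β.degree = d → coeff β f = 0 := by
  intro d
  induction d with
  | zero =>
    intro f hf β hβ
    rw [(Finsupp.degree_eq_zero_iff β).1 hβ, hf.coeff_zero]; rfl
  | succ d ih =>
    intro f hf β hβ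
    obtain ⟨μ, hμ⟩ : ∃ μ, β μ ≠ 0 := by
      by_contra hcon
      push Not at hcon
      have : β = 0 := Finsupp.ext hcon
      rw [this] at hβ; simp at hβ
    have h1 : β - Finsupp.single μ 1 + Finsupp.single μ 1 = β := by
      apply tsub_add_cancel_of_le
      rw [Finsupp.single_le_iff]; omega
    have h2 : PSRep b (pderivFun μ f) 0 := by
      have := hf.pd μ
      refine this.congr (Eventually.of_forall fun y => ?_)
      simp [pdv]
    have h3 := ih _ h2 (β - Finsupp.single μ 1) (by
      have := congrArg Finsupp.degree h1
      rw [map_add, Finsupp.degree_single] at this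
      omega)
    rw [coeff_pderivFun, h1] at h3
    rcases mul_eq_zero.1 h3 with h4 | h4
    · exact h4
    · exfalso
      have : (0 : ℝ) ≤ ((β - Finsupp.single μ 1 : ι →₀ ℕ) μ : ℝ) := Nat.cast_nonneg _
      linarith

lemma PSRep.neg {b : ι → ℝ} {f : MvPowerSeries ι ℝ} {g : (ι → ℝ) → ℝ} (h : PSRep b f g) :
    PSRep b (-f) (-g) := by
  obtain ⟨ρ, h0, hs, hh⟩ := h
  refine ⟨ρ, h0, by simpa using hs, fun y hy => ?_⟩
  simpa using (hh y hy).neg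

lemma PSRep.unique {b : ι → ℝ} {f f' : MvPowerSeries ι ℝ} {g g' : (ι → ℝ) → ℝ}
    (h : PSRep b f g) (h' : PSRep b f' g') (hg : g =ᶠ[𝓝 b] g') : f = f' := by
  have h1 : PSRep b (f + -f') 0 := (h.add h'.neg).congr (by
    filter_upwards [hg] with y hy
    simp [hy])
  ext β
  have h2 := PSRep.eq_zero _ _ h1 β rfl
  rw [map_add, map_neg] at h2
  linarith

lemma PSRep.eventuallyEq {b : ι → ℝ} {f : MvPowerSeries ι ℝ} {g g' : (ι → ℝ) → ℝ}
    (h : PSRep b f g) (h' : PSRep b f g') : g =ᶠ[𝓝 b] g' := by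
  obtain ⟨ρ₀, h0, hs, ha⟩ := h
  obtain ⟨ρ₁, h1, hs', ha'⟩ := h'
  have hp : 0 < min ρ₀ ρ₁ := by positivity
  filter_upwards [Metric.ball_mem_nhds b hp] with y hy
  rw [mem_ball_iff_norm] at hy
  have e : y = b + (y - b) := by simp
  rw [e]
  exact (ha _ (hy.le.trans (min_le_left _ _))).unique (ha' _ (hy.le.trans (min_le_right _ _)))

lemma PSRep.X {b : ι → ℝ} (μ : ι) : PSRep b (MvPowerSeries.X μ) (fun y => y μ - b μ) := by
  have hne : ∀ β : ι →₀ ℕ, β ≠ Finsupp.single μ 1 →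
      coeff β (MvPowerSeries.X μ : MvPowerSeries ι ℝ) = 0 := fun β hβ => by
    rw [coeff_X, if_neg hβ]
  refine ⟨1, one_pos, ?_, fun y hy => ?_⟩
  · exact (hasSum_single (Finsupp.single μ 1) fun β hβ => by simp [hne β hβ]).summable
  · have h2 := hasSum_single (f := fun β => coeff β (MvPowerSeries.X μ : MvPowerSeries ι ℝ) * mon y β)
      (Finsupp.single μ 1) fun β hβ => by simp [hne β hβ]
    have h3 : coeff (Finsupp.single μ 1) (MvPowerSeries.X μ : MvPowerSeries ι ℝ) *
      mon y (Finsupp.single μ 1) = (fun y : ι → ℝ => y μ - b μ) (b + y) := by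
      rw [coeff_X, if_pos rfl, mon, Finset.prod_eq_single μ]
      · simp
      · intro i _ hi
        simp [Finsupp.single_apply, hi.symm]
      · simp
    rw [h3] at h2
    exact h2

lemma exists_PSRep {b : ι → ℝ} {g : (ι → ℝ) → ℝ} (hg : AnalyticAt ℝ g b) :
    ∃ f, PSRep b f g := by
  obtain ⟨p, r, hp⟩ := hg
  -- choose a radius
  obtain ⟨r', hr'0, hr'⟩ := ENNReal.lt_iff_exists_nnreal_btwn.1 hp.r_pos
  have hr'p : (0 : ℝ) < r' := by exact_mod_cast hr'0
  obtain ⟨q, hq, C, hC, hbd⟩ := p.norm_mul_pow_le_mul_pow_of_lt_radius (hr'.trans_le hp.r_le)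
  set N : ℝ := Fintype.card ι + 1 with hN
  have hN1 : 1 ≤ N := by simp [hN]
  set ρ : ℝ := r' / N with hρ
  have hρ0 : 0 < ρ := by positivity
  have hρr : ρ ≤ r' := div_le_self hr'p.le hN1
  let a : (Σ k : ℕ, Fin k → ι) → ℝ := fun i => p i.1 (fun j => Pi.single (i.2 j) 1)
  let φ : (Σ k : ℕ, Fin k → ι) → (ι →₀ ℕ) := fun i => ∑ j, Finsupp.single (i.2 j) 1
  have hφd : ∀ i, (φ i).degree = i.1 := fun i => by simp [φ]
  have hmon1 : ∀ (y : ι → ℝ) (μ : ι), mon y (Finsupp.single μ 1) = y μ := fun y μ => by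
    rw [mon, Finset.prod_eq_single μ]
    · simp
    · intro i _ hi
      simp [Finsupp.single_apply, hi.symm]
    · simp
  have hmons : ∀ (y : ι → ℝ) (k : ℕ) (v : Fin k → ι),
      mon y (∑ j, Finsupp.single (v j) 1) = ∏ j, y (v j) := fun y k v => by
    have : ∀ s : Finset (Fin k), mon y (∑ j ∈ s, Finsupp.single (v j) 1) = ∏ j ∈ s, y (v j) := by
      intro s
      induction s using Finset.induction_on with
      | empty => simp [mon]
      | insert j s hj ih => rw [Finset.sum_insert hj, Finset.prod_insert hj, mon_add, ih, hmon1]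
    exact this _
  have hale : ∀ i, |a i| ≤ ‖p i.1‖ := fun i => by
    have h1 := (p i.1).le_opNorm (fun j => Pi.single (i.2 j) 1)
    refine h1.trans ?_
    refine mul_le_of_le_one_right (norm_nonneg _) ?_
    refine Finset.prod_le_one (fun _ _ => norm_nonneg _) fun j _ => ?_
    rw [Pi.norm_single]; simp
  have hsumI : Summable fun i => |a i| * ρ ^ (φ i).degree := by
    rw [summable_sigma_of_nonneg (fun i => by positivity)]
    refine ⟨fun k => Summable.of_finite, ?_⟩
    refine Summable.of_nonneg_of_le (fun k => tsum_nonneg fun _ => by positivity) (fun k => ?_)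
      ((summable_geometric_of_lt_one hq.1.le hq.2).mul_left C)
    rw [tsum_fintype]
    calc ∑ v : Fin k → ι, |a ⟨k, v⟩| * ρ ^ (φ ⟨k, v⟩).degree
        ≤ ∑ v : Fin k → ι, ‖p k‖ * ρ ^ k := by
          refine Finset.sum_le_sum fun v _ => ?_
          rw [hφd]
          gcongr
          exact hale ⟨k, v⟩
      _ = ‖p k‖ * ((Fintype.card ι : ℝ) ^ k * ρ ^ k) := by
          rw [Finset.sum_const, Finset.card_univ, Fintype.card_fun, Fintype.card_fin, nsmul_eq_mul]
          push_cast
          ring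
      _ ≤ ‖p k‖ * (r' : ℝ) ^ k := by
          rw [← mul_pow]
          gcongr
          rw [hρ, mul_div_assoc', div_le_iff₀ (by positivity), mul_comm]
          gcongr
          simp [hN]
      _ ≤ C * q ^ k := hbd k
  let f : MvPowerSeries ι ℝ := fun β => ∑' i : {i // φ i = β}, a i.1
  have hf : ∀ β, coeff β f = ∑' i : {i // φ i = β}, a i.1 := fun β => rfl
  have hsumE : Summable ((fun i => |a i| * ρ ^ (φ i).degree) ∘ Equiv.sigmaFiberEquiv φ) :=
    (Equiv.sigmaFiberEquiv φ).summable_iff.2 hsumI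
  have hE2 := (summable_sigma_of_nonneg (fun i => by
    simp only [Function.comp_apply]; positivity)).1 hsumE
  have hfib : ∀ β, Summable fun i : {i // φ i = β} => |a i.1| := fun β => by
    have h1 := hE2.1 β
    have h2 := h1.mul_right (ρ ^ β.degree)⁻¹
    refine h2.congr fun i => ?_
    simp only [Function.comp_apply, Equiv.sigmaFiberEquiv_apply]
    rw [i.2, mul_assoc, mul_inv_cancel₀ (by positivity), mul_one]
  refine ⟨f, ρ / 2, by positivity, ?_, fun y hy => ?_⟩
  · refine Summable.of_nonneg_of_le (fun β => by positivity) (fun β => ?_) hE2.2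
    rw [hf]
    have h1 : |∑' i : {i // φ i = β}, a i.1| ≤ ∑' i : {i // φ i = β}, |a i.1| :=
      norm_tsum_le_tsum_norm (f := fun i : {i // φ i = β} => a i.1) (hfib β)
    calc _ ≤ (∑' i : {i // φ i = β}, |a i.1|) * ρ ^ β.degree := by
          gcongr
          linarith
      _ = _ := by
          rw [← tsum_mul_right]
          refine tsum_congr fun i => ?_
          simp only [Function.comp_apply, Equiv.sigmaFiberEquiv_apply]
          rw [i.2]
  · have hy1 : ‖y‖ ≤ ρ := hy.trans (by linarith)
    have hyb : y ∈ Metric.eball (0 : ι → ℝ) r := by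
      rw [mem_eball_zero_iff]
      refine lt_of_le_of_lt ?_ hr'
      rw [← ofReal_norm]
      refine ENNReal.ofReal_le_of_le_toReal ?_
      simpa using hy1.trans hρr
    have hs1 := hp.hasSum hyb
    have hsumY : Summable fun i => a i * mon y (φ i) := by
      refine Summable.of_norm_bounded hsumI fun i => ?_
      rw [norm_mul]
      gcongr
      · exact le_rfl
      · exact abs_mon_le hy1 _
    have hs2 : HasSum (fun i => a i * mon y (φ i)) (g (b + y)) := by
      refine hs1.sigma_of_hasSum (fun k => ?_) hsumY
      convert! hasSum_fintype _ using 1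
      have hy' : y = ∑ μ, y μ • (Pi.single μ (1 : ℝ) : ι → ℝ) := by
        ext i
        simp [Finset.sum_apply, Pi.single_apply]
      conv_lhs => rw [hy']
      rw [ContinuousMultilinearMap.map_sum]
      refine Finset.sum_congr rfl fun v _ => ?_
      rw [ContinuousMultilinearMap.map_smul_univ, hmons, smul_eq_mul, mul_comm]
    rw [← (Equiv.sigmaFiberEquiv φ).hasSum_iff] at hs2
    refine hs2.sigma fun β => ?_
    have h3 := ((hfib β).of_norm (f := fun i : {i // φ i = β} => a i.1)).hasSum.mul_right (mon y β)
    rw [← hf] at h3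
    have h4 : (fun i : {i // φ i = β} => ((fun i => a i * mon y (φ i)) ∘ Equiv.sigmaFiberEquiv φ) ⟨β, i⟩)
        = fun i : {i // φ i = β} => a i.1 * mon y β := by
      funext i
      simp only [Function.comp_apply, Equiv.sigmaFiberEquiv_apply]
      rw [i.2]
    rw [h4]
    exact h3

end RepTheory2

section Formal
open MvPowerSeries Topology ENNReal

variable {n : ℕ}

/-- the weights -/
noncomputable def wt (r R : ℝ) (β : Fin (n + 1) →₀ ℕ) : ℝ≥0∞ :=
  ENNReal.ofReal (R ^ (β 0) * r ^ (β.degree - β 0) / (β.degree.choose (β 0)))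

/-- the weighted norms -/
noncomputable def nrm (r R : ℝ) (j : ℕ) (f : MvPowerSeries (Fin (n + 1)) ℝ) : ℝ≥0∞ :=
  ∑' β, ‖coeff β f‖ₑ * (((β 0 : ℕ) : ℝ≥0∞) + 1) ^ j * wt r R β

/-- shorthand for the unit multi-index -/
noncomputable abbrev ee (μ : Fin (n + 1)) : Fin (n + 1) →₀ ℕ := Finsupp.single μ 1

/-- formal version of `y₀ ∂_μ` -/
noncomputable def fD (μ : Fin (n + 1)) (f : MvPowerSeries (Fin (n + 1)) ℝ) :
    MvPowerSeries (Fin (n + 1)) ℝ := MvPowerSeries.X 0 * pderivFun μ f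

lemma choose_pos' (β : Fin (n + 1) →₀ ℕ) : 0 < β.degree.choose (β 0) :=
  Nat.choose_pos (Finsupp.le_degree 0 β)

lemma wt_add {r R : ℝ} (hr : 0 < r) (hR : 0 < R) (β γ : Fin (n + 1) →₀ ℕ) :
    wt r R (β + γ) ≤ wt r R β * wt r R γ := by
  unfold wt
  rw [← ENNReal.ofReal_mul (by positivity)]
  refine ENNReal.ofReal_le_ofReal ?_
  have h1 := Finsupp.le_degree 0 β
  have h2 := Finsupp.le_degree 0 γ
  have e : (β + γ).degree - (β + γ) 0 = (β.degree - β 0) + (γ.degree - γ 0) := by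
    rw [map_add, Finsupp.add_apply]; omega
  have hc : (β.degree.choose (β 0)) * (γ.degree.choose (γ 0)) ≤
      (β + γ).degree.choose ((β + γ) 0) := by
    rw [map_add, Finsupp.add_apply, Nat.add_choose_eq]
    exact Finset.single_le_sum (f := fun ij : ℕ × ℕ => β.degree.choose ij.1 * γ.degree.choose ij.2)
      (fun _ _ => Nat.zero_le _) (a := (β 0, γ 0)) (by simp)
  have hc' : ((β.degree.choose (β 0) : ℝ)) * (γ.degree.choose (γ 0)) ≤
      ((β + γ).degree.choose ((β + γ) 0)) := by exact_mod_cast hc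
  have p1 : (0 : ℝ) < (β.degree.choose (β 0)) := by exact_mod_cast choose_pos' β
  have p2 : (0 : ℝ) < (γ.degree.choose (γ 0)) := by exact_mod_cast choose_pos' γ
  rw [div_mul_div_comm, e, Finsupp.add_apply, pow_add, pow_add]
  have e2 : R ^ β 0 * R ^ γ 0 * (r ^ (β.degree - β 0) * r ^ (γ.degree - γ 0)) =
    R ^ β 0 * r ^ (β.degree - β 0) * (R ^ γ 0 * r ^ (γ.degree - γ 0)) := by ring
  rw [e2]
  rw [Finsupp.add_apply] at hc'
  gcongr

lemma wt_le {r R : ℝ} (hR : 0 < R) (hRr : R ≤ r) (β : Fin (n + 1) →₀ ℕ) :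
    wt r R β ≤ ENNReal.ofReal (r ^ β.degree) := by
  unfold wt
  refine ENNReal.ofReal_le_ofReal ?_
  have hr : 0 < r := hR.trans_le hRr
  have h1 := Finsupp.le_degree 0 β
  have p1 : (1 : ℝ) ≤ (β.degree.choose (β 0)) := by exact_mod_cast choose_pos' β
  calc _ ≤ R ^ (β 0) * r ^ (β.degree - β 0) := div_le_self (by positivity) p1
    _ ≤ r ^ (β 0) * r ^ (β.degree - β 0) := by gcongr
    _ = r ^ β.degree := by rw [← pow_add]; congr 1; omega

lemma le_wt {r R : ℝ} (hR : 0 < R) (hRr : R ≤ r) (β : Fin (n + 1) →₀ ℕ) :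
    ENNReal.ofReal ((R / 2) ^ β.degree) ≤ wt r R β := by
  unfold wt
  refine ENNReal.ofReal_le_ofReal ?_
  have hr : 0 < r := hR.trans_le hRr
  have h1 := Finsupp.le_degree 0 β
  have p0 : (0 : ℝ) < (β.degree.choose (β 0)) := by exact_mod_cast choose_pos' β
  have p1 : ((β.degree.choose (β 0)) : ℝ) ≤ 2 ^ β.degree := by
    exact_mod_cast Nat.choose_le_two_pow _ _
  rw [div_pow]
  have : R ^ β.degree = R ^ (β 0) * R ^ (β.degree - β 0) := by
    rw [← pow_add]; congr 1; omega
  rw [this]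
  gcongr

lemma wt_add_e0 {r R : ℝ} (hr : 0 < r) (hR : 0 < R) (β : Fin (n + 1) →₀ ℕ) :
    wt r R (β + ee 0) ≤ ENNReal.ofReal R * wt r R β := by
  rw [mul_comm]
  refine (wt_add hr hR _ _).trans (le_of_eq ?_)
  congr 1
  simp [wt, ee]

lemma wt_shift {r R : ℝ} (hR : 0 < R) (hRr : R ≤ r) (μ : Fin (n + 1)) (γ : Fin (n + 1) →₀ ℕ) :
    ((γ μ : ℝ≥0∞) + 1) * wt r R (γ + ee 0) ≤
      (((γ + ee μ) 0 : ℕ) + 1 : ℝ≥0∞) * wt r R (γ + ee μ) := by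
  have hr : 0 < r := hR.trans_le hRr
  by_cases hμ : μ = 0
  · subst hμ
    gcongr
    simp
  have e0 : (γ + ee μ) 0 = γ 0 := by simp [ee, Finsupp.single_apply, hμ]
  have e1 : (γ + ee (0 : Fin (n + 1)) : Fin (n + 1) →₀ ℕ) 0 = γ 0 + 1 := by simp [ee]
  have d0 : (γ + ee μ).degree = γ.degree + 1 := by simp [ee]
  have d1 : (γ + ee 0).degree = γ.degree + 1 := by simp [ee]
  have hle : γ 0 + γ μ ≤ γ.degree := by
    rw [Finsupp.degree_eq_sum, ← Finset.sum_pair (Ne.symm hμ)]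
    exact Finset.sum_le_sum_of_subset (Finset.subset_univ _)
  unfold wt
  rw [e0, e1, d0, d1]
  have c1 : ((γ μ : ℝ≥0∞) + 1) = ENNReal.ofReal ((γ μ : ℝ) + 1) := by
    rw [ENNReal.ofReal_add (by positivity) (by positivity)]; simp
  have c2 : ((γ 0 : ℝ≥0∞) + 1) = ENNReal.ofReal ((γ 0 : ℝ) + 1) := by
    rw [ENNReal.ofReal_add (by positivity) (by positivity)]; simp
  rw [c1, c2, ← ENNReal.ofReal_mul (by positivity), ← ENNReal.ofReal_mul (by positivity)]
  refine ENNReal.ofReal_le_ofReal ?_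
  obtain ⟨q, hq⟩ : ∃ q, γ.degree = γ 0 + q := ⟨γ.degree - γ 0, by omega⟩
  rw [hq] at hle ⊢
  generalize γ 0 = k at *
  generalize γ μ = l at *
  have hl : (l : ℝ) ≤ q := by exact_mod_cast (by omega : l ≤ q)
  have hch := Nat.choose_succ_right_eq (k + q + 1) k
  have hch' : ((k + q + 1).choose (k + 1) : ℝ) * (k + 1) = (k + q + 1).choose k * (q + 1) := by
    have : k + q + 1 - k = q + 1 := by omega
    rw [this] at hch
    exact_mod_cast hch
  have p1 : (0 : ℝ) < (k + q + 1).choose (k + 1) := by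
    exact_mod_cast Nat.choose_pos (by omega)
  have p2 : (0 : ℝ) < (k + q + 1).choose k := by
    exact_mod_cast Nat.choose_pos (by omega)
  have s1 : k + q + 1 - (k + 1) = q := by omega
  have s2 : k + q + 1 - k = q + 1 := by omega
  rw [s1, s2, mul_div_assoc', mul_div_assoc', div_le_div_iff₀ p1 p2]
  calc ((l : ℝ) + 1) * (R ^ (k + 1) * r ^ q) * (k + q + 1).choose k
      ≤ ((q : ℝ) + 1) * (R ^ k * r ^ (q + 1)) * (k + q + 1).choose k := by
        rw [pow_succ, pow_succ]
        gcongr ?_ * ?_ * _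
        · linarith
        · calc R ^ k * R * r ^ q ≤ R ^ k * r * r ^ q := by gcongr
            _ = R ^ k * (r ^ q * r) := by ring
    _ = (R ^ k * r ^ (q + 1)) * ((k + q + 1).choose k * (q + 1)) := by ring
    _ = _ := by rw [← hch']; ring

lemma nrm_mono {r R : ℝ} {j j' : ℕ} (h : j ≤ j') (f : MvPowerSeries (Fin (n + 1)) ℝ) :
    nrm r R j f ≤ nrm r R j' f := by
  refine ENNReal.tsum_le_tsum fun β => ?_
  gcongr
  exact le_add_self

lemma nrm_add (r R : ℝ) (j : ℕ) (f g : MvPowerSeries (Fin (n + 1)) ℝ) :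
    nrm r R j (f + g) ≤ nrm r R j f + nrm r R j g := by
  unfold nrm
  rw [← ENNReal.tsum_add]
  refine ENNReal.tsum_le_tsum fun β => ?_
  rw [← add_mul, ← add_mul, map_add]
  gcongr
  exact enorm_add_le _ _

lemma nrm_mul {r R : ℝ} (hr : 0 < r) (hR : 0 < R) (f g : MvPowerSeries (Fin (n + 1)) ℝ) :
    nrm r R 0 (f * g) ≤ nrm r R 0 f * nrm r R 0 g := by
  unfold nrm
  simp only [pow_zero, mul_one]
  have h1 : (∑' β, ‖coeff β f‖ₑ * wt r R β) * (∑' β, ‖coeff β g‖ₑ * wt r R β) =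
      ∑' γ : Fin (n + 1) →₀ ℕ, ∑ p ∈ Finset.HasAntidiagonal.antidiagonal γ,
        (‖coeff p.1 f‖ₑ * wt r R p.1) * (‖coeff p.2 g‖ₑ * wt r R p.2) := by
    rw [← ENNReal.tsum_mul_right]
    simp_rw [← ENNReal.tsum_mul_left]
    rw [← ENNReal.tsum_prod (f := fun β β' =>
      (‖coeff β f‖ₑ * wt r R β) * (‖coeff β' g‖ₑ * wt r R β')),
      ← Finset.HasAntidiagonal.sigmaAntidiagonalEquivProd.tsum_eq, ENNReal.tsum_sigma']
    refine tsum_congr fun γ => ?_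
    rw [tsum_fintype]
    exact Finset.sum_coe_sort (Finset.HasAntidiagonal.antidiagonal γ) (fun p =>
      (‖coeff p.1 f‖ₑ * wt r R p.1) * (‖coeff p.2 g‖ₑ * wt r R p.2))
  rw [h1]
  refine ENNReal.tsum_le_tsum fun γ => ?_
  rw [coeff_mul]
  refine (mul_le_mul_left (enorm_sum_le _ _) _).trans ?_
  rw [Finset.sum_mul]
  refine Finset.sum_le_sum fun p hp => ?_
  rw [← Finset.HasAntidiagonal.mem_antidiagonal.1 hp, enorm_mul]
  calc _ ≤ ‖coeff p.1 f‖ₑ * ‖coeff p.2 g‖ₑ * (wt r R p.1 * wt r R p.2) := by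
        gcongr; exact wt_add hr hR _ _
    _ = _ := by ring

lemma coeff_X0_mul (h : MvPowerSeries (Fin (n + 1)) ℝ) (γ : Fin (n + 1) →₀ ℕ) :
    coeff (γ + ee 0) (MvPowerSeries.X 0 * h) = coeff γ h := by
  rw [mul_comm, MvPowerSeries.X]
  simpa using coeff_add_mul_monomial γ (ee 0) h 1

lemma eq_add_ee {β : Fin (n + 1) →₀ ℕ} {μ : Fin (n + 1)} (h : β μ ≠ 0) :
    β - ee μ + ee μ = β := by
  apply tsub_add_cancel_of_le
  rw [Finsupp.single_le_iff]; omega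

lemma coeff_X0_mul' (h : MvPowerSeries (Fin (n + 1)) ℝ) (β : Fin (n + 1) →₀ ℕ) (hβ : β 0 = 0) :
    coeff β (MvPowerSeries.X 0 * h) = 0 :=
  X_dvd_iff.1 (dvd_mul_right _ _) β hβ

lemma nrm_X0_mul (r R : ℝ) (j : ℕ) (h : MvPowerSeries (Fin (n + 1)) ℝ) :
    nrm r R j (MvPowerSeries.X 0 * h) =
      ∑' γ : Fin (n + 1) →₀ ℕ, ‖coeff γ h‖ₑ * ((((γ + ee (0 : Fin (n + 1)) : Fin (n + 1) →₀ ℕ) 0 : ℕ) : ℝ≥0∞) + 1) ^ j * wt r R (γ + ee 0) := by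
  unfold nrm
  have hinj : Function.Injective (fun γ : Fin (n + 1) →₀ ℕ => γ + ee 0) := add_left_injective _
  rw [← hinj.tsum_eq]
  · simp only [coeff_X0_mul]
  · intro β hβ
    by_contra hcon
    have h0 : β 0 = 0 := by
      by_contra h0
      exact hcon ⟨_, eq_add_ee h0⟩
    simp [coeff_X0_mul' h β h0] at hβ

lemma nrm_X0_le {r R : ℝ} (hr : 0 < r) (hR : 0 < R) (h : MvPowerSeries (Fin (n + 1)) ℝ) :
    nrm r R 0 (MvPowerSeries.X 0 * h) ≤ ENNReal.ofReal R * nrm r R 0 h := by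
  rw [nrm_X0_mul, nrm, ← ENNReal.tsum_mul_left]
  refine ENNReal.tsum_le_tsum fun β => ?_
  simp only [pow_zero, mul_one]
  calc _ ≤ ‖coeff β h‖ₑ * (ENNReal.ofReal R * wt r R β) := by
        gcongr; exact wt_add_e0 hr hR β
    _ = _ := by ring

lemma nrm_fD {r R : ℝ} (hR : 0 < R) (hRr : R ≤ r) (j : ℕ) (μ : Fin (n + 1))
    (f : MvPowerSeries (Fin (n + 1)) ℝ) :
    nrm r R j (fD μ f) ≤ 2 ^ j * nrm r R (j + 1) f := by
  have hinj : Function.Injective (fun γ : Fin (n + 1) →₀ ℕ => γ + ee μ) := add_left_injective _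
  rw [fD, nrm_X0_mul, nrm, ← ENNReal.tsum_mul_left]
  refine le_trans ?_ (ENNReal.tsum_comp_le_tsum_of_injective hinj _)
  refine ENNReal.tsum_le_tsum fun γ => ?_
  rw [coeff_pderivFun, enorm_mul]
  have e1 : ‖((γ μ : ℝ) + 1)‖ₑ = (γ μ : ℝ≥0∞) + 1 := by
    rw [Real.enorm_of_nonneg (by positivity), ENNReal.ofReal_add (by positivity) (by positivity)]
    simp
  have e2 : ((((γ + ee (0 : Fin (n + 1)) : Fin (n + 1) →₀ ℕ) 0 : ℕ) : ℝ≥0∞) + 1) ≤ 2 * (((((γ + ee μ) 0 : ℕ) : ℝ≥0∞)) + 1) := by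
    have : (γ + ee (0 : Fin (n + 1)) : Fin (n + 1) →₀ ℕ) 0 + 1 ≤ 2 * ((γ + ee μ) 0 + 1) := by simp [ee]; omega
    exact_mod_cast this
  rw [e1]
  calc _ ≤ ‖coeff (γ + ee μ) f‖ₑ * ((γ μ : ℝ≥0∞) + 1) *
          (2 * (((((γ + ee μ) 0 : ℕ) : ℝ≥0∞)) + 1)) ^ j * wt r R (γ + ee 0) := by
        gcongr
    _ = ‖coeff (γ + ee μ) f‖ₑ * (2 * (((((γ + ee μ) 0 : ℕ) : ℝ≥0∞)) + 1)) ^ j *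
          (((γ μ : ℝ≥0∞) + 1) * wt r R (γ + ee 0)) := by ring
    _ ≤ ‖coeff (γ + ee μ) f‖ₑ * (2 * (((((γ + ee μ) 0 : ℕ) : ℝ≥0∞)) + 1)) ^ j *
          ((((γ + ee μ) 0 : ℕ) + 1 : ℝ≥0∞) * wt r R (γ + ee μ)) := by
        gcongr _ * ?_
        exact wt_shift hR hRr μ γ
    _ = _ := by rw [mul_pow, pow_succ]; ring

lemma PSRep.nrm_bound {b : Fin (n + 1) → ℝ} {f : MvPowerSeries (Fin (n + 1)) ℝ}
    {g : (Fin (n + 1) → ℝ) → ℝ} (h : PSRep b f g) :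
    ∃ r₀ : ℝ, 0 < r₀ ∧ ∃ K : ℝ≥0∞, K ≠ ⊤ ∧ ∀ r R, 0 < R → R ≤ r → r ≤ r₀ → nrm r R 0 f ≤ K := by
  obtain ⟨ρ, h0, hs, -⟩ := h
  refine ⟨ρ, h0, ENNReal.ofReal (∑' β : Fin (n + 1) →₀ ℕ, |coeff β f| * ρ ^ β.degree),
    ENNReal.ofReal_ne_top, fun r R hR hRr hr => ?_⟩
  have hr0 : 0 < r := hR.trans_le hRr
  rw [ENNReal.ofReal_tsum_of_nonneg (fun β => by positivity) hs]
  refine ENNReal.tsum_le_tsum fun β => ?_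
  rw [pow_zero, mul_one, ENNReal.ofReal_mul (abs_nonneg _), ← Real.norm_eq_abs, ofReal_norm]
  gcongr
  refine (wt_le hR hRr β).trans (ENNReal.ofReal_le_ofReal ?_)
  gcongr

lemma PSRep_of_nrm {b : Fin (n + 1) → ℝ} {f : MvPowerSeries (Fin (n + 1)) ℝ} {r R : ℝ}
    (hR : 0 < R) (hRr : R ≤ r) (hf : nrm r R 0 f ≠ ⊤) :
    PSRep b f (fun y => ∑' β, coeff β f * mon (y - b) β) := by
  have hs : Summable fun β : Fin (n + 1) →₀ ℕ => |coeff β f| * (R / 2) ^ β.degree := by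
    have h1 : ∑' β : Fin (n + 1) →₀ ℕ, ENNReal.ofReal (|coeff β f| * (R / 2) ^ β.degree) ≠ ⊤ := by
      refine ne_top_of_le_ne_top hf (ENNReal.tsum_le_tsum fun β => ?_)
      rw [pow_zero, mul_one, ENNReal.ofReal_mul (abs_nonneg _), ← Real.norm_eq_abs, ofReal_norm]
      gcongr
      exact le_wt hR hRr β
    have h2 := ENNReal.summable_toReal h1
    refine h2.congr fun β => ?_
    rw [ENNReal.toReal_ofReal (by positivity)]
  refine ⟨R / 2, by positivity, hs, fun y hy => ?_⟩
  simp only [add_sub_cancel_left]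
  refine Summable.hasSum (Summable.of_norm_bounded hs fun β => ?_)
  rw [norm_mul]
  gcongr
  · exact le_rfl
  · exact abs_mon_le hy β

end Formal

section Ops
open MvPowerSeries Topology ENNReal

variable {n : ℕ}

/-- nonlinear operators -/
abbrev Op (n : ℕ) := ((Fin (n + 1) → ℝ) → ℝ) → ((Fin (n + 1) → ℝ) → ℝ)

/-- operators that are represented by formal operators with good bounds -/
def GoodOp (b : Fin (n + 1) → ℝ) (H : Op n) : Prop :=
  ∃ Hh : MvPowerSeries (Fin (n + 1)) ℝ → MvPowerSeries (Fin (n + 1)) ℝ,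
    (∀ k f f', MvPowerSeries.X 0 ^ k ∣ f - f' → MvPowerSeries.X 0 ^ k ∣ Hh f - Hh f') ∧
    (∃ r₀ : ℝ, 0 < r₀ ∧ ∃ K : ℝ≥0∞, K ≠ ⊤ ∧ ∀ r R, 0 < R → R ≤ r → r ≤ r₀ → ∀ f,
      nrm r R 2 f ≤ 1 → nrm r R 0 (Hh f) ≤ K) ∧
    ∀ f g, PSRep b f g → PSRep b (Hh f) (H g)

lemma GoodOp.add {b : Fin (n + 1) → ℝ} {G H : Op n} (hG : GoodOp b G) (hH : GoodOp b H) :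
    GoodOp b (G + H) := by
  obtain ⟨g, g1, ⟨r1, hr1, K1, hK1, gb⟩, g3⟩ := hG
  obtain ⟨h, h1, ⟨r2, hr2, K2, hK2, hb⟩, h3⟩ := hH
  refine ⟨fun f => g f + h f, fun k f f' hf => ?_, ⟨min r1 r2, by positivity, K1 + K2,
    by simp [hK1, hK2], fun r R hR hRr hr f hf => ?_⟩, fun f w hf => (g3 f w hf).add (h3 f w hf)⟩
  · have := dvd_add (g1 k f f' hf) (h1 k f f' hf)
    rwa [add_sub_add_comm]
  · exact (nrm_add _ _ _ _ _).trans (add_le_add (gb r R hR hRr (hr.trans (min_le_left _ _)) f hf)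
      (hb r R hR hRr (hr.trans (min_le_right _ _)) f hf))

lemma GoodOp.mul {b : Fin (n + 1) → ℝ} {G H : Op n} (hG : GoodOp b G) (hH : GoodOp b H) :
    GoodOp b (G * H) := by
  obtain ⟨g, g1, ⟨r1, hr1, K1, hK1, gb⟩, g3⟩ := hG
  obtain ⟨h, h1, ⟨r2, hr2, K2, hK2, hb⟩, h3⟩ := hH
  refine ⟨fun f => g f * h f, fun k f f' hf => ?_, ⟨min r1 r2, by positivity, K1 * K2,
    ENNReal.mul_ne_top hK1 hK2, fun r R hR hRr hr f hf => ?_⟩,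
    fun f w hf => (g3 f w hf).mul (h3 f w hf)⟩
  · have := dvd_add ((g1 k f f' hf).mul_right (h f)) ((h1 k f f' hf).mul_left (g f'))
    have e : g f * h f - g f' * h f' = (g f - g f') * h f + g f' * (h f - h f') := by ring
    rwa [e]
  · exact (nrm_mul (hR.trans_le hRr) hR _ _).trans
      (mul_le_mul' (gb r R hR hRr (hr.trans (min_le_left _ _)) f hf)
      (hb r R hR hRr (hr.trans (min_le_right _ _)) f hf))

lemma GoodOp.coef {b : Fin (n + 1) → ℝ} {c : (Fin (n + 1) → ℝ) → ℝ} (hc : AnalyticAt ℝ c b) :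
    GoodOp b (fun _ => c) := by
  obtain ⟨f, hf⟩ := exists_PSRep hc
  obtain ⟨r, hr, K, hK, h⟩ := hf.nrm_bound
  exact ⟨fun _ => f, fun k _ _ _ => by simp, ⟨r, hr, K, hK, fun r R h1 h2 h3 _ _ => h r R h1 h2 h3⟩,
    fun _ _ _ => hf⟩

lemma GoodOp.id (b : Fin (n + 1) → ℝ) : GoodOp b (fun w => w) :=
  ⟨fun f => f, fun _ _ _ h => h, ⟨1, one_pos, 1, by simp, fun _ _ _ _ _ f hf =>
    (nrm_mono (by norm_num) f).trans hf⟩, fun _ _ h => h⟩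

/-- the goodRing subring of good operators -/
def goodRing (b : Fin (n + 1) → ℝ) : Subring (Op n) where
  carrier := {H | GoodOp b H}
  mul_mem' := GoodOp.mul
  one_mem' := GoodOp.coef (c := 1) (analyticAt_const (v := (1 : ℝ)))
  add_mem' := GoodOp.add
  zero_mem' := GoodOp.coef (c := 0) (analyticAt_const (v := (0 : ℝ)))
  neg_mem' := by
    intro G hG
    have h1 : GoodOp b (fun _ => (fun _ => (-1 : ℝ))) := GoodOp.coef analyticAt_const
    have h2 := h1.mul hG
    have e : (fun _ => (fun _ => (-1 : ℝ))) * G = -G := by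
      funext w y; simp
    rw [e] at h2
    exact h2

/-- the operator `y₀ ∂_μ` -/
noncomputable def Dop (μ : Fin (n + 1)) : Op n := fun w y => y 0 * pdv μ w y

lemma PSRep.D {b : Fin (n + 1) → ℝ} (hb : b 0 = 0) {f : MvPowerSeries (Fin (n + 1)) ℝ}
    {g : (Fin (n + 1) → ℝ) → ℝ} (μ : Fin (n + 1)) (h : PSRep b f g) :
    PSRep b (fD μ f) (Dop μ g) := by
  refine ((PSRep.X 0).mul (h.pd μ)).congr (Eventually.of_forall fun y => ?_)
  simp [Dop, hb]

lemma pderivFun_sub (μ : Fin (n + 1)) (f f' : MvPowerSeries (Fin (n + 1)) ℝ) :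
    pderivFun μ (f - f') = pderivFun μ f - pderivFun μ f' := by
  ext β
  simp [coeff_pderivFun, sub_mul]

lemma dvd_iff_coeff (k : ℕ) (f : MvPowerSeries (Fin (n + 1)) ℝ) :
    (MvPowerSeries.X 0 : MvPowerSeries (Fin (n + 1)) ℝ) ^ k ∣ f ↔
      ∀ β : Fin (n + 1) →₀ ℕ, β 0 < k → coeff β f = 0 := X_pow_dvd_iff

lemma fD_dvd (k : ℕ) (μ : Fin (n + 1)) (f : MvPowerSeries (Fin (n + 1)) ℝ)
    (h : (MvPowerSeries.X 0 : MvPowerSeries (Fin (n + 1)) ℝ) ^ k ∣ f) :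
    (MvPowerSeries.X 0 : MvPowerSeries (Fin (n + 1)) ℝ) ^ k ∣ fD μ f := by
  rw [dvd_iff_coeff] at h ⊢
  intro β hβ
  by_cases h0 : β 0 = 0
  · exact coeff_X0_mul' _ _ h0
  · rw [← eq_add_ee h0, fD, coeff_X0_mul, coeff_pderivFun, h, zero_mul]
    have : (β - ee 0 + ee μ : Fin (n + 1) →₀ ℕ) 0 ≤ β 0 := by
      simp [ee, Finsupp.single_apply]
      split_ifs <;> omega
    exact lt_of_le_of_lt this hβ

lemma fD_sub_dvd (k : ℕ) (μ : Fin (n + 1)) (f f' : MvPowerSeries (Fin (n + 1)) ℝ)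
    (h : (MvPowerSeries.X 0 : MvPowerSeries (Fin (n + 1)) ℝ) ^ k ∣ f - f') :
    (MvPowerSeries.X 0 : MvPowerSeries (Fin (n + 1)) ℝ) ^ k ∣ fD μ f - fD μ f' := by
  have := fD_dvd k μ _ h
  rwa [fD, pderivFun_sub, mul_sub] at this

lemma GoodOp.D {b : Fin (n + 1) → ℝ} (hb : b 0 = 0) (μ : Fin (n + 1)) : GoodOp b (Dop μ) := by
  refine ⟨fD μ, fun k f f' h => fD_sub_dvd k μ f f' h, ⟨1, one_pos, 1, by simp,
    fun r R hR hRr _ f hf => ?_⟩, fun f g h => h.D hb μ⟩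
  refine (nrm_fD hR hRr 0 μ f).trans ?_
  rw [pow_zero, one_mul]
  exact (nrm_mono (by norm_num) f).trans hf

lemma GoodOp.DD {b : Fin (n + 1) → ℝ} (hb : b 0 = 0) (μ ν : Fin (n + 1)) :
    GoodOp b (fun w => Dop μ (Dop ν w)) := by
  refine ⟨fun f => fD μ (fD ν f), fun k f f' h => fD_sub_dvd k μ _ _ (fD_sub_dvd k ν _ _ h),
    ⟨1, one_pos, 2, by simp,
    fun r R hR hRr _ f hf => ?_⟩, fun f g h => (h.D hb ν).D hb μ⟩
  refine (nrm_fD hR hRr 0 μ _).trans ?_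
  rw [pow_zero, one_mul]
  refine (nrm_fD hR hRr 1 ν f).trans ?_
  calc _ ≤ (2 : ℝ≥0∞) ^ 1 * 1 := by gcongr
    _ = 2 := by simp

end Ops

section Solve
open MvPowerSeries Topology ENNReal

variable {n : ℕ}

/-- the principal Fuchsian operator `(θ+m)(θ+m+1)` -/
noncomputable def Qop (m : ℕ) : Op n := fun w y =>
  Dop 0 (Dop 0 w) y + (2 * m + 1) * Dop 0 w y + m * (m + 1) * w y

/-- the formal principal Fuchsian operator -/
noncomputable def fQ (m : ℕ) (f : MvPowerSeries (Fin (n + 1)) ℝ) : MvPowerSeries (Fin (n + 1)) ℝ :=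
  fun β => (((β 0 : ℕ) : ℝ) + m) * ((β 0 : ℕ) + m + 1) * coeff β f

/-- the formal inverse of the principal Fuchsian operator -/
noncomputable def fQi (m : ℕ) (f : MvPowerSeries (Fin (n + 1)) ℝ) : MvPowerSeries (Fin (n + 1)) ℝ :=
  fun β => coeff β f / ((((β 0 : ℕ) : ℝ) + m) * ((β 0 : ℕ) + m + 1))

lemma coeff_fQ (m : ℕ) (f : MvPowerSeries (Fin (n + 1)) ℝ) (β) : coeff β (fQ m f) =
   (((β 0 : ℕ) : ℝ) + m) * ((β 0 : ℕ) + m + 1) * coeff β f := rfl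

lemma coeff_fQi (m : ℕ) (f : MvPowerSeries (Fin (n + 1)) ℝ) (β) : coeff β (fQi m f) =
   coeff β f / ((((β 0 : ℕ) : ℝ) + m) * ((β 0 : ℕ) + m + 1)) := rfl

lemma fQ_fQi (m : ℕ) (hm : 1 ≤ m) (f : MvPowerSeries (Fin (n + 1)) ℝ) : fQ m (fQi m f) = f := by
  ext β
  rw [coeff_fQ, coeff_fQi]
  have : (1 : ℝ) ≤ m := by exact_mod_cast hm
  field_simp

lemma coeff_fD0 (f : MvPowerSeries (Fin (n + 1)) ℝ) (β : Fin (n + 1) →₀ ℕ) :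
    coeff β (fD 0 f) = (β 0 : ℕ) * coeff β f := by
  by_cases h0 : β 0 = 0
  · rw [fD, coeff_X0_mul' _ _ h0, h0]; simp
  · conv_lhs => rw [← eq_add_ee h0]
    rw [fD, coeff_X0_mul, coeff_pderivFun]
    have e : β - ee 0 + Finsupp.single 0 1 = β := eq_add_ee h0
    rw [e, mul_comm]
    congr 1
    have : (β - ee 0 : Fin (n + 1) →₀ ℕ) 0 + 1 = β 0 := by simp [ee]; omega
    exact_mod_cast this

lemma PSRep.smul {b : Fin (n + 1) → ℝ} {f : MvPowerSeries (Fin (n + 1)) ℝ}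
    {g : (Fin (n + 1) → ℝ) → ℝ} (h : PSRep b f g) (c : ℝ) : PSRep b (c • f) (fun y => c * g y) := by
  obtain ⟨ρ, h0, hs, hh⟩ := h
  refine ⟨ρ, h0, ?_, fun y hy => ?_⟩
  · refine (hs.mul_left |c|).congr fun β => ?_
    rw [coeff_smul, abs_mul, mul_assoc]
  · refine ((hh y hy).mul_left c).congr_fun ?_
    intro β
    rw [coeff_smul, mul_assoc]

lemma PSRep.Q {b : Fin (n + 1) → ℝ} (hb : b 0 = 0) {f : MvPowerSeries (Fin (n + 1)) ℝ}
    {g : (Fin (n + 1) → ℝ) → ℝ} (m : ℕ) (h : PSRep b f g) : PSRep b (fQ m f) (Qop m g) := by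
  have h2 := ((((h.D hb 0).D hb 0).add ((h.D hb 0).smul (2 * m + 1))).add (h.smul (m * (m + 1))))
  have e : fQ m f = fD 0 (fD 0 f) + (2 * m + 1 : ℝ) • fD 0 f + (m * (m + 1) : ℝ) • f := by
    ext β
    simp only [coeff_fQ, map_add, coeff_smul, coeff_fD0]
    ring
  rw [e]
  exact h2

lemma nrm_fQi (r R : ℝ) (m : ℕ) (hm : 1 ≤ m) (f : MvPowerSeries (Fin (n + 1)) ℝ) :
    nrm r R 2 (fQi m f) ≤ nrm r R 0 f := by
  refine ENNReal.tsum_le_tsum fun β => ?_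
  rw [pow_zero, mul_one]
  gcongr
  rw [coeff_fQi]
  have h1 : (1 : ℝ) ≤ m := by exact_mod_cast hm
  have e1 : ((β 0 : ℕ) : ℝ≥0∞) + 1 = ENNReal.ofReal ((β 0 : ℕ) + 1 : ℝ) := by
    rw [ENNReal.ofReal_add (by positivity) (by positivity)]; simp
  rw [e1, ← ofReal_norm, ← ofReal_norm, ← ENNReal.ofReal_pow (by positivity),
    ← ENNReal.ofReal_mul (by positivity)]
  refine ENNReal.ofReal_le_ofReal ?_
  rw [norm_div, div_mul_eq_mul_div]
  apply div_le_of_le_mul₀ (by positivity) (by positivity)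
  gcongr
  rw [Real.norm_of_nonneg (by positivity), sq]
  gcongr
  linarith

/-- existence theorem -/
theorem exists_sol {b : Fin (n + 1) → ℝ} (hb : b 0 = 0) (m : ℕ) (hm : 1 ≤ m) {H : Op n}
    (hH : GoodOp b H) :
    ∃ w, AnalyticAt ℝ w b ∧ Qop m w =ᶠ[𝓝 b] fun y => y 0 * H w y := by
  obtain ⟨h, h1, ⟨r, hr, K, hK, hbd⟩, h3⟩ := hH
  set S : MvPowerSeries (Fin (n + 1)) ℝ → MvPowerSeries (Fin (n + 1)) ℝ :=
    fun f => fQi m (MvPowerSeries.X 0 * h f) with hS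
  obtain ⟨R, hR, hRr, hRK⟩ : ∃ R, 0 < R ∧ R ≤ r ∧ ENNReal.ofReal R * K ≤ 1 := by
    refine ⟨min r (1 / (K.toReal + 1)), by positivity, min_le_left _ _, ?_⟩
    lift K to NNReal using hK
    rw [← ENNReal.ofReal_coe_nnreal, ← ENNReal.ofReal_mul (by positivity)]
    rw [← ENNReal.ofReal_one]
    refine ENNReal.ofReal_le_ofReal ?_
    rw [ENNReal.toReal_ofReal (NNReal.coe_nonneg K)]
    calc min r (1 / ((K : ℝ) + 1)) * (K : ℝ) ≤ 1 / ((K : ℝ) + 1) * K := by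
          gcongr; exact min_le_right _ _
      _ ≤ 1 := by
        rw [div_mul_eq_mul_div, one_mul]
        apply div_le_one_of_le₀ (by linarith) (by positivity)
  have hSb : ∀ f, nrm r R 2 f ≤ 1 → nrm r R 2 (S f) ≤ 1 := fun f hf =>
    (nrm_fQi r R m hm _).trans ((nrm_X0_le hr hR _).trans
      (le_trans (by gcongr; exact hbd r R hR hRr le_rfl f hf) hRK))
  have hSd : ∀ k f f', (MvPowerSeries.X 0 : MvPowerSeries (Fin (n + 1)) ℝ) ^ k ∣ f - f' →
      (MvPowerSeries.X 0 : MvPowerSeries (Fin (n + 1)) ℝ) ^ (k + 1) ∣ S f - S f' := by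
    intro k f f' hf
    have h2 : (MvPowerSeries.X 0 : MvPowerSeries (Fin (n + 1)) ℝ) ^ (k + 1) ∣
        MvPowerSeries.X 0 * h f - MvPowerSeries.X 0 * h f' := by
      rw [← mul_sub, pow_succ']
      exact mul_dvd_mul_left _ (h1 k f f' hf)
    rw [dvd_iff_coeff] at h2 ⊢
    intro β hβ
    have h4 := h2 β hβ
    rw [map_sub] at h4 ⊢
    rw [hS, coeff_fQi, coeff_fQi, ← sub_div, h4, zero_div]
  set q : ℕ → MvPowerSeries (Fin (n + 1)) ℝ := fun j => S^[j] 0 with hq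
  have hq1 : ∀ j, q (j + 1) = S (q j) := fun j => Function.iterate_succ_apply' S j 0
  have hqb : ∀ j, nrm r R 2 (q j) ≤ 1 := by
    intro j
    induction j with
    | zero => simp [hq, nrm]
    | succ j ih => rw [hq1]; exact hSb _ ih
  have hqd : ∀ j i, (MvPowerSeries.X 0 : MvPowerSeries (Fin (n + 1)) ℝ) ^ j ∣ q (j + i) - q j := by
    intro j i
    induction j with
    | zero => simp
    | succ j ih => rw [hq1, show j + 1 + i = (j + i) + 1 by ring, hq1]; exact hSd _ _ _ ih
  set f : MvPowerSeries (Fin (n + 1)) ℝ := fun β => coeff β (q (β 0 + 1)) with hf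
  have hfc : ∀ β, coeff β f = coeff β (q (β 0 + 1)) := fun β => rfl
  have hfq : ∀ j (β : Fin (n + 1) →₀ ℕ), β 0 < j → coeff β f = coeff β (q j) := by
    intro j β hj
    obtain ⟨i, rfl⟩ := Nat.exists_eq_add_of_le (Nat.succ_le_of_lt hj)
    have := (dvd_iff_coeff _ _).1 (hqd (β 0 + 1) i) β (Nat.lt_succ_self _)
    rw [map_sub, sub_eq_zero] at this
    rw [hfc, ← this]
  have hfd : ∀ j, (MvPowerSeries.X 0 : MvPowerSeries (Fin (n + 1)) ℝ) ^ j ∣ f - q j := by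
    intro j
    rw [dvd_iff_coeff]
    intro β hβ
    rw [map_sub, hfq j β hβ, sub_self]
  have hSf : S f = f := by
    ext β
    have h5 := (dvd_iff_coeff _ _).1 (hSd _ _ _ (hfd (β 0))) β (Nat.lt_succ_self _)
    rw [map_sub, sub_eq_zero, ← hq1] at h5
    rw [h5, hfc]
  have hfb : nrm r R 2 f ≤ 1 := by
    rw [nrm, ENNReal.tsum_eq_iSup_sum]
    refine iSup_le fun s => ?_
    set N := s.sup (fun β => β 0) + 1 with hN
    refine le_trans ?_ (hqb N)
    rw [nrm]
    refine le_trans (Finset.sum_le_sum fun β hβ => ?_) (ENNReal.sum_le_tsum s)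
    rw [hfq N β (Nat.lt_succ_of_le (Finset.le_sup (f := fun β : Fin (n + 1) →₀ ℕ => β 0) hβ))]
  have hrep := PSRep_of_nrm (b := b) (f := f) hR hRr
    (ne_top_of_le_ne_top ENNReal.one_ne_top ((nrm_mono (by norm_num) f).trans hfb))
  refine ⟨_, hrep.analyticAt, ?_⟩
  have e1 : fQ m f = MvPowerSeries.X 0 * h f := by
    conv_lhs => rw [← hSf]
    exact fQ_fQi m hm _
  have r1 := hrep.Q hb m
  rw [e1] at r1
  refine r1.eventuallyEq (((PSRep.X 0).mul (h3 f _ hrep)).congr (Eventually.of_forall fun y => ?_))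
  simp [hb]

/-- uniqueness theorem -/
theorem unique_sol {b : Fin (n + 1) → ℝ} (hb : b 0 = 0) (m : ℕ) (hm : 1 ≤ m) {H : Op n}
    (hH : GoodOp b H) {w w' : (Fin (n + 1) → ℝ) → ℝ} (hw : AnalyticAt ℝ w b)
    (hw' : AnalyticAt ℝ w' b) (h1 : ∀ᶠ y in 𝓝 b, y 0 * (Qop m w y - y 0 * H w y) = 0)
    (h2 : ∀ᶠ y in 𝓝 b, y 0 * (Qop m w' y - y 0 * H w' y) = 0) : w =ᶠ[𝓝 b] w' := by
  obtain ⟨f, hf⟩ := exists_PSRep hw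
  obtain ⟨f', hf'⟩ := exists_PSRep hw'
  obtain ⟨h, hd, -, h3⟩ := hH
  have key : ∀ f w, PSRep b f w → (∀ᶠ y in 𝓝 b, y 0 * (Qop m w y - y 0 * H w y) = 0) →
      fQ m f = MvPowerSeries.X 0 * h f := by
    intro f w hf hw
    have e1 := (PSRep.X 0).mul ((hf.Q hb m).add ((PSRep.X 0).mul (h3 f w hf)).neg)
    have e2 : PSRep b 0 (0 : (Fin (n + 1) → ℝ) → ℝ) := by
      refine ⟨1, one_pos, by simp, fun y _ => by simp⟩
    have e3 := e1.unique e2 (by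
      filter_upwards [hw] with y hy
      simp [hb]
      simpa [sub_eq_add_neg] using hy)
    have hX : (MvPowerSeries.X 0 : MvPowerSeries (Fin (n + 1)) ℝ) ≠ 0 := by
      intro h0
      have := congrArg (coeff (ee 0)) h0
      simp [coeff_X, ee] at this
    have e4 := (mul_eq_zero.1 e3).resolve_left hX
    rwa [← sub_eq_add_neg, sub_eq_zero] at e4
  have k1 := key f w hf h1
  have k2 := key f' w' hf' h2
  have hdvd : ∀ k, (MvPowerSeries.X 0 : MvPowerSeries (Fin (n + 1)) ℝ) ^ k ∣ f - f' := by
    intro k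
    induction k with
    | zero => simp
    | succ k ih =>
      have h4 : (MvPowerSeries.X 0 : MvPowerSeries (Fin (n + 1)) ℝ) ^ (k + 1) ∣
          fQ m f - fQ m f' := by
        rw [k1, k2, ← mul_sub, pow_succ']
        exact mul_dvd_mul_left _ (hd k f f' ih)
      rw [dvd_iff_coeff] at h4 ⊢
      intro β hβ
      have h5 := h4 β hβ
      rw [map_sub, coeff_fQ, coeff_fQ, ← mul_sub] at h5
      have h6 : (1 : ℝ) ≤ m := by exact_mod_cast hm
      rw [map_sub]
      exact (mul_eq_zero.1 h5).resolve_left (by positivity)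
  have : f = f' := by
    ext β
    have := (dvd_iff_coeff _ _).1 (hdvd (β 0 + 1)) β (Nat.lt_succ_self _)
    rwa [map_sub, sub_eq_zero] at this
  subst this
  exact hf.eventuallyEq hf'

end Solve

section Calc
open Topology

variable {n : ℕ}

lemma pdv_add {ι : Type} [Fintype ι] [DecidableEq ι] (μ : ι) {f g : (ι → ℝ) → ℝ} {y : ι → ℝ}
    (hf : AnalyticAt ℝ f y)
    (hg : AnalyticAt ℝ g y) : pdv μ (fun y => f y + g y) y = pdv μ f y + pdv μ g y := by
  unfold pdv
  rw [fderiv_fun_add hf.differentiableAt hg.differentiableAt]; rfl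

lemma pdv_mul {ι : Type} [Fintype ι] [DecidableEq ι] (μ : ι) {f g : (ι → ℝ) → ℝ} {y : ι → ℝ}
    (hf : AnalyticAt ℝ f y)
    (hg : AnalyticAt ℝ g y) :
    pdv μ (fun y => f y * g y) y = pdv μ f y * g y + f y * pdv μ g y := by
  unfold pdv
  rw [fderiv_fun_mul hf.differentiableAt hg.differentiableAt]
  simp; ring

lemma pdv_const {ι : Type} [Fintype ι] [DecidableEq ι] (μ : ι) (c : ℝ) (y : ι → ℝ) :
    pdv μ (fun _ => c) y = 0 := by
  simp [pdv]

lemma pdv_neg {ι : Type} [Fintype ι] [DecidableEq ι] (μ : ι) {f : (ι → ℝ) → ℝ} {y : ι → ℝ} :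
    pdv μ (fun y => - f y) y = - pdv μ f y := by
  unfold pdv
  rw [fderiv_fun_neg]; rfl

lemma pdv_const_mul {ι : Type} [Fintype ι] [DecidableEq ι] (μ : ι) (c : ℝ) {f : (ι → ℝ) → ℝ}
    {y : ι → ℝ} (hf : AnalyticAt ℝ f y) :
    pdv μ (fun y => c * f y) y = c * pdv μ f y := by
  rw [pdv_mul μ analyticAt_const hf, pdv_const]; ring

lemma analyticAt_coord {ι : Type} [Fintype ι] (ν : ι) (y : ι → ℝ) :
    AnalyticAt ℝ (fun y : ι → ℝ => y ν) y :=
  (ContinuousLinearMap.proj (R := ℝ) (φ := fun _ : ι => ℝ) ν).analyticAt y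

lemma pdv_coord_pow {ι : Type} [Fintype ι] [DecidableEq ι] (μ ν : ι) (k : ℕ) (y : ι → ℝ) :
    pdv μ (fun y => y ν ^ k) y = if ν = μ then k * y ν ^ (k - 1) else 0 := by
  unfold pdv
  have h := ((ContinuousLinearMap.proj (R := ℝ) (φ := fun _ : ι => ℝ) ν).hasFDerivAt (x := y)).pow k
  have h2 := h.fderiv
  simp only [ContinuousLinearMap.proj_apply] at h2
  erw [h2]
  simp [Pi.single_apply]

lemma pdv_coord {ι : Type} [Fintype ι] [DecidableEq ι] (μ ν : ι) (y : ι → ℝ) :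
    pdv μ (fun y => y ν) y = if ν = μ then 1 else 0 := by
  simpa using pdv_coord_pow μ ν 1 y

lemma AnalyticAt.pdv {ι : Type} [Fintype ι] [DecidableEq ι] {f : (ι → ℝ) → ℝ} {y : ι → ℝ}
    (hf : AnalyticAt ℝ f y) (μ : ι) : AnalyticAt ℝ (pdv μ f) y := by
  have := hf.fderiv
  exact ((ContinuousLinearMap.apply ℝ ℝ (Pi.single μ (1 : ℝ) : ι → ℝ)).analyticAt _).comp this

lemma AnalyticAt.Dop {f : (Fin (n + 1) → ℝ) → ℝ} {y : Fin (n + 1) → ℝ}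
    (hf : AnalyticAt ℝ f y) (μ : Fin (n + 1)) : AnalyticAt ℝ (Dop μ f) y :=
  (analyticAt_coord 0 y).mul (hf.pdv μ)

end Calc

section EqModSec
open Topology

variable {n : ℕ}

/-- equality of operators modulo `y₀²` -/
def EqMod (b : Fin (n + 1) → ℝ) (G G' : Op n) : Prop :=
  GoodOp b G' ∧ ∃ K, GoodOp b K ∧ ∀ w, AnalyticAt ℝ w b →
    ∀ᶠ y in 𝓝 b, G w y = G' w y + y 0 ^ 2 * K w y

variable {b : Fin (n + 1) → ℝ}

lemma GoodOp.const (b : Fin (n + 1) → ℝ) (c : ℝ) : GoodOp b (fun _ _ => c) :=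
  GoodOp.coef analyticAt_const

lemma GoodOp.coord (b : Fin (n + 1) → ℝ) (ν : Fin (n + 1)) : GoodOp b (fun _ y => y ν) :=
  GoodOp.coef (analyticAt_coord ν b)

lemma GoodOp.neg {G : Op n} (hG : GoodOp b G) : GoodOp b (-G) := (goodRing b).neg_mem hG
lemma GoodOp.pow {G : Op n} (hG : GoodOp b G) (k : ℕ) : GoodOp b (G ^ k) :=
  (goodRing b).pow_mem hG k
lemma GoodOp.sum {ι : Type*} (s : Finset ι) {G : ι → Op n} (hG : ∀ i ∈ s, GoodOp b (G i)) :
    GoodOp b (∑ i ∈ s, G i) := (goodRing b).sum_mem hG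
lemma GoodOp.prod {ι : Type*} (s : Finset ι) {G : ι → Op n} (hG : ∀ i ∈ s, GoodOp b (G i)) :
    GoodOp b (∏ i ∈ s, G i) := (goodRing b).prod_mem hG

lemma EqMod.refl {G : Op n} (hG : GoodOp b G) : EqMod b G G :=
  ⟨hG, 0, (goodRing b).zero_mem, fun w _ => Eventually.of_forall fun y => by simp⟩

lemma EqMod.of_eq {G G' : Op n} (hG : GoodOp b G')
    (h : ∀ w, AnalyticAt ℝ w b → ∀ᶠ y in 𝓝 b, G w y = G' w y) : EqMod b G G' :=
  ⟨hG, 0, (goodRing b).zero_mem, fun w hw => by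
    filter_upwards [h w hw] with y hy
    simp [hy]⟩

lemma EqMod.of_sq {G K : Op n} (hK : GoodOp b K)
    (h : ∀ w, AnalyticAt ℝ w b → ∀ᶠ y in 𝓝 b, G w y = y 0 ^ 2 * K w y) : EqMod b G 0 :=
  ⟨(goodRing b).zero_mem, K, hK, fun w hw => by
    filter_upwards [h w hw] with y hy
    simp [hy]⟩

lemma EqMod.trans {G G' G'' : Op n} (h : EqMod b G G') (h' : EqMod b G' G'') : EqMod b G G'' := by
  obtain ⟨-, K, hK, e⟩ := h
  obtain ⟨g, K', hK', e'⟩ := h'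
  refine ⟨g, K + K', hK.add hK', fun w hw => ?_⟩
  filter_upwards [e w hw, e' w hw] with y h1 h2
  rw [h1, h2]; simp; ring

lemma EqMod.add {G G' H H' : Op n} (h : EqMod b G G') (h' : EqMod b H H') :
    EqMod b (G + H) (G' + H') := by
  obtain ⟨g, K, hK, e⟩ := h
  obtain ⟨g', K', hK', e'⟩ := h'
  refine ⟨g.add g', K + K', hK.add hK', fun w hw => ?_⟩
  filter_upwards [e w hw, e' w hw] with y h1 h2
  simp only [Pi.add_apply, h1, h2]; ring

lemma EqMod.mul {G G' H H' : Op n} (h : EqMod b G G') (h' : EqMod b H H') :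
    EqMod b (G * H) (G' * H') := by
  obtain ⟨g, K, hK, e⟩ := h
  obtain ⟨g', K', hK', e'⟩ := h'
  have hc : GoodOp b (fun _ y => y 0 : Op n) := GoodOp.coord b 0
  refine ⟨g.mul g', K * H' + G' * K' + (fun _ y => y 0) * (fun _ y => y 0) * (K * K'),
    ((hK.mul g').add (g.mul hK')).add ((hc.mul hc).mul (hK.mul hK')), fun w hw => ?_⟩
  filter_upwards [e w hw, e' w hw] with y h1 h2
  simp only [Pi.mul_apply, Pi.add_apply, h1, h2]; ring

lemma EqMod.sum {ι : Type*} (s : Finset ι) {G G' : ι → Op n}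
    (h : ∀ i ∈ s, EqMod b (G i) (G' i)) : EqMod b (∑ i ∈ s, G i) (∑ i ∈ s, G' i) := by
  classical
  induction s using Finset.induction_on with
  | empty => simpa using EqMod.refl (goodRing b).zero_mem
  | insert i s hi ih =>
    rw [Finset.sum_insert hi, Finset.sum_insert hi]
    exact (h i (by simp)).add (ih fun j hj => h j (by simp [hj]))

lemma EqMod.prod {ι : Type*} (s : Finset ι) {G G' : ι → Op n}
    (h : ∀ i ∈ s, EqMod b (G i) (G' i)) : EqMod b (∏ i ∈ s, G i) (∏ i ∈ s, G' i) := by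
  classical
  induction s using Finset.induction_on with
  | empty => simpa using EqMod.refl (goodRing b).one_mem
  | insert i s hi ih =>
    rw [Finset.prod_insert hi, Finset.prod_insert hi]
    exact (h i (by simp)).mul (ih fun j hj => h j (by simp [hj]))

lemma EqMod.neg {G G' : Op n} (h : EqMod b G G') : EqMod b (-G) (-G') := by
  obtain ⟨g, K, hK, e⟩ := h
  refine ⟨g.neg, -K, hK.neg, fun w hw => ?_⟩
  filter_upwards [e w hw] with y h1
  simp only [Pi.neg_apply, h1]; ring

end EqModSec

section Reduced
open Topology

variable {n : ℕ}

/-- `z = (θ w + m w)/m` -/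
noncomputable def zop (m : ℕ) : Op n := fun w y => (Dop 0 w y + m * w y) / m

/-- `p = A + σ z` -/
noncomputable def pop (m : ℕ) (A : ℝ) : Op n := fun w y => A + y 0 * zop m w y

/-- `q_i = -ψ_i p + σ^{m+1} ∂_i w` -/
noncomputable def qop (m : ℕ) (A : ℝ) (P : Fin n → (Fin (n + 1) → ℝ) → ℝ) (i : Fin n) : Op n :=
  fun w y => - P i y * pop m A w y + y 0 ^ m * Dop i.succ w y

/-- the vector `(p,q)` -/
noncomputable def Vop (m : ℕ) (A : ℝ) (P : Fin n → (Fin (n + 1) → ℝ) → ℝ) (k : Fin (n + 1)) :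
    Op n := fun w y => (Fin.cons (pop m A w y) (fun i => qop m A P i w y) : Fin (n + 1) → ℝ) k

/-- left-hand side of the reduced equation -/
noncomputable def LE' (m : ℕ) (A : ℝ) (P : Fin n → (Fin (n + 1) → ℝ) → ℝ) : Op n := fun w y =>
  (1 / m) * (Dop 0 (pop m A w) y - pop m A w y) +
    ∑ i, (P i y * ((1 / m) * (Dop 0 (qop m A P i w) y - qop m A P i w y))
      - y 0 ^ m * pdv i.succ (qop m A P i w) y)

/-- right-hand side of the reduced equation -/
noncomputable def RE' (m : ℕ) (A : ℝ) (P : Fin n → (Fin (n + 1) → ℝ) → ℝ)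
    (cf : (l : ℕ) → (Fin l → Fin (n + 1)) → (Fin (n + 1) → ℝ) → ℝ) : Op n := fun w y =>
  ∑ l ∈ Finset.range (m + 2), y 0 ^ (m + 1 - l) * ∑ μ, cf l μ y * ∏ k, Vop m A P (μ k) w y

/-- the direction `(1,-∇ψ)` -/
noncomputable def Nv (P : Fin n → (Fin (n + 1) → ℝ) → ℝ) (y : Fin (n + 1) → ℝ) : Fin (n + 1) → ℝ :=
  Fin.cons 1 (fun i => - P i y)

variable {b : Fin (n + 1) → ℝ}

lemma GoodOp.zop (hb : b 0 = 0) (m : ℕ) : GoodOp b (zop m) := by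
  have h := (GoodOp.const b (1 / m)).mul ((GoodOp.D hb 0).add
    ((GoodOp.const b m).mul (GoodOp.id b)))
  convert! h using 1
  funext w y
  simp [_root_.zop]; ring

lemma GoodOp.pop (hb : b 0 = 0) (m : ℕ) (A : ℝ) : GoodOp b (pop m A) :=
  (GoodOp.const b A).add ((GoodOp.coord b 0).mul (GoodOp.zop hb m))

lemma GoodOp.qop (hb : b 0 = 0) (m : ℕ) (A : ℝ) {P : Fin n → (Fin (n + 1) → ℝ) → ℝ}
    (hP : ∀ i, AnalyticAt ℝ (P i) b) (i : Fin n) : GoodOp b (qop m A P i) :=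
  ((GoodOp.coef (hP i)).neg.mul (GoodOp.pop hb m A)).add
    (((GoodOp.coord b 0).pow m).mul (GoodOp.D hb i.succ))

lemma GoodOp.Vop (hb : b 0 = 0) (m : ℕ) (A : ℝ) {P : Fin n → (Fin (n + 1) → ℝ) → ℝ}
    (hP : ∀ i, AnalyticAt ℝ (P i) b) (k : Fin (n + 1)) : GoodOp b (Vop m A P k) := by
  refine Fin.cases ?_ (fun i => ?_) k
  · exact GoodOp.pop hb m A
  · exact GoodOp.qop hb m A hP i

lemma Vop_eqMod (hb : b 0 = 0) {m : ℕ} (hm : 2 ≤ m) (A : ℝ) {P : Fin n → (Fin (n + 1) → ℝ) → ℝ}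
    (hP : ∀ i, AnalyticAt ℝ (P i) b) (k : Fin (n + 1)) :
    EqMod b (Vop m A P k) ((fun _ y => Nv P y k) * pop m A) := by
  refine Fin.cases ?_ (fun i => ?_) k
  · have := EqMod.refl (GoodOp.pop hb m A)
    convert! this using 1
    funext w y
    simp [Nv]
  · refine ⟨(GoodOp.coef (hP i).neg).mul (GoodOp.pop hb m A),
      (fun _ y => y 0) ^ (m - 2) * Dop i.succ,
      ((GoodOp.coord b 0).pow _).mul (GoodOp.D hb i.succ), fun w hw => Eventually.of_forall fun y => ?_⟩
    obtain ⟨k, rfl⟩ := Nat.exists_eq_add_of_le hm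
    simp [Vop, Nv, qop]
    ring

lemma pop_pow_eqMod (hb : b 0 = 0) (m : ℕ) (A : ℝ) (k : ℕ) :
    EqMod b (pop m A ^ (k + 1)) (fun w y => A ^ (k + 1) + (k + 1) * A ^ k * (y 0 * zop m w y)) := by
  have hz := (GoodOp.coord b 0).mul (GoodOp.zop hb m)
  have hg : ∀ k : ℕ, GoodOp b (fun w y => A ^ (k + 1) + (k + 1) * A ^ k * (y 0 * zop m w y)) :=
    fun k => (GoodOp.const b _).add ((GoodOp.const b _).mul hz)
  induction k with
  | zero =>
    refine EqMod.of_eq (hg 0) fun w hw => Eventually.of_forall fun y => ?_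
    simp [pop]
  | succ k ih =>
    rw [pow_succ]
    refine (ih.mul (EqMod.refl (GoodOp.pop hb m A))).trans ⟨hg _,
      (fun _ _ => (k + 1) * A ^ k) * (zop m * zop m), (GoodOp.const b _).mul
      ((GoodOp.zop hb m).mul (GoodOp.zop hb m)), fun w hw => Eventually.of_forall fun y => ?_⟩
    simp [pop]
    ring

/-- the sum over multi-indices -/
noncomputable def Sop (m : ℕ) (A : ℝ) (P : Fin n → (Fin (n + 1) → ℝ) → ℝ) (l : ℕ)
    (cf : (Fin l → Fin (n + 1)) → (Fin (n + 1) → ℝ) → ℝ) : Op n :=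
  ∑ μ, (fun _ => cf μ) * ∏ k, Vop m A P (μ k)

/-- the leading coefficient -/
noncomputable def Tc (P : Fin n → (Fin (n + 1) → ℝ) → ℝ) (l : ℕ)
    (cf : (Fin l → Fin (n + 1)) → (Fin (n + 1) → ℝ) → ℝ) (y : Fin (n + 1) → ℝ) : ℝ :=
  ∑ μ, cf μ y * ∏ k, Nv P y (μ k)

lemma GoodOp.Sop (hb : b 0 = 0) (m : ℕ) (A : ℝ) {P : Fin n → (Fin (n + 1) → ℝ) → ℝ}
    (hP : ∀ i, AnalyticAt ℝ (P i) b) (l : ℕ)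
    {cf : (Fin l → Fin (n + 1)) → (Fin (n + 1) → ℝ) → ℝ} (hcf : ∀ μ, AnalyticAt ℝ (cf μ) b) :
    GoodOp b (Sop m A P l cf) :=
  GoodOp.sum _ fun μ _ => (GoodOp.coef (hcf μ)).mul (GoodOp.prod _ fun _ _ => GoodOp.Vop hb m A hP _)

lemma Nv_analytic {P : Fin n → (Fin (n + 1) → ℝ) → ℝ}
    (hP : ∀ i, AnalyticAt ℝ (P i) b) (k : Fin (n + 1)) : AnalyticAt ℝ (fun y => Nv P y k) b := by
  refine Fin.cases ?_ (fun i => ?_) k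
  · exact analyticAt_const (v := (1 : ℝ))
  · exact (hP i).neg

lemma Tc_analytic {P : Fin n → (Fin (n + 1) → ℝ) → ℝ}
    (hP : ∀ i, AnalyticAt ℝ (P i) b) (l : ℕ)
    {cf : (Fin l → Fin (n + 1)) → (Fin (n + 1) → ℝ) → ℝ} (hcf : ∀ μ, AnalyticAt ℝ (cf μ) b) :
    AnalyticAt ℝ (Tc P l cf) b := by
  have h : ∀ μ : Fin l → Fin (n + 1), AnalyticAt ℝ (fun y => cf μ y * ∏ k, Nv P y (μ k)) b :=
    fun μ => (hcf μ).mul (Finset.analyticAt_fun_prod _ fun k _ => Nv_analytic hP (μ k))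
  exact Finset.analyticAt_fun_sum _ fun μ _ => h μ

lemma Sop_eqMod (hb : b 0 = 0) {m : ℕ} (hm : 2 ≤ m) (A : ℝ)
    {P : Fin n → (Fin (n + 1) → ℝ) → ℝ}
    (hP : ∀ i, AnalyticAt ℝ (P i) b) (l : ℕ)
    {cf cf0 ck : (Fin l → Fin (n + 1)) → (Fin (n + 1) → ℝ) → ℝ}
    (hcf0 : ∀ μ, AnalyticAt ℝ (cf0 μ) b) (hck : ∀ μ, AnalyticAt ℝ (ck μ) b)
    (hc : ∀ μ, ∀ᶠ y in 𝓝 b, cf μ y = cf0 μ y + y 0 ^ 2 * ck μ y) :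
    EqMod b (Sop m A P l cf) ((fun _ => Tc P l cf0) * pop m A ^ l) := by
  refine (EqMod.sum (G' := fun μ => (fun _ => cf0 μ) * ∏ k, ((fun _ y => Nv P y (μ k)) * pop m A))
    Finset.univ fun μ _ => EqMod.mul ?_ (EqMod.prod _ fun k _ => Vop_eqMod hb hm A hP (μ k))).trans
    (EqMod.of_eq ((GoodOp.coef (Tc_analytic hP l hcf0)).mul ((GoodOp.pop hb m A).pow l))
      fun w hw => Eventually.of_forall fun y => ?_)
  · exact ⟨GoodOp.coef (hcf0 μ), fun _ => ck μ, GoodOp.coef (hck μ), fun w hw => hc μ⟩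
  · simp only [Finset.sum_apply, Pi.mul_apply, Finset.prod_apply, Pi.pow_apply, Tc,
      Finset.prod_mul_distrib, Finset.prod_const, Finset.card_univ, Fintype.card_fin, Finset.sum_mul]
    refine Finset.sum_congr rfl fun μ _ => by ring

lemma RE_eqMod (hb : b 0 = 0) {m : ℕ} (hm : 2 ≤ m) {A : ℝ} (hA : A ≠ 0)
    {P : Fin n → (Fin (n + 1) → ℝ) → ℝ}
    (hP : ∀ i, AnalyticAt ℝ (P i) b)
    {cf cf0 ck : (l : ℕ) → (Fin l → Fin (n + 1)) → (Fin (n + 1) → ℝ) → ℝ}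
    (hcf : ∀ l ≤ m + 1, ∀ μ, AnalyticAt ℝ (cf l μ) b)
    (hcf0 : ∀ l ≤ m + 1, ∀ μ, AnalyticAt ℝ (cf0 l μ) b)
    (hck : ∀ l ≤ m + 1, ∀ μ, AnalyticAt ℝ (ck l μ) b)
    (hc : ∀ l ≤ m + 1, ∀ μ, ∀ᶠ y in 𝓝 b, cf l μ y = cf0 l μ y + y 0 ^ 2 * ck l μ y)
    (h1 : ∀ᶠ y in 𝓝 b, Tc P m (cf0 m) y = 0)
    (h2 : ∀ᶠ y in 𝓝 b, Tc P (m + 1) (cf0 (m + 1)) y * (m * A ^ m) = -(1 - ∑ i, P i y ^ 2)) :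
    EqMod b (RE' m A P cf)
      (fun w y => -((1 - ∑ i, P i y ^ 2) / m) * (A + (m + 1) * (y 0 * zop m w y))) := by
  have hβ : AnalyticAt ℝ (fun y => -((1 - ∑ i, P i y ^ 2) / m)) b := by
    have h3 : AnalyticAt ℝ (fun y => ∑ i, P i y ^ 2) b :=
      Finset.analyticAt_fun_sum _ fun i _ => (hP i).pow 2
    exact ((analyticAt_const.sub h3).div_const).neg
  have hm0 : (m : ℝ) ≠ 0 := by positivity
  have hz := (GoodOp.coord b 0).mul (GoodOp.zop hb m)
  have hgood : GoodOp b (fun w y => -((1 - ∑ i, P i y ^ 2) / m) * (A + (m + 1) * (y 0 * zop m w y))) :=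
    (GoodOp.coef hβ).mul ((GoodOp.const b A).add ((GoodOp.const b (m + 1)).mul hz))
  have hsplit : RE' m A P cf = ∑ l ∈ Finset.range m, (fun _ y => y 0) ^ (m + 1 - l) * Sop m A P l (cf l)
      + (fun _ y => y 0) * Sop m A P m (cf m) + Sop m A P (m + 1) (cf (m + 1)) := by
    funext w y
    simp only [RE', Finset.sum_range_succ, Sop, Pi.add_apply, Finset.sum_apply, Pi.mul_apply,
      Finset.prod_apply, Pi.pow_apply]
    have e1 : m + 1 - m = 1 := by omega
    have e2 : m + 1 - (m + 1) = 0 := by omega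
    simp [e1, e2]
  rw [hsplit]
  have t1 : EqMod b (∑ l ∈ Finset.range m, (fun _ y => y 0) ^ (m + 1 - l) * Sop m A P l (cf l)) 0 := by
    have := EqMod.sum (b := b) (G := fun l => (fun _ y => y 0) ^ (m + 1 - l) * Sop m A P l (cf l))
      (G' := fun _ => 0) (Finset.range m) (fun l hl => by
        have hl' := Finset.mem_range.1 hl
        refine EqMod.of_sq (K := (fun _ y => y 0) ^ (m - 1 - l) * Sop m A P l (cf l))
          (((GoodOp.coord b 0).pow _).mul (GoodOp.Sop hb m A hP l (hcf l (by omega))))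
          fun w hw => Eventually.of_forall fun y => ?_
        have e : m + 1 - l = 2 + (m - 1 - l) := by omega
        rw [e]
        simp [pow_add]; ring)
    simpa using this
  have t2 : EqMod b ((fun _ y => y 0) * Sop m A P m (cf m)) 0 := by
    refine ((EqMod.refl (GoodOp.coord b 0)).mul (Sop_eqMod hb hm A hP m (hcf0 m (by omega))
      (hck m (by omega)) (hc m (by omega)))).trans (EqMod.of_eq (goodRing b).zero_mem
        fun w hw => ?_)
    filter_upwards [h1] with y hy
    simp [hy]
  have t3 : EqMod b (Sop m A P (m + 1) (cf (m + 1)))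
      (fun w y => -((1 - ∑ i, P i y ^ 2) / m) * (A + (m + 1) * (y 0 * zop m w y))) := by
    refine (Sop_eqMod hb hm A hP (m + 1) (hcf0 _ le_rfl)
      (hck _ le_rfl) (hc _ le_rfl)).trans (((EqMod.refl (GoodOp.coef
        (Tc_analytic hP _ (hcf0 _ le_rfl)))).mul (pop_pow_eqMod hb m A m)).trans
        (EqMod.of_eq hgood fun w hw => ?_))
    filter_upwards [h2] with y hy
    simp only [Pi.mul_apply]
    have e3 : Tc P (m + 1) (cf0 (m + 1)) y = -(1 - ∑ i, P i y ^ 2) / (m * A ^ m) := by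
      rw [← hy]; field_simp
    rw [e3]
    field_simp
    ring
  have := (t1.add t2).add t3
  simpa using this

lemma LE_eqMod (hb : b 0 = 0) {m : ℕ} (hm : 2 ≤ m) (A : ℝ)
    {P PP : Fin n → (Fin (n + 1) → ℝ) → ℝ}
    (hP : ∀ i, AnalyticAt ℝ (P i) b) (hPP : ∀ i, AnalyticAt ℝ (PP i) b)
    (hP0 : ∀ i, ∀ᶠ y in 𝓝 b, pdv 0 (P i) y = 0)
    (hP1 : ∀ i, ∀ᶠ y in 𝓝 b, pdv i.succ (P i) y = PP i y) :
    EqMod b (LE' m A P)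
      (fun w y => ((1 - ∑ i, P i y ^ 2) / m) *
        (-A + y 0 * ((Dop 0 (Dop 0 w) y + m * Dop 0 w y) / m))) := by
  have hm0 : (m : ℝ) ≠ 0 := by positivity
  have hβ : AnalyticAt ℝ (fun y => ((1 - ∑ i, P i y ^ 2) / m)) b := by
    have h3 : AnalyticAt ℝ (fun y => ∑ i, P i y ^ 2) b :=
      Finset.analyticAt_fun_sum _ fun i _ => (hP i).pow 2
    exact ((analyticAt_const.sub h3).div_const)
  have hdz : GoodOp b (fun w y => (Dop 0 (Dop 0 w) y + m * Dop 0 w y) / m) := by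
    have h := (GoodOp.const b (1 / m)).mul ((GoodOp.DD hb 0 0).add
      ((GoodOp.const b m).mul (GoodOp.D hb 0)))
    convert! h using 1
    funext w y
    simp; ring
  have hgood : GoodOp b (fun w y => ((1 - ∑ i, P i y ^ 2) / m) *
        (-A + y 0 * ((Dop 0 (Dop 0 w) y + m * Dop 0 w y) / m))) :=
    (GoodOp.coef hβ).mul ((GoodOp.const b (-A)).add ((GoodOp.coord b 0).mul hdz))
  refine ⟨hgood, (fun _ y => y 0) ^ (m - 2) * ∑ i : Fin n,
    ((fun _ => P i) * (fun _ _ => (1 / m : ℝ)) *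
        ((fun _ _ => (m - 1 : ℝ)) * Dop i.succ + fun w => Dop 0 (Dop i.succ w))
      + (fun _ => PP i) * pop m A
      + (fun _ => P i) * ((fun _ _ => (1 / m : ℝ)) * ((fun w => Dop i.succ (Dop 0 w)) +
          (fun _ _ => (m : ℝ)) * Dop i.succ))
      + - ((fun _ y => y 0) ^ (m - 1) * fun w => Dop i.succ (Dop i.succ w))), ?_, ?_⟩
  · refine ((GoodOp.coord b 0).pow _).mul (GoodOp.sum _ fun i _ => ?_)
    refine (((((GoodOp.coef (hP i)).mul (GoodOp.const b _)).mul (((GoodOp.const b _).mul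
      (GoodOp.D hb _)).add (GoodOp.DD hb _ _))).add ((GoodOp.coef (hPP i)).mul
      (GoodOp.pop hb m A))).add ((GoodOp.coef (hP i)).mul ((GoodOp.const b _).mul
      ((GoodOp.DD hb _ _).add ((GoodOp.const b _).mul (GoodOp.D hb _)))))).add ?_
    exact (((GoodOp.coord b 0).pow _).mul (GoodOp.DD hb _ _)).neg
  intro w hw
  filter_upwards [hw.eventually_analyticAt, eventually_all.2 fun i => (hP i).eventually_analyticAt,
    eventually_all.2 hP0, eventually_all.2 hP1] with y hwy hPy hP0y hP1y
  have az : AnalyticAt ℝ (zop m w) y :=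
    ((hwy.Dop 0).add (analyticAt_const.mul hwy)).div_const
  have ac := analyticAt_coord (0 : Fin (n + 1)) y
  have ap : AnalyticAt ℝ (pop m A w) y := analyticAt_const.add (ac.mul az)
  have ez : ∀ μ, pdv μ (zop m w) y = (pdv μ (Dop 0 w) y + m * pdv μ w y) / m := by
    intro μ
    have : zop m w = fun y => (1 / (m : ℝ)) * (Dop 0 w y + m * w y) := by
      funext y; simp [zop]; ring
    have a1 : AnalyticAt ℝ (fun y => (m : ℝ) * w y) y := analyticAt_const.fun_mul hwy
    rw [this, pdv_const_mul _ _ ((hwy.Dop 0).fun_add a1),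
      pdv_add _ (hwy.Dop 0) a1, pdv_const_mul _ _ hwy]
    ring
  have ep : ∀ μ, pdv μ (pop m A w) y = (if (0 : Fin (n + 1)) = μ then 1 else 0) * zop m w y +
      y 0 * ((pdv μ (Dop 0 w) y + m * pdv μ w y) / m) := by
    intro μ
    have : pop m A w = fun y => A + y 0 * zop m w y := rfl
    rw [this, pdv_add _ analyticAt_const (ac.fun_mul az), pdv_const, pdv_mul _ ac az, pdv_coord, ez]
    ring
  have eq : ∀ i μ, pdv μ (qop m A P i w) y =
      - (pdv μ (P i) y * pop m A w y + P i y * pdv μ (pop m A w) y) +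
      ((if (0 : Fin (n + 1)) = μ then m * y 0 ^ (m - 1) else 0) * Dop i.succ w y
        + y 0 ^ m * pdv μ (Dop i.succ w) y) := by
    intro i μ
    have : qop m A P i w = fun y => (-1) * (P i y * pop m A w y) + y 0 ^ m * Dop i.succ w y := by
      funext y; simp only [qop]; ring
    have aq := (ac.fun_pow m).fun_mul (hwy.Dop i.succ)
    have aq2 := (hPy i).fun_mul ap
    have aq3 : AnalyticAt ℝ (fun y => (-1) * (P i y * pop m A w y)) y :=
      analyticAt_const.fun_mul aq2
    rw [this, pdv_add _ aq3 aq,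
      pdv_const_mul _ _ aq2, pdv_mul _ (hPy i) ap, pdv_mul _ (ac.fun_pow m) (hwy.Dop i.succ),
      pdv_coord_pow]
    ring
  have hi : ∀ i : Fin n, (P i y * ((1 / m) * (Dop 0 (qop m A P i w) y - qop m A P i w y))
      - y 0 ^ m * pdv i.succ (qop m A P i w) y) =
      - (P i y ^ 2) * ((1 / m) * (Dop 0 (pop m A w) y - pop m A w y)) +
      y 0 ^ 2 * (y 0 ^ (m - 2) * (P i y * (1 / m) * ((m - 1) * Dop i.succ w y +
        Dop 0 (Dop i.succ w) y) + PP i y * pop m A w y + P i y * ((1 / m) *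
        (Dop i.succ (Dop 0 w) y + m * Dop i.succ w y)) +
        - (y 0 ^ (m - 1) * Dop i.succ (Dop i.succ w) y))) := by
    intro i
    have e0 : (0 : Fin (n + 1)) ≠ i.succ := (Fin.succ_ne_zero i).symm
    rw [eq i i.succ, hP1y, ep i.succ, if_neg e0]
    simp only [Dop]
    have eq0 := eq i 0
    rw [if_pos rfl, hP0y] at eq0
    rw [eq0]
    simp only [qop, Dop, if_neg e0]
    obtain ⟨k, rfl⟩ := Nat.exists_eq_add_of_le hm
    have k1 : 2 + k - 1 = k + 1 := by omega
    have k2 : 2 + k - 2 = k := by omega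
    rw [k1, k2]
    field_simp
    ring
  simp only [LE', hi, Finset.sum_add_distrib, Pi.mul_apply, Finset.sum_apply, Pi.add_apply,
    Pi.neg_apply, Pi.pow_apply]
  rw [← Finset.sum_mul, Finset.sum_neg_distrib, ← Finset.mul_sum, ← Finset.mul_sum]
  have ed : Dop 0 (pop m A w) y - pop m A w y = -A + y 0 * ((Dop 0 (Dop 0 w) y + m * Dop 0 w y) / m) := by
    have := ep 0
    rw [if_pos rfl] at this
    simp only [Dop] at this ⊢
    rw [this]
    simp only [pop, zop]
    ring
  rw [ed]
  simp only [Finset.sum_add_distrib]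
  ring

/-- Theorem A -/
theorem reduced (hb : b 0 = 0) {m : ℕ} (hm : 2 ≤ m) {A : ℝ} (hA : A ≠ 0)
    {P PP : Fin n → (Fin (n + 1) → ℝ) → ℝ}
    (hP : ∀ i, AnalyticAt ℝ (P i) b) (hPP : ∀ i, AnalyticAt ℝ (PP i) b)
    (hP0 : ∀ i, ∀ᶠ y in 𝓝 b, pdv 0 (P i) y = 0)
    (hP1 : ∀ i, ∀ᶠ y in 𝓝 b, pdv i.succ (P i) y = PP i y)
    {cf cf0 ck : (l : ℕ) → (Fin l → Fin (n + 1)) → (Fin (n + 1) → ℝ) → ℝ}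
    (hcf : ∀ l ≤ m + 1, ∀ μ, AnalyticAt ℝ (cf l μ) b)
    (hcf0 : ∀ l ≤ m + 1, ∀ μ, AnalyticAt ℝ (cf0 l μ) b)
    (hck : ∀ l ≤ m + 1, ∀ μ, AnalyticAt ℝ (ck l μ) b)
    (hc : ∀ l ≤ m + 1, ∀ μ, ∀ᶠ y in 𝓝 b, cf l μ y = cf0 l μ y + y 0 ^ 2 * ck l μ y)
    (h0 : 1 - ∑ i, P i b ^ 2 ≠ 0)
    (h1 : ∀ᶠ y in 𝓝 b, Tc P m (cf0 m) y = 0)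
    (h2 : ∀ᶠ y in 𝓝 b, Tc P (m + 1) (cf0 (m + 1)) y * (m * A ^ m) = -(1 - ∑ i, P i y ^ 2)) :
    ∃ H : Op n, GoodOp b H ∧ ∃ γ : (Fin (n + 1) → ℝ) → ℝ, (∀ᶠ y in 𝓝 b, γ y ≠ 0) ∧
      ∀ w, AnalyticAt ℝ w b → ∀ᶠ y in 𝓝 b, LE' m A P w y - RE' m A P cf w y =
        γ y * (y 0 * (Qop m w y - y 0 * H w y)) := by
  obtain ⟨-, K, hK, e⟩ := (LE_eqMod hb hm A hP hPP hP0 hP1).add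
    (RE_eqMod hb hm hA hP hcf hcf0 hck hc h1 h2).neg
  have hm0 : (m : ℝ) ≠ 0 := by positivity
  have hβ : AnalyticAt ℝ (fun y => 1 - ∑ i, P i y ^ 2) b := by
    have h3 : AnalyticAt ℝ (fun y => ∑ i, P i y ^ 2) b :=
      Finset.analyticAt_fun_sum _ fun i _ => (hP i).pow 2
    exact analyticAt_const.sub h3
  have hβi := hβ.inv h0
  have hne := hβ.continuousAt.eventually_ne h0
  refine ⟨(fun _ _ => -(m : ℝ) ^ 2) * (fun _ y => (1 - ∑ i, P i y ^ 2)⁻¹) * K,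
    ((GoodOp.const b _).mul (GoodOp.coef hβi)).mul hK,
    fun y => (1 - ∑ i, P i y ^ 2) / (m : ℝ) ^ 2, ?_, fun w hw => ?_⟩
  · filter_upwards [hne] with y hy
    exact div_ne_zero hy (pow_ne_zero _ hm0)
  · filter_upwards [e w hw, hne] with y hy hny
    simp only [Pi.add_apply, Pi.neg_apply] at hy
    rw [sub_eq_add_neg, hy]
    simp only [Pi.mul_apply, Qop, zop]
    field_simp
    ring

end Reduced

section Split
open Topology MvPowerSeries
variable {n : ℕ}

/-- drop the first coordinate -/
abbrev tl (y : Fin (n + 1) → ℝ) : Fin n → ℝ := fun i => y i.succ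

/-- the point `(s, x)` -/
abbrev pt (s : ℝ) (x : Fin n → ℝ) : Fin (n + 1) → ℝ := Fin.cons s x

lemma tl_pt (s : ℝ) (x : Fin n → ℝ) : tl (pt s x) = x := by
  funext i; simp [tl, pt]

lemma pt_tl (y : Fin (n + 1) → ℝ) : pt (y 0) (tl y) = y := by
  funext i
  refine Fin.cases ?_ (fun i => ?_) i <;> simp [pt, tl]

lemma mon_pt (s t : ℝ) (x : Fin n → ℝ) (β : Fin (n + 1) →₀ ℕ) (h : β 0 = 0) :
    mon (pt s x) β = mon (pt t x) β := by
  simp [mon, Fin.prod_univ_succ, h, pt]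

/-- division with remainder by the first coordinate for analytic functions -/
lemma analytic_split {b : Fin (n + 1) → ℝ} (hb : b 0 = 0) {g : (Fin (n + 1) → ℝ) → ℝ}
    (hg : AnalyticAt ℝ g b) :
    ∃ g1, AnalyticAt ℝ g1 b ∧ ∀ᶠ y in 𝓝 b, g y = g (pt 0 (tl y)) + y 0 * g1 y := by
  obtain ⟨f, hf⟩ := exists_PSRep hg
  set f1 : MvPowerSeries (Fin (n + 1)) ℝ := fun β => coeff (β + ee 0) f with hf1
  have hc1 : ∀ β, coeff β f1 = coeff (β + ee 0) f := fun β => rfl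
  obtain ⟨ρ, h0, hs, -⟩ := id hf
  have hs1 : Summable fun β : Fin (n + 1) →₀ ℕ => |coeff β f1| * ρ ^ β.degree := by
    have hinj : Function.Injective (fun γ : Fin (n + 1) →₀ ℕ => γ + ee 0) := add_left_injective _
    refine ((hs.comp_injective hinj).mul_left ρ⁻¹).congr fun β => ?_
    simp only [Function.comp, hc1, map_add, ee, Finsupp.degree_single, pow_succ]
    field_simp
  have hr1 : PSRep b f1 (fun y => ∑' β, coeff β f1 * mon (y - b) β) := by
    refine ⟨ρ, h0, hs1, fun y hy => ?_⟩
    simp only [add_sub_cancel_left]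
    refine Summable.hasSum (Summable.of_norm_bounded hs1 fun β => ?_)
    rw [norm_mul]
    gcongr
    · exact le_rfl
    · exact abs_mon_le hy β
  set g1 : (Fin (n + 1) → ℝ) → ℝ := fun y => ∑' β, coeff β f1 * mon (y - b) β with hg1
  have hr0 := hf.add ((PSRep.X 0).mul hr1).neg
  have hcoef : ∀ β : Fin (n + 1) →₀ ℕ, β 0 ≠ 0 → coeff β (f + -(MvPowerSeries.X 0 * f1)) = 0 := by
    intro β hβ
    rw [map_add, map_neg]
    have : coeff β (MvPowerSeries.X 0 * f1) = coeff β f := by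
      conv_lhs => rw [← eq_add_ee hβ]
      rw [coeff_X0_mul, hc1, eq_add_ee hβ]
    rw [this]; ring
  refine ⟨g1, hr1.analyticAt, ?_⟩
  obtain ⟨ρ', h0', -, hh⟩ := hr0
  filter_upwards [Metric.ball_mem_nhds b h0'] with y hy
  rw [mem_ball_iff_norm] at hy
  have k1 := hh (y - b) hy.le
  have hy2 : ‖pt 0 (tl y) - b‖ ≤ ρ' := by
    rw [pi_norm_le_iff_of_nonneg h0'.le]
    intro i
    refine Fin.cases ?_ (fun i => ?_) i
    · simp [hb, pt, h0'.le]
    · have := norm_le_pi_norm (y - b) i.succ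
      simp only [pt, tl, Pi.sub_apply, Fin.cons_succ] at this ⊢
      exact this.trans hy.le
  have k2 := hh (pt 0 (tl y) - b) hy2
  have e : ∀ β, coeff β (f + -(MvPowerSeries.X 0 * f1)) * mon (y - b) β =
      coeff β (f + -(MvPowerSeries.X 0 * f1)) * mon (pt 0 (tl y) - b) β := by
    intro β
    by_cases hβ : β 0 = 0
    · have e1 : y - b = pt (y 0) (tl (y - b)) := by
        rw [← pt_tl (y - b)]; simp [hb, tl_pt]
      have e2 : pt 0 (tl y) - b = pt 0 (tl (y - b)) := by
        rw [← pt_tl (pt 0 (tl y) - b)]; simp [hb, pt, tl]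
        rfl
      rw [e1, e2, mon_pt (y 0) 0 _ β hβ]
    · rw [hcoef β hβ]; simp
  simp only [e] at k1
  have k3 := k1.unique k2
  simp [hb] at k3
  linarith

end Split

section Glue
open Topology
variable {n : ℕ}

lemma glue (X : Set (Fin n → ℝ)) (hX : IsOpen X)
    (E : ((Fin (n + 1) → ℝ) → ℝ) → (Fin (n + 1) → ℝ) → Prop)
    (hE : ∀ w w' y, w =ᶠ[𝓝 y] w' → E w y → E w' y)
    (hex : ∀ x ∈ X, ∃ w, AnalyticAt ℝ w (pt 0 x) ∧ ∀ᶠ y in 𝓝 (pt 0 x), E w y)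
    (hun : ∀ x ∈ X, ∀ w w', AnalyticAt ℝ w (pt 0 x) → AnalyticAt ℝ w' (pt 0 x) →
      (∀ᶠ y in 𝓝 (pt 0 x), E w y) → (∀ᶠ y in 𝓝 (pt 0 x), E w' y) → w =ᶠ[𝓝 (pt 0 x)] w') :
    ∃ W : Set (Fin (n + 1) → ℝ), IsOpen W ∧ (∀ x ∈ X, pt 0 x ∈ W) ∧ (∀ y ∈ W, tl y ∈ X) ∧
      ∃ w, AnalyticOnNhd ℝ w W ∧ ∀ y ∈ W, E w y := by
  have hloc : ∀ x ∈ X, ∃ w : (Fin (n + 1) → ℝ) → ℝ, ∃ ε : ℝ, 0 < ε ∧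
      ∀ y ∈ Metric.ball (pt 0 x) ε, AnalyticAt ℝ w y ∧ E w y ∧ tl y ∈ X := by
    intro x hx
    obtain ⟨w, hw, hEw⟩ := hex x hx
    have hc : Continuous (tl : (Fin (n + 1) → ℝ) → (Fin n → ℝ)) := by unfold tl; fun_prop
    have h3 : ∀ᶠ y in 𝓝 (pt 0 x), tl y ∈ X :=
      hc.continuousAt.eventually (hX.mem_nhds (by rw [tl_pt]; exact hx))
    obtain ⟨ε, he, hh⟩ := Metric.eventually_nhds_iff_ball.1 (hw.eventually_analyticAt.and (hEw.and h3))
    exact ⟨w, ε, he, hh⟩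
  choose! w ε hε hball using hloc
  have hcons : ∀ x ∈ X, ∀ x' ∈ X, ∀ y ∈ Metric.ball (pt 0 x) (ε x),
      y ∈ Metric.ball (pt 0 x') (ε x') → w x y = w x' y := by
    intro x hx x' hx' y hy hy'
    set B := Metric.ball (pt 0 x) (ε x) ∩ Metric.ball (pt 0 x') (ε x') with hB
    have hBo : IsOpen B := Metric.isOpen_ball.inter Metric.isOpen_ball
    have hBc : IsPreconnected B :=
      ((convex_ball _ _).inter (convex_ball _ _)).isPreconnected
    have hproj : ∀ x : Fin n → ℝ, ∀ ε : ℝ, y ∈ Metric.ball (pt 0 x) ε →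
        pt 0 (tl y) ∈ Metric.ball (pt 0 x) ε := by
      intro x ε hy
      rw [mem_ball_iff_norm] at hy ⊢
      refine lt_of_le_of_lt ?_ hy
      rw [pi_norm_le_iff_of_nonneg (norm_nonneg _)]
      intro i
      refine Fin.cases ?_ (fun i => ?_) i
      · simp [pt]
      · have := norm_le_pi_norm (y - pt 0 x) i.succ
        simpa [pt, tl] using this
    have hz : pt 0 (tl y) ∈ B := ⟨hproj _ _ hy, hproj _ _ hy'⟩
    have hty : tl y ∈ X := (hball x hx y hy).2.2
    have heq := hun (tl y) hty (w x) (w x') (hball x hx _ hz.1).1 (hball x' hx' _ hz.2).1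
      (by filter_upwards [hBo.mem_nhds hz] with v hv using (hball x hx v hv.1).2.1)
      (by filter_upwards [hBo.mem_nhds hz] with v hv using (hball x' hx' v hv.2).2.1)
    exact AnalyticOnNhd.eqOn_of_preconnected_of_eventuallyEq (fun v hv => (hball x hx v hv.1).1)
      (fun v hv => (hball x' hx' v hv.2).1) hBc hz heq ⟨hy, hy'⟩
  classical
  set W : Set (Fin (n + 1) → ℝ) := ⋃ x ∈ X, Metric.ball (pt 0 x) (ε x) with hW
  have hmem : ∀ y ∈ W, ∃ x, x ∈ X ∧ y ∈ Metric.ball (pt 0 x) (ε x) := by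
    intro y hy
    simpa [hW] using hy
  choose! ch hch1 hch2 using hmem
  have hin : ∀ x ∈ X, ∀ y ∈ Metric.ball (pt 0 x) (ε x), y ∈ W := by
    intro x hx y hy
    rw [hW]
    exact Set.mem_biUnion hx hy
  have hgerm : ∀ y ∈ W, (fun v => w (ch v) v) =ᶠ[𝓝 y] w (ch y) := by
    intro y hy
    filter_upwards [Metric.isOpen_ball.mem_nhds (hch2 y hy)] with v hv
    have hvW := hin _ (hch1 y hy) v hv
    exact hcons _ (hch1 v hvW) _ (hch1 y hy) v (hch2 v hvW) hv
  refine ⟨W, isOpen_biUnion fun _ _ => Metric.isOpen_ball,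
    fun x hx => hin x hx _ (Metric.mem_ball_self (hε x hx)),
    fun y hy => (hball _ (hch1 y hy) y (hch2 y hy)).2.2, fun v => w (ch v) v, fun y hy => ?_,
    fun y hy => ?_⟩
  · exact (hball _ (hch1 y hy) y (hch2 y hy)).1.congr (hgerm y hy).symm
  · exact hE _ _ y (hgerm y hy).symm (hball _ (hch1 y hy) y (hch2 y hy)).2.1

end Glue

section Local
open Topology
variable {n : ℕ}

lemma pdv_congr {μ : Fin (n + 1)} {w w' : (Fin (n + 1) → ℝ) → ℝ} {y : Fin (n + 1) → ℝ}
    (h : w =ᶠ[𝓝 y] w') : pdv μ w =ᶠ[𝓝 y] pdv μ w' := by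
  filter_upwards [h.fderiv (𝕜 := ℝ)] with v hv
  simp [pdv, hv]

lemma Dop_congr {μ : Fin (n + 1)} {w w' : (Fin (n + 1) → ℝ) → ℝ} {y : Fin (n + 1) → ℝ}
    (h : w =ᶠ[𝓝 y] w') : Dop μ w =ᶠ[𝓝 y] Dop μ w' := by
  filter_upwards [pdv_congr (μ := μ) h] with v hv
  simp [Dop, hv]

lemma pop_congr (m : ℕ) (A : ℝ) {w w' : (Fin (n + 1) → ℝ) → ℝ} {y : Fin (n + 1) → ℝ}
    (h : w =ᶠ[𝓝 y] w') : pop m A w =ᶠ[𝓝 y] pop m A w' := by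
  filter_upwards [Dop_congr (μ := 0) h, h] with v hv hv'
  simp [pop, zop, hv, hv']

lemma qop_congr (m : ℕ) (A : ℝ) (P : Fin n → (Fin (n + 1) → ℝ) → ℝ) (i : Fin n)
    {w w' : (Fin (n + 1) → ℝ) → ℝ} {y : Fin (n + 1) → ℝ}
    (h : w =ᶠ[𝓝 y] w') : qop m A P i w =ᶠ[𝓝 y] qop m A P i w' := by
  filter_upwards [Dop_congr (μ := i.succ) h, pop_congr m A h] with v hv hv'
  simp [qop, hv, hv']

lemma LE_congr (m : ℕ) (A : ℝ) (P : Fin n → (Fin (n + 1) → ℝ) → ℝ)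
    {w w' : (Fin (n + 1) → ℝ) → ℝ} {y : Fin (n + 1) → ℝ}
    (h : w =ᶠ[𝓝 y] w') : LE' m A P w y = LE' m A P w' y := by
  simp only [LE']
  rw [(Dop_congr (μ := 0) (pop_congr m A h)).self_of_nhds, (pop_congr m A h).self_of_nhds]
  congr 1
  refine Finset.sum_congr rfl fun i _ => ?_
  rw [(Dop_congr (μ := 0) (qop_congr m A P i h)).self_of_nhds,
    (qop_congr m A P i h).self_of_nhds, (pdv_congr (μ := i.succ) (qop_congr m A P i h)).self_of_nhds]

lemma RE_congr (m : ℕ) (A : ℝ) (P : Fin n → (Fin (n + 1) → ℝ) → ℝ)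
    (cf : (l : ℕ) → (Fin l → Fin (n + 1)) → (Fin (n + 1) → ℝ) → ℝ)
    {w w' : (Fin (n + 1) → ℝ) → ℝ} {y : Fin (n + 1) → ℝ}
    (h : w =ᶠ[𝓝 y] w') : RE' m A P cf w y = RE' m A P cf w' y := by
  have hV : ∀ k, Vop m A P k w y = Vop m A P k w' y := by
    intro k
    refine Fin.cases ?_ (fun i => ?_) k
    · exact (pop_congr m A h).self_of_nhds
    · exact (qop_congr m A P i h).self_of_nhds
  simp only [RE', hV]

end Local

section Concrete
open Topology
variable {n : ℕ}

lemma analyticAt_tl (y : Fin (n + 1) → ℝ) : AnalyticAt ℝ (tl : (Fin (n + 1) → ℝ) → Fin n → ℝ) y :=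
  analyticAt_pi_iff.2 fun i => analyticAt_coord i.succ y

lemma hasFDerivAt_tl (y : Fin (n + 1) → ℝ) :
    HasFDerivAt (tl : (Fin (n + 1) → ℝ) → Fin n → ℝ)
      (ContinuousLinearMap.pi fun i : Fin n =>
        ContinuousLinearMap.proj (R := ℝ) (φ := fun _ : Fin (n + 1) => ℝ) i.succ) y :=
  (ContinuousLinearMap.pi fun i : Fin n =>
        ContinuousLinearMap.proj (R := ℝ) (φ := fun _ : Fin (n + 1) => ℝ) i.succ).hasFDerivAt

lemma pdv_tl_zero {g : (Fin n → ℝ) → ℝ} {y : Fin (n + 1) → ℝ} (hg : AnalyticAt ℝ g (tl y)) :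
    pdv 0 (fun y => g (tl y)) y = 0 := by
  have h := (hg.differentiableAt.hasFDerivAt.comp y (hasFDerivAt_tl y)).fderiv
  unfold pdv
  erw [h]
  simp only [ContinuousLinearMap.comp_apply]
  have h0 : (ContinuousLinearMap.pi fun i : Fin n =>
        ContinuousLinearMap.proj (R := ℝ) (φ := fun _ : Fin (n + 1) => ℝ) i.succ)
        (Pi.single 0 1) = 0 := by
    ext i
    simp
  rw [h0, map_zero]

lemma pdv_tl_succ {g : (Fin n → ℝ) → ℝ} {y : Fin (n + 1) → ℝ} (hg : AnalyticAt ℝ g (tl y))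
    (i : Fin n) : pdv i.succ (fun y => g (tl y)) y = pdv i g (tl y) := by
  have h := (hg.differentiableAt.hasFDerivAt.comp y (hasFDerivAt_tl y)).fderiv
  unfold pdv
  erw [h]
  simp only [ContinuousLinearMap.comp_apply]
  congr 1
  ext j
  simp [Pi.single_apply]

lemma deriv_update_eq_pdv {ι : Type} [Fintype ι] [DecidableEq ι] {g : (ι → ℝ) → ℝ} {x : ι → ℝ}
    (hg : DifferentiableAt ℝ g x) (i : ι) :
    HasDerivAt (fun s => g (Function.update x i s)) (pdv i g x) (x i) := by
  have h1 := hasDerivAt_update x i (x i)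
  have h2 : HasFDerivAt g (fderiv ℝ g x) (Function.update x i (x i)) := by
    rw [Function.update_eq_self]; exact hg.hasFDerivAt
  exact h2.comp_hasDerivAt _ h1

lemma gradp_eq {ψ : (Fin n → ℝ) → ℝ} {x : Fin n → ℝ} (h : AnalyticAt ℝ ψ x) :
    gradp ψ x = fun i => pdv i ψ x := by
  funext i
  exact (deriv_update_eq_pdv h.differentiableAt i).deriv

theorem main_reduced (m : ℕ) (hm : 2 ≤ m)
    (U : Set (ℝ × (Fin n → ℝ))) (hU : IsOpen U)
    (c : (l : ℕ) → (Fin l → Fin (n + 1)) → ℝ → (Fin n → ℝ) → ℝ)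
    (hc : ∀ l ≤ m + 1, ∀ μ, AnalyticOnNhd ℝ (fun p : ℝ × (Fin n → ℝ) => c l μ p.1 p.2) U)
    (ψ : (Fin n → ℝ) → ℝ) (hψ : AnalyticOnNhd ℝ ψ {x | (ψ x, x) ∈ U})
    (A : ℝ) (hA : A ≠ 0)
    (h0 : ∀ x, (ψ x, x) ∈ U → 1 - ∑ i, pdv i ψ x ^ 2 ≠ 0)
    (h1 : ∀ x, (ψ x, x) ∈ U → ∑ μ, c m μ (ψ x) x *
      ∏ k, (Fin.cons 1 (fun i => - pdv i ψ x) : Fin (n + 1) → ℝ) (μ k) = 0)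
    (h2 : ∀ x, (ψ x, x) ∈ U → (∑ μ, c (m + 1) μ (ψ x) x *
      ∏ k, (Fin.cons 1 (fun i => - pdv i ψ x) : Fin (n + 1) → ℝ) (μ k)) * (m * A ^ m) =
        -(1 - ∑ i, pdv i ψ x ^ 2)) :
    ∃ W : Set (Fin (n + 1) → ℝ), IsOpen W ∧ (∀ x ∈ {x | (ψ x, x) ∈ U}, pt 0 x ∈ W) ∧
      (∀ y ∈ W, tl y ∈ {x | (ψ x, x) ∈ U}) ∧
      ∃ w, AnalyticOnNhd ℝ w W ∧ ∀ y ∈ W,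
        LE' m A (fun i y => pdv i ψ (tl y)) w y =
        RE' m A (fun i y => pdv i ψ (tl y))
          (fun l μ y => c l μ (ψ (tl y) + y 0 ^ m) (tl y)) w y := by
  have hX : IsOpen {x | (ψ x, x) ∈ U} := by
    rw [isOpen_iff_mem_nhds]
    intro x hx
    have hcont : ContinuousAt (fun x => (ψ x, x)) x :=
      (hψ x hx).continuousAt.prodMk continuousAt_id
    exact hcont.eventually (hU.mem_nhds hx)
  set X := {x | (ψ x, x) ∈ U} with hXd
  have key : ∀ x ∈ X, ∃ H : Op n, GoodOp (pt 0 x) H ∧ ∃ γ : (Fin (n + 1) → ℝ) → ℝ,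
      (∀ᶠ y in 𝓝 (pt 0 x), γ y ≠ 0) ∧
      ∀ w, AnalyticAt ℝ w (pt 0 x) → ∀ᶠ y in 𝓝 (pt 0 x),
        LE' m A (fun i y => pdv i ψ (tl y)) w y -
        RE' m A (fun i y => pdv i ψ (tl y))
          (fun l μ y => c l μ (ψ (tl y) + y 0 ^ m) (tl y)) w y =
        γ y * (y 0 * (Qop m w y - y 0 * H w y)) := by
    intro x hx
    have htx : tl (pt 0 x) = x := tl_pt 0 x
    have htl : ContinuousAt (tl : (Fin (n + 1) → ℝ) → Fin n → ℝ) (pt 0 x) :=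
      (analyticAt_tl _).continuousAt
    have hev : ∀ᶠ y in 𝓝 (pt 0 x), tl y ∈ X :=
      htl.eventually (hX.mem_nhds (by rw [htx]; exact hx))
    have acomp : ∀ (g : (Fin n → ℝ) → ℝ), AnalyticAt ℝ g x →
        AnalyticAt ℝ (fun y => g (tl y)) (pt 0 x) := by
      intro g hg
      rw [← htx] at hg
      exact hg.comp (analyticAt_tl _)
    have hψx := hψ x hx
    -- the coefficient before substituting `σ^m`
    have hG : ∀ l ≤ m + 1, ∀ μ, AnalyticAt ℝ
        (fun y : Fin (n + 1) → ℝ => c l μ (ψ (tl y) + y 0) (tl y)) (pt 0 x) := by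
      intro l hl μ
      have e1 : AnalyticAt ℝ (fun y : Fin (n + 1) → ℝ => ((ψ (tl y) + y 0, tl y) : ℝ × (Fin n → ℝ)))
          (pt 0 x) :=
        ((acomp ψ hψx).add (analyticAt_coord 0 _)).prod (analyticAt_tl _)
      have e2 := hc l hl μ (ψ x, x) hx
      have e3 : (ψ x, x) = (fun y : Fin (n + 1) → ℝ =>
          ((ψ (tl y) + y 0, tl y) : ℝ × (Fin n → ℝ))) (pt 0 x) := by
        simp [tl_pt, pt]
      rw [e3] at e2
      exact AnalyticAt.comp (g := fun p : ℝ × (Fin n → ℝ) => c l μ p.1 p.2)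
        (f := fun y : Fin (n + 1) → ℝ => ((ψ (tl y) + y 0, tl y) : ℝ × (Fin n → ℝ))) e2 e1
    set Φ : (Fin (n + 1) → ℝ) → (Fin (n + 1) → ℝ) := fun y => pt (y 0 ^ m) (tl y) with hΦ
    have hΦb : Φ (pt 0 x) = pt 0 x := by
      have : m ≠ 0 := by omega
      simp [hΦ, tl_pt, pt, this]
    have hΦa : AnalyticAt ℝ Φ (pt 0 x) := by
      refine analyticAt_pi_iff.2 fun k => ?_
      refine Fin.cases ?_ (fun i => ?_) k
      · exact (analyticAt_coord 0 _).pow m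
      · exact analyticAt_coord i.succ _
    have hsp : ∀ l μ, ∃ g1, l ≤ m + 1 → (AnalyticAt ℝ g1 (pt 0 x) ∧ ∀ᶠ y in 𝓝 (pt 0 x),
        c l μ (ψ (tl y) + y 0) (tl y) = c l μ (ψ (tl y)) (tl y) + y 0 * g1 y) := by
      intro l μ
      by_cases hl : l ≤ m + 1
      · obtain ⟨g1, ha, hg⟩ := analytic_split (b := pt 0 x) (by simp [pt]) (hG l hl μ)
        refine ⟨g1, fun _ => ⟨ha, ?_⟩⟩
        filter_upwards [hg] with y hy
        simpa [tl_pt, pt] using hy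
      · exact ⟨0, fun h => absurd h hl⟩
    choose g1 hg1 using hsp
    have hcomp : ∀ g : (Fin (n + 1) → ℝ) → ℝ, AnalyticAt ℝ g (pt 0 x) →
        AnalyticAt ℝ (fun y => g (Φ y)) (pt 0 x) := by
      intro g hg
      rw [← hΦb] at hg
      exact hg.comp hΦa
    refine reduced (b := pt 0 x) (by simp [pt]) hm hA (P := fun i y => pdv i ψ (tl y))
      (PP := fun i y => pdv i (pdv i ψ) (tl y))
      (cf0 := fun l μ y => c l μ (ψ (tl y)) (tl y))
      (ck := fun l μ y => y 0 ^ (m - 2) * g1 l μ (Φ y))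
      (fun i => acomp _ (hψx.pdv i)) (fun i => acomp _ ((hψx.pdv i).pdv i)) (fun i => ?_)
      (fun i => ?_) ?_ ?_ ?_ ?_ ?_ ?_ ?_
    · filter_upwards [hev] with y hy
      exact pdv_tl_zero ((hψ _ hy).pdv i)
    · filter_upwards [hev] with y hy
      exact pdv_tl_succ ((hψ _ hy).pdv i) i
    · intro l hl μ
      have := hcomp _ (hG l hl μ)
      simpa [hΦ, tl_pt, pt] using this
    · intro l hl μ
      refine acomp (fun x => c l μ (ψ x) x) ?_
      exact AnalyticAt.comp (g := fun p : ℝ × (Fin n → ℝ) => c l μ p.1 p.2)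
        (f := fun x : Fin n → ℝ => ((ψ x, x) : ℝ × (Fin n → ℝ)))
        (hc l hl μ (ψ x, x) hx) (hψx.prod analyticAt_id)
    · intro l hl μ
      exact ((analyticAt_coord 0 _).pow _).mul (hcomp _ (hg1 l μ hl).1)
    · intro l hl μ
      have h3 := (hg1 l μ hl).2
      rw [← hΦb] at h3
      filter_upwards [hΦa.continuousAt.eventually h3] with y hy
      have e1 : tl (Φ y) = tl y := tl_pt _ _
      have e2 : Φ y 0 = y 0 ^ m := by simp [hΦ, pt]
      rw [e1, e2] at hy
      rw [hy, ← mul_assoc, ← pow_add, show 2 + (m - 2) = m by omega]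
    · simpa [htx] using h0 x hx
    · filter_upwards [hev] with y hy
      exact h1 (tl y) hy
    · filter_upwards [hev] with y hy
      exact h2 (tl y) hy
  refine glue X hX (fun w y => LE' m A (fun i y => pdv i ψ (tl y)) w y =
        RE' m A (fun i y => pdv i ψ (tl y))
          (fun l μ y => c l μ (ψ (tl y) + y 0 ^ m) (tl y)) w y) ?_ ?_ ?_
  · intro w w' y hw h
    rw [← LE_congr m A _ hw, ← RE_congr m A _ _ hw]
    exact h
  · intro x hx
    obtain ⟨H, hH, γ, hγ, h⟩ := key x hx
    obtain ⟨w, hw, hQ⟩ := exists_sol (b := pt 0 x) (by simp [pt]) m (by omega) hH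
    refine ⟨w, hw, ?_⟩
    filter_upwards [h w hw, hQ] with y h1 h2
    rw [h2] at h1
    simpa [sub_eq_zero] using h1
  · intro x hx w w' hw hw' he he'
    obtain ⟨H, hH, γ, hγ, h⟩ := key x hx
    refine unique_sol (b := pt 0 x) (by simp [pt]) m (by omega) hH hw hw' ?_ ?_
    · filter_upwards [h w hw, he, hγ] with y h1 h2 h3
      rw [h2, sub_self] at h1
      exact (mul_eq_zero.1 h1.symm).resolve_left h3
    · filter_upwards [h w' hw', he', hγ] with y h1 h2 h3
      rw [h2, sub_self] at h1
      exact (mul_eq_zero.1 h1.symm).resolve_left h3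

end Concrete

section Lift
open Topology
variable {n : ℕ}

/-- the fractional variable `σ = (t-ψ)^{1/m}` -/
noncomputable def sg (m : ℕ) (ψ : (Fin n → ℝ) → ℝ) (t : ℝ) (x : Fin n → ℝ) : ℝ :=
  (t - ψ x) ^ ((1 : ℝ) / m)

lemma sg_pos {m : ℕ} {ψ : (Fin n → ℝ) → ℝ} {t : ℝ} {x : Fin n → ℝ} (h : ψ x < t) :
    0 < sg m ψ t x := Real.rpow_pos_of_pos (by linarith) _

lemma sg_pow {m : ℕ} (hm : 2 ≤ m) {ψ : (Fin n → ℝ) → ℝ} {t : ℝ} {x : Fin n → ℝ} (h : ψ x < t) :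
    sg m ψ t x ^ m = t - ψ x := by
  have h0 : (0 : ℝ) ≤ t - ψ x := by linarith
  have : m ≠ 0 := by omega
  rw [sg, one_div]
  exact Real.rpow_inv_natCast_pow h0 this

lemma sg_pow' {m : ℕ} (hm : 2 ≤ m) {ψ : (Fin n → ℝ) → ℝ} {t : ℝ} {x : Fin n → ℝ} (h : ψ x < t) :
    sg m ψ t x ^ (m - 1) = (t - ψ x) ^ (((m : ℝ) - 1) / m) := by
  have h0 : (0 : ℝ) ≤ t - ψ x := by linarith
  rw [sg, ← Real.rpow_natCast, ← Real.rpow_mul h0, Nat.cast_sub (by omega)]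
  congr 1
  push_cast
  ring

lemma sg_hasDerivAt {m : ℕ} (hm : 2 ≤ m) {h : ℝ → ℝ} {h' s : ℝ} (hh : HasDerivAt h h' s)
    (hp : 0 < h s) : HasDerivAt (fun r => h r ^ ((1 : ℝ) / m))
      (h' * ((1 / m) * (h s ^ ((1 : ℝ) / m) / (h s ^ ((1 : ℝ) / m)) ^ m))) s := by
  have := hh.rpow_const (p := (1 : ℝ) / m) (Or.inl hp.ne')
  convert! this using 1
  have hm0 : m ≠ 0 := by omega
  have e : (h s ^ ((1 : ℝ) / m)) ^ m = h s := by
    rw [one_div]; exact Real.rpow_inv_natCast_pow hp.le hm0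
  rw [e, Real.rpow_sub_one hp.ne']
  ring

lemma lift_t {m : ℕ} (hm : 2 ≤ m) {ψ : (Fin n → ℝ) → ℝ} {t : ℝ} {x : Fin n → ℝ} (h : ψ x < t)
    {g : (Fin (n + 1) → ℝ) → ℝ} (hg : AnalyticAt ℝ g (pt (sg m ψ t x) x)) :
    HasDerivAt (fun s => g (pt (sg m ψ s x) x))
      ((1 / m) * Dop 0 g (pt (sg m ψ t x) x) / sg m ψ t x ^ m) t := by
  have h1 : HasDerivAt (fun s => sg m ψ s x)
      (1 * ((1 / m) * (sg m ψ t x / sg m ψ t x ^ m))) t :=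
    sg_hasDerivAt hm ((hasDerivAt_id t).sub_const (ψ x)) (by simpa using h)
  have h2 : HasDerivAt (fun s => pt (sg m ψ s x) x)
      ((1 * ((1 / m) * (sg m ψ t x / sg m ψ t x ^ m))) • Pi.single (0 : Fin (n + 1)) (1 : ℝ)) t := by
    rw [hasDerivAt_pi]
    intro k
    refine Fin.cases ?_ (fun i => ?_) k
    · simpa [pt] using h1
    · simpa [pt] using hasDerivAt_const t (x i)
  have h3 := (hg.differentiableAt.hasFDerivAt).comp_hasDerivAt t h2
  convert! h3 using 1
  rw [map_smul]
  simp only [Dop, pdv, pt, Fin.cons_zero, smul_eq_mul]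
  ring

lemma lift_x {m : ℕ} (hm : 2 ≤ m) {ψ : (Fin n → ℝ) → ℝ} {t : ℝ} {x : Fin n → ℝ} (h : ψ x < t)
    (hψ : AnalyticAt ℝ ψ x) (i : Fin n)
    {g : (Fin (n + 1) → ℝ) → ℝ} (hg : AnalyticAt ℝ g (pt (sg m ψ t x) x)) :
    HasDerivAt (fun s => g (pt (sg m ψ t (Function.update x i s)) (Function.update x i s)))
      (pdv i.succ g (pt (sg m ψ t x) x) -
        pdv i ψ x * ((1 / m) * Dop 0 g (pt (sg m ψ t x) x) / sg m ψ t x ^ m)) (x i) := by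
  have h0 := (deriv_update_eq_pdv hψ.differentiableAt i).const_sub t
  have h1 : HasDerivAt (fun s => sg m ψ t (Function.update x i s))
      (-pdv i ψ x * ((1 / m) * (sg m ψ t x / sg m ψ t x ^ m))) (x i) := by
    have := sg_hasDerivAt hm h0 (by simpa using h)
    simpa [sg] using this
  have h2 : HasDerivAt (fun s => pt (sg m ψ t (Function.update x i s)) (Function.update x i s))
      ((-pdv i ψ x * ((1 / m) * (sg m ψ t x / sg m ψ t x ^ m))) • Pi.single (0 : Fin (n + 1)) (1 : ℝ)
        + Pi.single i.succ (1 : ℝ)) (x i) := by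
    rw [hasDerivAt_pi]
    intro k
    refine Fin.cases ?_ (fun j => ?_) k
    · simpa [pt] using h1
    · have := (hasDerivAt_pi.1 (hasDerivAt_update x i (x i))) j
      simpa [pt, Pi.single_apply] using this
  have hg' : HasFDerivAt g (fderiv ℝ g (pt (sg m ψ t x) x))
      (pt (sg m ψ t (Function.update x i (x i))) (Function.update x i (x i))) := by
    rw [Function.update_eq_self]; exact hg.differentiableAt.hasFDerivAt
  have h3 := hg'.comp_hasDerivAt (x i) h2
  convert! h3 using 1
  rw [map_add, map_smul]
  simp only [Dop, pdv, pt, Fin.cons_zero, smul_eq_mul]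
  ring

/-- the profile -/
noncomputable def Gp (m : ℕ) (a : ℝ) (w : (Fin (n + 1) → ℝ) → ℝ) (y : Fin (n + 1) → ℝ) : ℝ :=
  a * y 0 ^ (m - 1) + y 0 ^ m * w y

lemma pop_analytic (m : ℕ) (A : ℝ) {w : (Fin (n + 1) → ℝ) → ℝ} {y : Fin (n + 1) → ℝ}
    (hw : AnalyticAt ℝ w y) : AnalyticAt ℝ (pop m A w) y :=
  analyticAt_const.add ((analyticAt_coord 0 y).mul
    ((hw.Dop 0).add (analyticAt_const.mul hw)).div_const)

lemma qop_analytic (m : ℕ) (A : ℝ) {w : (Fin (n + 1) → ℝ) → ℝ} {y : Fin (n + 1) → ℝ}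
    {P : Fin n → (Fin (n + 1) → ℝ) → ℝ} (i : Fin n) (hP : AnalyticAt ℝ (P i) y)
    (hw : AnalyticAt ℝ w y) : AnalyticAt ℝ (qop m A P i w) y :=
  (hP.neg.mul (pop_analytic m A hw)).add (((analyticAt_coord 0 y).pow m).mul (hw.Dop _))

lemma Gp_analytic (m : ℕ) (a : ℝ) {w : (Fin (n + 1) → ℝ) → ℝ} {y : Fin (n + 1) → ℝ}
    (hw : AnalyticAt ℝ w y) : AnalyticAt ℝ (Gp m a w) y :=
  (analyticAt_const.mul ((analyticAt_coord 0 y).pow _)).add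
    (((analyticAt_coord 0 y).pow _).mul hw)

lemma pdv_Gp (m : ℕ) (a : ℝ) {w : (Fin (n + 1) → ℝ) → ℝ} {y : Fin (n + 1) → ℝ}
    (hw : AnalyticAt ℝ w y) (μ : Fin (n + 1)) :
    pdv μ (Gp m a w) y = a * (if 0 = μ then ((m - 1 : ℕ) : ℝ) * y 0 ^ (m - 1 - 1) else 0)
      + ((if 0 = μ then (m : ℝ) * y 0 ^ (m - 1) else 0) * w y + y 0 ^ m * pdv μ w y) := by
  have a1 : ∀ k, AnalyticAt ℝ (fun y : Fin (n + 1) → ℝ => y 0 ^ k) y :=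
    fun k => (analyticAt_coord 0 y).fun_pow k
  have : Gp m a w = fun y => a * y 0 ^ (m - 1) + y 0 ^ m * w y := rfl
  rw [this, pdv_add _ (analyticAt_const.fun_mul (a1 _)) ((a1 _).fun_mul hw),
    pdv_const_mul _ _ (a1 _), pdv_mul _ (a1 _) hw, pdv_coord_pow, pdv_coord_pow]

lemma Dop_zero_Gp {m : ℕ} (hm : 2 ≤ m) (a : ℝ) {w : (Fin (n + 1) → ℝ) → ℝ} {y : Fin (n + 1) → ℝ}
    (hw : AnalyticAt ℝ w y) :
    Dop 0 (Gp m a w) y = m * y 0 ^ (m - 1) * pop m (a * (((m : ℝ) - 1) / m)) w y := by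
  obtain ⟨k, rfl⟩ := Nat.exists_eq_add_of_le hm
  have e1 : 2 + k - 1 = k + 1 := by omega
  have e2 : 2 + k - 1 - 1 = k := by omega
  have hk : ((2 : ℝ) + k) ≠ 0 := by positivity
  rw [Dop, pdv_Gp _ _ hw, e2, e1]
  simp only [if_true, pop, zop, Dop]
  push_cast
  field_simp
  ring

/-- derivative of `y 0 ⁻¹ * p` -/
lemma pdv_inv_mul {p : (Fin (n + 1) → ℝ) → ℝ} {y : Fin (n + 1) → ℝ} (hp : AnalyticAt ℝ p y)
    (hy : y 0 ≠ 0) (μ : Fin (n + 1)) :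
    AnalyticAt ℝ (fun y => (y 0)⁻¹ * p y) y ∧
    pdv μ (fun y => (y 0)⁻¹ * p y) y =
      (y 0)⁻¹ * (pdv μ p y - (if 0 = μ then 1 else 0) * ((y 0)⁻¹ * p y)) := by
  have ha : AnalyticAt ℝ (fun y => (y 0)⁻¹ * p y) y :=
    ((analyticAt_coord 0 y).fun_inv hy).fun_mul hp
  refine ⟨ha, ?_⟩
  have he : p =ᶠ[𝓝 y] fun y => y 0 * ((y 0)⁻¹ * p y) := by
    filter_upwards [(analyticAt_coord 0 y).continuousAt.eventually_ne hy] with v hv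
    field_simp
  have h1 := (pdv_congr (μ := μ) he).self_of_nhds
  rw [pdv_mul _ (analyticAt_coord 0 y) ha, pdv_coord] at h1
  rw [h1]
  field_simp
  ring

theorem wave_lift {m : ℕ} (hm : 2 ≤ m) {a : ℝ} {ψ : (Fin n → ℝ) → ℝ} {S : Set (ℝ × (Fin n → ℝ))}
    (hS : IsOpen S) {w : (Fin (n + 1) → ℝ) → ℝ}
    (h1 : ∀ t x, (t, x) ∈ S → ψ x < t) (h2 : ∀ t x, (t, x) ∈ S → AnalyticAt ℝ ψ x)
    (h3 : ∀ t x, (t, x) ∈ S → AnalyticAt ℝ w (pt (sg m ψ t x) x))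
    {u : ℝ → (Fin n → ℝ) → ℝ} (hu : ∀ t x, ψ x < t → u t x = Gp m a w (pt (sg m ψ t x) x))
    {A : ℝ} (hA : A = a * (((m : ℝ) - 1) / m)) {P : Fin n → (Fin (n + 1) → ℝ) → ℝ}
    (hP : P = fun i y => pdv i ψ (tl y)) :
    ∀ t x, (t, x) ∈ S →
      ptd u t x = (sg m ψ t x)⁻¹ * pop m A w (pt (sg m ψ t x) x) ∧
      (∀ i, pxd i u t x = (sg m ψ t x)⁻¹ * qop m A P i w (pt (sg m ψ t x) x)) ∧
      (ptd (ptd u) t x - lapx u t x) * sg m ψ t x ^ (m + 1) = LE' m A P w (pt (sg m ψ t x) x) := by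
  have evt : ∀ t x, (t, x) ∈ S → ∀ᶠ s in 𝓝 t, (s, x) ∈ S := fun t x h =>
    (Continuous.prodMk_left x).continuousAt.eventually (hS.mem_nhds h)
  have evx : ∀ t x, (t, x) ∈ S → ∀ i, ∀ᶠ s in 𝓝 (x i), (t, Function.update x i s) ∈ S := by
    intro t x h i
    have hc : Continuous (fun s : ℝ => (t, Function.update x i s)) := by fun_prop
    refine hc.continuousAt.eventually (hS.mem_nhds ?_)
    simpa using h
  have hpt : ∀ t x, (t, x) ∈ S → ptd u t x = (sg m ψ t x)⁻¹ * pop m A w (pt (sg m ψ t x) x) := by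
    intro t x h
    have hs := sg_pos (m := m) (h1 t x h)
    have d := lift_t hm (h1 t x h) (Gp_analytic m a (h3 t x h))
    have e : (fun s => u s x) =ᶠ[𝓝 t] fun s => Gp m a w (pt (sg m ψ s x) x) := by
      filter_upwards [evt t x h] with s hs
      exact hu s x (h1 s x hs)
    rw [ptd, e.deriv_eq, d.deriv, Dop_zero_Gp hm a (h3 t x h), ← hA]
    have em : sg m ψ t x ^ m = sg m ψ t x ^ (m - 1) * sg m ψ t x := by
      rw [← pow_succ]; congr 1; omega
    have hm0 : (m : ℝ) ≠ 0 := by positivity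
    simp only [pt, Fin.cons_zero]
    rw [em]
    field_simp
  have hpx : ∀ t x, (t, x) ∈ S → ∀ i, pxd i u t x =
      (sg m ψ t x)⁻¹ * qop m A P i w (pt (sg m ψ t x) x) := by
    intro t x h i
    have hs := sg_pos (m := m) (h1 t x h)
    have d := lift_x hm (h1 t x h) (h2 t x h) i (Gp_analytic m a (h3 t x h))
    have e : (fun s => u t (Function.update x i s)) =ᶠ[𝓝 (x i)] fun s =>
        Gp m a w (pt (sg m ψ t (Function.update x i s)) (Function.update x i s)) := by
      filter_upwards [evx t x h i] with s hs
      exact hu t _ (h1 _ _ hs)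
    rw [pxd, e.deriv_eq, d.deriv, Dop_zero_Gp hm a (h3 t x h), ← hA, pdv_Gp m a (h3 t x h)]
    have em : sg m ψ t x ^ m = sg m ψ t x ^ (m - 1) * sg m ψ t x := by
      rw [← pow_succ]; congr 1; omega
    have hm0 : (m : ℝ) ≠ 0 := by positivity
    have hi : (0 : Fin (n + 1)) ≠ i.succ := (Fin.succ_ne_zero i).symm
    simp only [qop, hP, tl_pt, if_neg hi]
    simp only [Dop, pt, Fin.cons_zero]
    rw [em]
    field_simp
    ring
  intro t x h
  refine ⟨hpt t x h, hpx t x h, ?_⟩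
  have hs := sg_pos (m := m) (h1 t x h)
  have hs0 : pt (sg m ψ t x) x 0 ≠ 0 := hs.ne'
  have hPa : ∀ i, AnalyticAt ℝ (P i) (pt (sg m ψ t x) x) := by
    intro i
    rw [hP]
    have h4 := (h2 t x h).pdv i
    rw [← tl_pt (sg m ψ t x) x] at h4
    exact AnalyticAt.comp (g := pdv i ψ) (f := tl) h4 (analyticAt_tl _)
  have hm0 : (m : ℝ) ≠ 0 := by positivity
  have htt : ptd (ptd u) t x = (1 / m) * (Dop 0 (pop m A w) (pt (sg m ψ t x) x) -
      pop m A w (pt (sg m ψ t x) x)) / sg m ψ t x ^ (m + 1) := by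
    obtain ⟨b1, b2⟩ := pdv_inv_mul (pop_analytic m A (h3 t x h)) hs0 0
    have d := lift_t hm (h1 t x h) b1
    have e : (fun s => ptd u s x) =ᶠ[𝓝 t] fun s =>
        (fun y : Fin (n + 1) → ℝ => (y 0)⁻¹ * pop m A w y) (pt (sg m ψ s x) x) := by
      filter_upwards [evt t x h] with s hs
      exact hpt s x hs
    rw [ptd, e.deriv_eq, d.deriv]
    simp only [Dop]
    rw [b2]
    simp only [pt, Fin.cons_zero, if_true]
    field_simp
    ring
  have hii : ∀ i, pxd i (pxd i u) t x = (sg m ψ t x)⁻¹ * pdv i.succ (qop m A P i w) (pt (sg m ψ t x) x)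
      - P i (pt (sg m ψ t x) x) * ((1 / m) * (Dop 0 (qop m A P i w) (pt (sg m ψ t x) x) -
      qop m A P i w (pt (sg m ψ t x) x)) / sg m ψ t x ^ (m + 1)) := by
    intro i
    have aq := qop_analytic m A i (hPa i) (h3 t x h)
    obtain ⟨b1, b2⟩ := pdv_inv_mul aq hs0 0
    obtain ⟨-, b3⟩ := pdv_inv_mul aq hs0 i.succ
    have d := lift_x hm (h1 t x h) (h2 t x h) i b1
    have e : (fun s => pxd i u t (Function.update x i s)) =ᶠ[𝓝 (x i)] fun s =>
        (fun y : Fin (n + 1) → ℝ => (y 0)⁻¹ * qop m A P i w y)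
          (pt (sg m ψ t (Function.update x i s)) (Function.update x i s)) := by
      filter_upwards [evx t x h i] with s hs
      exact hpx t _ hs i
    have hi : (0 : Fin (n + 1)) ≠ i.succ := (Fin.succ_ne_zero i).symm
    have hPv : P i (pt (sg m ψ t x) x) = pdv i ψ x := by rw [hP]; simp only [tl_pt]
    rw [pxd, e.deriv_eq, d.deriv, b3, hPv]
    simp only [Dop]
    rw [b2]
    simp only [pt, Fin.cons_zero, if_true, if_neg hi]
    field_simp
    try ring
  rw [htt, lapx, LE', sub_mul, Finset.sum_mul, sub_eq_add_neg, ← Finset.sum_neg_distrib]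
  congr 1
  · field_simp
  · refine Finset.sum_congr rfl fun i _ => ?_
    rw [hii]
    simp only [pt, Fin.cons_zero]
    field_simp
    ring

end Lift

section Final
open Topology
variable {n : ℕ}

lemma sum_neg_dir (l : ℕ) (c : (Fin l → Fin (n + 1)) → ℝ) (g : Fin n → ℝ) :
    ∑ μ, c μ * ∏ k, (Fin.cons 1 (fun i => - g i) : Fin (n + 1) → ℝ) (μ k) =
      (-1) ^ l * ∑ μ, c μ * ∏ k, (Fin.cons (-1) g : Fin (n + 1) → ℝ) (μ k) := by
  rw [Finset.mul_sum]
  refine Finset.sum_congr rfl fun μ _ => ?_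
  have e : ∀ j, (Fin.cons 1 (fun i => - g i) : Fin (n + 1) → ℝ) j =
      (-1) * (Fin.cons (-1) g : Fin (n + 1) → ℝ) j := by
    intro j
    refine Fin.cases ?_ (fun i => ?_) j <;> simp
  simp only [e]
  rw [Finset.prod_mul_distrib, Finset.prod_const, Finset.card_univ, Fintype.card_fin]
  ring

lemma sum_scale_dir (l : ℕ) (c : (Fin l → Fin (n + 1)) → ℝ) (r p : ℝ) (q : Fin n → ℝ) :
    ∑ μ, c μ * ∏ k, (Fin.cons (r * p) (fun i => r * q i) : Fin (n + 1) → ℝ) (μ k) =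
      r ^ l * ∑ μ, c μ * ∏ k, (Fin.cons p q : Fin (n + 1) → ℝ) (μ k) := by
  rw [Finset.mul_sum]
  refine Finset.sum_congr rfl fun μ _ => ?_
  have e : ∀ j, (Fin.cons (r * p) (fun i => r * q i) : Fin (n + 1) → ℝ) j =
      r * (Fin.cons p q : Fin (n + 1) → ℝ) j := by
    intro j
    refine Fin.cases ?_ (fun i => ?_) j <;> simp
  simp only [e]
  rw [Finset.prod_mul_distrib, Finset.prod_const, Finset.card_univ, Fintype.card_fin]
  ring

lemma continuous_pt : Continuous (fun p : ℝ × (Fin n → ℝ) => pt p.1 p.2) := by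
  refine continuous_pi fun k => ?_
  refine Fin.cases ?_ (fun i => ?_) k
  · simpa [pt] using continuous_fst
  · simp only [pt, Fin.cons_succ]
    fun_prop

lemma analyticAt_pt {E : Type*} [NormedAddCommGroup E] [NormedSpace ℝ E] {f : E → ℝ}
    {g : E → (Fin n → ℝ)} {e : E} (hf : AnalyticAt ℝ f e) (hg : AnalyticAt ℝ g e) :
    AnalyticAt ℝ (fun e => pt (f e) (g e)) e := by
  refine analyticAt_pi_iff.2 fun k => ?_
  refine Fin.cases ?_ (fun i => ?_) k
  · simpa [pt] using hf
  · simpa [pt] using (analyticAt_pi_iff.1 hg) i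

lemma rpow_analytic {E : Type*} [NormedAddCommGroup E] [NormedSpace ℝ E] {f : E → ℝ}
    {e : E} (hf : AnalyticAt ℝ f e) (h : 0 < f e) (r : ℝ) :
    AnalyticAt ℝ (fun e => f e ^ r) e :=
  AnalyticAt.comp (g := fun s : ℝ => s ^ r)
    ((Real.contDiffAt_rpow_const_of_ne h.ne').analyticAt) hf

end Final

/-- Solutions with fractional-power singularities for wave equations with nonlinearity of
degree `m+1` in the derivatives: `u = a(t-ψ)^{(m-1)/m} + (t-ψ)·w((t-ψ)^{1/m}, x)` with `w`
analytic, `u` vanishes and `∂_t u` blows up along `Σ = {t = ψ(x)}`. -/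
theorem stmt3 {n : ℕ} (m : ℕ) (hm : 2 ≤ m)
    (U : Set (ℝ × (Fin n → ℝ))) (hU : IsOpen U)
    (F : ℕ → ℝ → (Fin n → ℝ) → ℝ → (Fin n → ℝ) → ℝ)
    (hF : ∀ l ≤ m + 1, HomogPoly l U (F l))
    (ψ : (Fin n → ℝ) → ℝ) (hψ : AnalyticOnNhd ℝ ψ {x | (ψ x, x) ∈ U})
    (a : ℝ) (ha : a ≠ 0)
    (hcond1 : ∀ x, (ψ x, x) ∈ U →
      1 - ∑ i, gradp ψ x i ^ 2 ≠ 0 ∧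
      1 - ∑ i, gradp ψ x i ^ 2 =
        ((-(m : ℝ) + 1) ^ m * a ^ m / (m : ℝ) ^ (m - 1)) *
          F (m + 1) (ψ x) x (-1) (gradp ψ x))
    (hcond2 : ∀ x, (ψ x, x) ∈ U → F m (ψ x) x (-1) (gradp ψ x) = 0) :
    ∃ Ω : Set (ℝ × (Fin n → ℝ)), IsOpen Ω ∧ {p ∈ U | p.1 = ψ p.2} ⊆ Ω ∧ Ω ⊆ U ∧
    ∃ W : Set (ℝ × (Fin n → ℝ)), IsOpen W ∧ (∀ x, (ψ x, x) ∈ U → (0, x) ∈ W) ∧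
    ∃ w : ℝ → (Fin n → ℝ) → ℝ,
      AnalyticOnNhd ℝ (fun p : ℝ × (Fin n → ℝ) => w p.1 p.2) W ∧
      AnalyticOnNhd ℝ
        (fun p : ℝ × (Fin n → ℝ) =>
          a * (p.1 - ψ p.2) ^ (((m : ℝ) - 1) / m)
            + (p.1 - ψ p.2) * w ((p.1 - ψ p.2) ^ ((1 : ℝ) / m)) p.2)
        (Ω ∩ {p | ψ p.2 < p.1}) ∧
      SolvesWaveSum m F
        (fun t x => a * (t - ψ x) ^ (((m : ℝ) - 1) / m)
          + (t - ψ x) * w ((t - ψ x) ^ ((1 : ℝ) / m)) x)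
        (Ω ∩ {p | ψ p.2 < p.1}) ∧
      (∀ x, (ψ x, x) ∈ U →
        Tendsto (fun t =>
            (a * (t - ψ x) ^ (((m : ℝ) - 1) / m)
              + (t - ψ x) * w ((t - ψ x) ^ ((1 : ℝ) / m)) x)
              / (a * (t - ψ x) ^ (((m : ℝ) - 1) / m)))
          (nhdsWithin (ψ x) (Set.Ioi (ψ x))) (nhds 1)) ∧
      (∀ x, (ψ x, x) ∈ U →
        Tendsto (fun t =>
            ptd (fun t x => a * (t - ψ x) ^ (((m : ℝ) - 1) / m)
              + (t - ψ x) * w ((t - ψ x) ^ ((1 : ℝ) / m)) x) t x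
              / (a * (((m : ℝ) - 1) / m) * (t - ψ x) ^ (-(1 : ℝ) / m)))
          (nhdsWithin (ψ x) (Set.Ioi (ψ x))) (nhds 1)) := by
  have hm0 : (m : ℝ) ≠ 0 := by positivity
  have hmn : m ≠ 0 := by omega
  have hm1 : (m : ℝ) - 1 ≠ 0 := by
    have : (2 : ℝ) ≤ m := by exact_mod_cast hm
    intro h; linarith
  have hc : ∀ l, ∃ c : (Fin l → Fin (n + 1)) → ℝ → (Fin n → ℝ) → ℝ, l ≤ m + 1 →
      (∀ μ, AnalyticOnNhd ℝ (fun p : ℝ × (Fin n → ℝ) => c μ p.1 p.2) U) ∧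
      ∀ t x τ ξ, F l t x τ ξ =
        ∑ μ : Fin l → Fin (n + 1), c μ t x * ∏ k, (Fin.cons τ ξ : Fin (n + 1) → ℝ) (μ k) := by
    intro l
    by_cases hl : l ≤ m + 1
    · obtain ⟨c, h⟩ := hF l hl
      exact ⟨c, fun _ => h⟩
    · exact ⟨fun _ _ _ => 0, fun h => absurd h hl⟩
  choose c hc using hc
  set A : ℝ := a * (((m : ℝ) - 1) / m) with hA
  have hA0 : A ≠ 0 := mul_ne_zero ha (div_ne_zero hm1 hm0)
  have hXo : IsOpen {x | (ψ x, x) ∈ U} := by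
    rw [isOpen_iff_mem_nhds]
    intro x hx
    have hcont : ContinuousAt (fun x => (ψ x, x)) x :=
      (hψ x hx).continuousAt.prodMk continuousAt_id
    exact hcont.eventually (hU.mem_nhds hx)
  have hgp : ∀ x, (ψ x, x) ∈ U → gradp ψ x = fun i => pdv i ψ x := fun x hx => gradp_eq (hψ x hx)
  obtain ⟨W', hW'o, hW'0, hW'X, w', hw', heq⟩ := main_reduced m hm U hU c
    (fun l hl => (hc l hl).1) ψ hψ A hA0
    (by
      intro x hx
      have := (hcond1 x hx).1
      rwa [hgp x hx] at this)
    (by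
      intro x hx
      have h := hcond2 x hx
      rw [hgp x hx, (hc m (by omega)).2] at h
      rw [sum_neg_dir, h, mul_zero])
    (by
      intro x hx
      have h := (hcond1 x hx).2
      rw [hgp x hx, (hc (m + 1) le_rfl).2] at h
      rw [sum_neg_dir, h, hA]
      have e1 : (-(m : ℝ) + 1) ^ m = (-1) ^ m * ((m : ℝ) - 1) ^ m := by
        rw [← mul_pow]; congr 1; ring
      have e2 : (m : ℝ) ^ m = (m : ℝ) ^ (m - 1) * m := by
        rw [← pow_succ]; congr 1; omega
      rw [e1, mul_pow, div_pow, e2]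
      field_simp
      ring)
  set u : ℝ → (Fin n → ℝ) → ℝ := fun t x => a * (t - ψ x) ^ (((m : ℝ) - 1) / m)
          + (t - ψ x) * w' (pt ((t - ψ x) ^ ((1 : ℝ) / m)) x) with hudef
  have hu : ∀ t x, ψ x < t → u t x = Gp m a w' (pt (sg m ψ t x) x) := by
    intro t x h
    have e1 := sg_pow hm h
    have e2 := sg_pow' hm h
    simp only [Gp, hudef, pt, Fin.cons_zero]
    rw [e1, e2, sg]
  set Ω : Set (ℝ × (Fin n → ℝ)) := {p | p ∈ U ∧ p.2 ∈ {x | (ψ x, x) ∈ U} ∧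
    pt (|p.1 - ψ p.2| ^ ((1 : ℝ) / m)) p.2 ∈ W'} with hΩ
  have hinv : (0 : ℝ) < 1 / m := by positivity
  have hΩo : IsOpen Ω := by
    rw [isOpen_iff_mem_nhds]
    rintro p ⟨h1, h2, h3⟩
    have c2 : ContinuousAt (fun p : ℝ × (Fin n → ℝ) => ψ p.2) p :=
      ContinuousAt.comp (g := ψ) (f := Prod.snd) (hψ _ h2).continuousAt continuousAt_snd
    have c3 : ContinuousAt (fun p : ℝ × (Fin n → ℝ) =>
        (|p.1 - ψ p.2| ^ ((1 : ℝ) / m), p.2)) p :=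
      (((continuousAt_fst.sub c2).abs).rpow_const (Or.inr hinv.le)).prodMk continuousAt_snd
    have c4 : ContinuousAt (fun p : ℝ × (Fin n → ℝ) =>
        pt (|p.1 - ψ p.2| ^ ((1 : ℝ) / m)) p.2) p :=
      ContinuousAt.comp (g := fun p : ℝ × (Fin n → ℝ) => pt p.1 p.2)
        (f := fun p : ℝ × (Fin n → ℝ) => (|p.1 - ψ p.2| ^ ((1 : ℝ) / m), p.2))
        continuous_pt.continuousAt c3
    filter_upwards [hU.mem_nhds h1, continuousAt_snd.eventually (hXo.mem_nhds h2),
      c4.eventually (hW'o.mem_nhds h3)] with q q1 q2 q3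
    exact ⟨q1, q2, q3⟩
  have hSo : IsOpen (Ω ∩ {p | ψ p.2 < p.1}) := by
    rw [isOpen_iff_mem_nhds]
    rintro p ⟨h1, h2⟩
    have c2 : ContinuousAt (fun p : ℝ × (Fin n → ℝ) => ψ p.2) p :=
      ContinuousAt.comp (g := ψ) (f := Prod.snd) (hψ _ h1.2.1).continuousAt continuousAt_snd
    filter_upwards [hΩo.mem_nhds h1, c2.eventually_lt continuousAt_fst h2] with q q1 q2
    exact ⟨q1, q2⟩
  have hSW : ∀ t x, (t, x) ∈ Ω ∩ {p | ψ p.2 < p.1} → pt (sg m ψ t x) x ∈ W' := by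
    rintro t x ⟨h1, h2⟩
    have h3 := h1.2.2
    have h4 : ψ x < t := h2
    simp only at h3
    rwa [abs_of_pos (by linarith)] at h3
  have hSig : ∀ x, (ψ x, x) ∈ U → (ψ x, x) ∈ Ω := by
    intro x hx
    refine ⟨hx, hx, ?_⟩
    simp only [sub_self, abs_zero]
    rw [Real.zero_rpow hinv.ne']
    exact hW'0 x hx
  have hlift := wave_lift hm hSo (u := u) (a := a) (w := w') (ψ := ψ) (fun t x h => h.2)
    (fun t x h => hψ x h.1.2.1) (fun t x h => hw' _ (hSW t x h)) hu hA rfl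
  -- behaviour as `t → ψ+`
  have hsg0 : ∀ x, Tendsto (fun t => sg m ψ t x) (nhdsWithin (ψ x) (Set.Ioi (ψ x))) (nhds 0) := by
    intro x
    have c1 : ContinuousAt (fun t => sg m ψ t x) (ψ x) :=
      (continuousAt_id.sub continuousAt_const).rpow_const (Or.inr hinv.le)
    have c2 := c1.tendsto
    simp only [sg, sub_self, Real.zero_rpow hinv.ne'] at c2
    exact c2.mono_left nhdsWithin_le_nhds
  have hpt0 : ∀ x, Tendsto (fun t => pt (sg m ψ t x) x) (nhdsWithin (ψ x) (Set.Ioi (ψ x)))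
      (nhds (pt 0 x)) := by
    intro x
    have c1 : Tendsto (fun t => (sg m ψ t x, x)) (nhdsWithin (ψ x) (Set.Ioi (ψ x))) (nhds (0, x)) :=
      (hsg0 x).prodMk_nhds tendsto_const_nhds
    exact (continuous_pt.tendsto (0, x)).comp c1
  have hevS : ∀ x, (ψ x, x) ∈ U → ∀ᶠ t in nhdsWithin (ψ x) (Set.Ioi (ψ x)),
      (t, x) ∈ Ω ∩ {p | ψ p.2 < p.1} := by
    intro x hx
    have c1 : ContinuousAt (fun t : ℝ => (t, x)) (ψ x) := by fun_prop
    filter_upwards [self_mem_nhdsWithin,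
      nhdsWithin_le_nhds (c1.eventually (hΩo.mem_nhds (hSig x hx)))] with t ht ht2
    exact ⟨ht2, ht⟩
  refine ⟨Ω, hΩo, ?_, fun p hp => hp.1, {p | pt p.1 p.2 ∈ W'}, hW'o.preimage continuous_pt,
    hW'0, fun s x => w' (pt s x), ?_, ?_, ?_, ?_, ?_⟩
  · rintro ⟨t, x⟩ ⟨h1, h2⟩
    simp only at h2
    subst h2
    exact hSig x h1
  · intro p hp
    exact AnalyticAt.comp (g := w') (f := fun p : ℝ × (Fin n → ℝ) => pt p.1 p.2) (hw' _ hp)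
      (analyticAt_pt analyticAt_fst analyticAt_snd)
  · rintro ⟨t, x⟩ hp
    have h4 : ψ x < t := hp.2
    have a1 : AnalyticAt ℝ (fun p : ℝ × (Fin n → ℝ) => p.1 - ψ p.2) (t, x) :=
      analyticAt_fst.fun_sub (AnalyticAt.comp (g := ψ) (f := Prod.snd) (hψ x hp.1.2.1) analyticAt_snd)
    have hpos : 0 < (fun p : ℝ × (Fin n → ℝ) => p.1 - ψ p.2) (t, x) := by
      simpa using h4
    have a2 := rpow_analytic a1 hpos (((m : ℝ) - 1) / m)
    have a3 := analyticAt_pt (rpow_analytic a1 hpos ((1 : ℝ) / m)) analyticAt_snd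
    have a4 := AnalyticAt.comp (g := w') (f := fun p : ℝ × (Fin n → ℝ) =>
      pt ((p.1 - ψ p.2) ^ ((1 : ℝ) / m)) p.2) (x := (t, x)) (hw' _ (hSW t x hp)) a3
    exact (analyticAt_const.fun_mul a2).fun_add (a1.fun_mul a4)
  · intro t x h
    obtain ⟨e1, e2, e3⟩ := hlift t x h
    have h4 : ψ x < t := h.2
    have hs := sg_pos (m := m) h4
    have hy := hSW t x h
    rw [heq _ hy] at e3
    have e4 : gradx u t x = fun i => (sg m ψ t x)⁻¹ *
        qop m A (fun i y => pdv i ψ (tl y)) i w' (pt (sg m ψ t x) x) := funext e2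
    refine mul_right_cancel₀ (pow_ne_zero (m + 1) hs.ne') ?_
    refine Eq.trans e3 ?_
    change _ = (∑ l ∈ Finset.range (m + 2), F l t x (ptd u t x) (gradx u t x)) * _
    rw [e1, e4, RE', Finset.sum_mul]
    refine Finset.sum_congr rfl fun l hl => ?_
    have hl' : l ≤ m + 1 := by
      have := Finset.mem_range.1 hl
      omega
    rw [(hc l hl').2, sum_scale_dir]
    have e5 : ψ x + sg m ψ t x ^ m = t := by rw [sg_pow hm h4]; ring
    simp only [tl_pt, Vop]
    have e6 : (pt (sg m ψ t x) x) 0 = sg m ψ t x := rfl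
    rw [e6, e5]
    have e7 : sg m ψ t x ^ (m + 1) = sg m ψ t x ^ (m + 1 - l) * sg m ψ t x ^ l := by
      rw [← pow_add]; congr 1; omega
    rw [e7, inv_pow]
    field_simp
  · intro x hx
    have hwc := (hw' _ (hW'0 x hx)).continuousAt.tendsto.comp (hpt0 x)
    have h5 : Tendsto (fun t => 1 + sg m ψ t x * w' (pt (sg m ψ t x) x) / a)
        (nhdsWithin (ψ x) (Set.Ioi (ψ x))) (nhds 1) := by
      have := (((hsg0 x).mul hwc).div_const a).const_add 1
      simpa using this
    refine h5.congr' ?_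
    filter_upwards [self_mem_nhdsWithin] with t ht
    have h4 : ψ x < t := ht
    have hs := sg_pos (m := m) h4
    have e2 := sg_pow' hm h4
    change _ = u t x / _
    rw [hu t x h4, ← e2]
    have em : sg m ψ t x ^ m = sg m ψ t x ^ (m - 1) * sg m ψ t x := by
      rw [← pow_succ]; congr 1; omega
    simp only [Gp, pt, Fin.cons_zero]
    rw [em]
    field_simp
  · intro x hx
    have hwa := hw' _ (hW'0 x hx)
    have hpc := (pop_analytic m A hwa).continuousAt.tendsto.comp (hpt0 x)
    have hp0 : pop m A w' (pt 0 x) = A := by simp [pop, pt]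
    rw [hp0] at hpc
    have h5 := hpc.div_const A
    rw [div_self hA0] at h5
    refine h5.congr' ?_
    filter_upwards [hevS x hx] with t ht
    have h4 : ψ x < t := ht.2
    have hs := sg_pos (m := m) h4
    obtain ⟨e1, -, -⟩ := hlift t x ht
    change _ = ptd u t x / _
    have e8 : (t - ψ x) ^ (-(1 : ℝ) / m) = (sg m ψ t x)⁻¹ := by
      rw [sg, ← Real.rpow_neg (by linarith), neg_div]
    rw [e1, e8]
    simp only [Function.comp]
    field_simp
end

section
/- Let f(t,x;τ,ξ) be a polynomial of degree 2 in (τ,ξ) ∈ ℝ×ℝⁿ with real-analytic coefficients on an open set U ⊂ ℝ×ℝⁿ and homogeneous decomposition f = f₂+f₁+f₀. Let ψ be real-analytic with Σ = {(t,x)∈U : t=ψ(x)}, and assume for a nonzero constant a that 1 − |∇ψ(x)|² = a·f₂(ψ(x),x;−1,∇ψ(x)) for all x with (ψ(x),x) ∈ U. If v is any real-analytic function on a neighborhood of Σ and u(t,x) = −a·log(t−ψ(x)) + v(t,x), then the function (t,x) ↦ (t−ψ(x))²·( u_tt − Δu − f(t,x;∂_t u,∇u) ), defined on {t > ψ(x)}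 near Σ, extends to a real-analytic function on a full neighborhood of Σ whose restriction to Σ vanishes; that is, the 1/(t−ψ)² singularity of u_tt − Δu − f(t,x;∂_t u,∇u) cancels exactly under the stated condition. -/
open Real Filter

lemma aux_t {n : ℕ} {v : ℝ → (Fin n → ℝ) → ℝ} {t : ℝ} {x : Fin n → ℝ}
    (h : DifferentiableAt ℝ (fun p : ℝ × (Fin n → ℝ) => v p.1 p.2) (t, x)) :
    HasDerivAt (fun s => v s x)
      (fderiv ℝ (fun p : ℝ × (Fin n → ℝ) => v p.1 p.2) (t, x) (1, 0)) t := by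
  have h1 : HasDerivAt (fun s : ℝ => (s, x)) ((1 : ℝ), (0 : Fin n → ℝ)) t :=
    (hasDerivAt_id t).prodMk (hasDerivAt_const t x)
  exact h.hasFDerivAt.comp_hasDerivAt t h1

lemma aux_x {n : ℕ} (i : Fin n) {v : ℝ → (Fin n → ℝ) → ℝ} {t : ℝ} {x : Fin n → ℝ}
    (h : DifferentiableAt ℝ (fun p : ℝ × (Fin n → ℝ) => v p.1 p.2) (t, x)) :
    HasDerivAt (fun y => v t (Function.update x i y))
      (fderiv ℝ (fun p : ℝ × (Fin n → ℝ) => v p.1 p.2) (t, x) (0, Pi.single i 1)) (x i) := by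
  have h1 : HasDerivAt (fun y : ℝ => (t, Function.update x i y))
      ((0 : ℝ), (Pi.single i 1 : Fin n → ℝ)) (x i) :=
    (hasDerivAt_const (x i) t).prodMk (hasDerivAt_update x i (x i))
  have h2 : HasFDerivAt (fun p : ℝ × (Fin n → ℝ) => v p.1 p.2)
      (fderiv ℝ (fun p : ℝ × (Fin n → ℝ) => v p.1 p.2) (t, x))
      (t, Function.update x i (x i)) := by
    rw [Function.update_eq_self]; exact h.hasFDerivAt
  exact h2.comp_hasDerivAt (x i) h1

lemma aux_p {n : ℕ} (i : Fin n) {v : (Fin n → ℝ) → ℝ} {x : Fin n → ℝ}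
    (h : DifferentiableAt ℝ v x) :
    HasDerivAt (fun y => v (Function.update x i y))
      (fderiv ℝ v x (Pi.single i 1)) (x i) := by
  have h1 := hasDerivAt_update x i (x i)
  have h2 : HasFDerivAt v (fderiv ℝ v x) (Function.update x i (x i)) := by
    rw [Function.update_eq_self]; exact h.hasFDerivAt
  exact h2.comp_hasDerivAt (x i) h1

lemma hd_t {n : ℕ} {v : ℝ → (Fin n → ℝ) → ℝ} {t : ℝ} {x : Fin n → ℝ}
    (h : DifferentiableAt ℝ (fun p : ℝ × (Fin n → ℝ) => v p.1 p.2) (t, x)) :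
    HasDerivAt (fun s => v s x) (ptd v t x) t :=
  (aux_t h).differentiableAt.hasDerivAt

lemma hd_x {n : ℕ} (i : Fin n) {v : ℝ → (Fin n → ℝ) → ℝ} {t : ℝ} {x : Fin n → ℝ}
    (h : DifferentiableAt ℝ (fun p : ℝ × (Fin n → ℝ) => v p.1 p.2) (t, x)) :
    HasDerivAt (fun y => v t (Function.update x i y)) (pxd i v t x) (x i) :=
  (aux_x i h).differentiableAt.hasDerivAt

lemma hd_p {n : ℕ} (i : Fin n) {v : (Fin n → ℝ) → ℝ} {x : Fin n → ℝ}
    (h : DifferentiableAt ℝ v x) :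
    HasDerivAt (fun y => v (Function.update x i y)) (gradp v x i) (x i) :=
  (aux_p i h).differentiableAt.hasDerivAt

lemma an_t {n : ℕ} {v : ℝ → (Fin n → ℝ) → ℝ} {W : Set (ℝ × (Fin n → ℝ))} (hW : IsOpen W)
    (h : AnalyticOnNhd ℝ (fun p : ℝ × (Fin n → ℝ) => v p.1 p.2) W) :
    AnalyticOnNhd ℝ (fun p : ℝ × (Fin n → ℝ) => ptd v p.1 p.2) W := by
  have h1 : AnalyticOnNhd ℝ (fun p => fderiv ℝ (fun p : ℝ × (Fin n → ℝ) => v p.1 p.2) p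
      ((1 : ℝ), (0 : Fin n → ℝ))) W := fun p hp =>
    ((ContinuousLinearMap.apply ℝ ℝ ((1 : ℝ), (0 : Fin n → ℝ))).analyticAt _).comp (h.fderiv p hp)
  refine AnalyticOnNhd.congr hW h1 ?_
  rintro ⟨t, x⟩ hp
  exact (aux_t (h _ hp).differentiableAt).deriv.symm

lemma an_x {n : ℕ} (i : Fin n) {v : ℝ → (Fin n → ℝ) → ℝ} {W : Set (ℝ × (Fin n → ℝ))}
    (hW : IsOpen W) (h : AnalyticOnNhd ℝ (fun p : ℝ × (Fin n → ℝ) => v p.1 p.2) W) :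
    AnalyticOnNhd ℝ (fun p : ℝ × (Fin n → ℝ) => pxd i v p.1 p.2) W := by
  have h1 : AnalyticOnNhd ℝ (fun p => fderiv ℝ (fun p : ℝ × (Fin n → ℝ) => v p.1 p.2) p
      ((0 : ℝ), (Pi.single i 1 : Fin n → ℝ))) W := fun p hp =>
    ((ContinuousLinearMap.apply ℝ ℝ ((0 : ℝ), (Pi.single i 1 : Fin n → ℝ))).analyticAt _).comp
      (h.fderiv p hp)
  refine AnalyticOnNhd.congr hW h1 ?_
  rintro ⟨t, x⟩ hp
  exact (aux_x i (h _ hp).differentiableAt).deriv.symm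

lemma an_p {n : ℕ} (i : Fin n) {v : (Fin n → ℝ) → ℝ} {W : Set (Fin n → ℝ)}
    (hW : IsOpen W) (h : AnalyticOnNhd ℝ v W) :
    AnalyticOnNhd ℝ (fun x => gradp v x i) W := by
  have h1 : AnalyticOnNhd ℝ (fun p => fderiv ℝ v p (Pi.single i 1 : Fin n → ℝ)) W := fun p hp =>
    ((ContinuousLinearMap.apply ℝ ℝ (Pi.single i 1 : Fin n → ℝ)).analyticAt _).comp
      (h.fderiv p hp)
  refine AnalyticOnNhd.congr hW h1 ?_
  intro x hp
  exact (aux_p i (h _ hp).differentiableAt).deriv.symm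

lemma HomogPoly.smul {n l : ℕ} {U : Set (ℝ × (Fin n → ℝ))}
    {g : ℝ → (Fin n → ℝ) → ℝ → (Fin n → ℝ) → ℝ} (h : HomogPoly l U g)
    (t : ℝ) (x : Fin n → ℝ) (s τ : ℝ) (ξ : Fin n → ℝ) :
    g t x (s * τ) (fun i => s * ξ i) = s ^ l * g t x τ ξ := by
  obtain ⟨c, -, hc⟩ := h
  rw [hc, hc, Finset.mul_sum]
  refine Finset.sum_congr rfl fun μ _ => ?_
  have : ∀ j : Fin (n + 1), (Fin.cons (s * τ) (fun i => s * ξ i) : Fin (n + 1) → ℝ) j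
      = s * (Fin.cons τ ξ : Fin (n + 1) → ℝ) j := by
    intro j
    refine Fin.cases ?_ (fun i => ?_) j <;> simp
  simp only [this, Finset.prod_mul_distrib, Finset.prod_const, Finset.card_univ, Fintype.card_fin]
  ring

lemma HomogPoly.analytic {n l : ℕ} {U : Set (ℝ × (Fin n → ℝ))}
    {g : ℝ → (Fin n → ℝ) → ℝ → (Fin n → ℝ) → ℝ} (h : HomogPoly l U g)
    {p : ℝ × (Fin n → ℝ)} (hp : p ∈ U)
    {τ : ℝ × (Fin n → ℝ) → ℝ} {ξ : ℝ × (Fin n → ℝ) → Fin n → ℝ}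
    (hτ : AnalyticAt ℝ τ p) (hξ : ∀ i, AnalyticAt ℝ (fun q => ξ q i) p) :
    AnalyticAt ℝ (fun q => g q.1 q.2 (τ q) (ξ q)) p := by
  obtain ⟨c, hca, hc⟩ := h
  simp only [hc]
  refine Finset.analyticAt_fun_sum _ fun μ _ => ?_
  refine (hca μ p hp).mul (Finset.analyticAt_fun_prod _ fun k _ => ?_)
  refine Fin.cases ?_ (fun i => ?_) (μ k)
  · simpa using hτ
  · simpa using hξ i

/-- Under the structural condition `1 - |∇ψ|² = a f₂(ψ(x),x;-1,∇ψ)`, for any analytic `v`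
and `u = -a log(t-ψ) + v`, the function `(t-ψ)²(u_tt - Δu - f(t,x;∂_t u,∇u))` extends
analytically across `Σ = {t = ψ(x)}` with vanishing restriction to `Σ`: the `1/(t-ψ)²`
singularity cancels exactly. -/
theorem stmt6 {n : ℕ} (U : Set (ℝ × (Fin n → ℝ))) (hU : IsOpen U)
    (f₂ f₁ f₀ : ℝ → (Fin n → ℝ) → ℝ → (Fin n → ℝ) → ℝ)
    (hf₂ : HomogPoly 2 U f₂) (hf₁ : HomogPoly 1 U f₁) (hf₀ : HomogPoly 0 U f₀)
    (ψ : (Fin n → ℝ) → ℝ) (hψ : AnalyticOnNhd ℝ ψ {x | (ψ x, x) ∈ U})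
    (a : ℝ) (ha : a ≠ 0)
    (hcond : ∀ x, (ψ x, x) ∈ U →
      1 - ∑ i, gradp ψ x i ^ 2 = a * f₂ (ψ x) x (-1) (gradp ψ x))
    (W : Set (ℝ × (Fin n → ℝ))) (hW : IsOpen W) (hWU : W ⊆ U)
    (hSW : {p ∈ U | p.1 = ψ p.2} ⊆ W)
    (v : ℝ → (Fin n → ℝ) → ℝ)
    (hv : AnalyticOnNhd ℝ (fun p : ℝ × (Fin n → ℝ) => v p.1 p.2) W) :
    ∃ Ω : Set (ℝ × (Fin n → ℝ)), IsOpen Ω ∧ {p ∈ U | p.1 = ψ p.2} ⊆ Ω ∧ Ω ⊆ W ∧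
      ∃ G : ℝ → (Fin n → ℝ) → ℝ,
        AnalyticOnNhd ℝ (fun p : ℝ × (Fin n → ℝ) => G p.1 p.2) Ω ∧
        (∀ t x, (t, x) ∈ Ω → ψ x < t →
          G t x =
            (t - ψ x) ^ 2 *
              (ptd (ptd (fun t x => -a * Real.log (t - ψ x) + v t x)) t x
                - lapx (fun t x => -a * Real.log (t - ψ x) + v t x) t x
                - (f₂ t x (ptd (fun t x => -a * Real.log (t - ψ x) + v t x) t x)
                      (gradx (fun t x => -a * Real.log (t - ψ x) + v t x) t x)
                    + f₁ t x (ptd (fun t x => -a * Real.log (t - ψ x) + v t x) t x)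
                      (gradx (fun t x => -a * Real.log (t - ψ x) + v t x) t x)
                    + f₀ t x (ptd (fun t x => -a * Real.log (t - ψ x) + v t x) t x)
                      (gradx (fun t x => -a * Real.log (t - ψ x) + v t x) t x)))) ∧
        ∀ x, (ψ x, x) ∈ Ω → G (ψ x) x = 0 := by
  set D : Set (Fin n → ℝ) := {x | (ψ x, x) ∈ U} with hD
  have hDo : IsOpen D := by
    rw [isOpen_iff_mem_nhds]
    intro x hx
    have hc : ContinuousAt (fun y => (ψ y, y)) x :=
      (hψ x hx).continuousAt.prodMk continuousAt_id
    exact hc (hU.mem_nhds hx)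
  have hDO : IsOpen (Prod.snd ⁻¹' D : Set (ℝ × (Fin n → ℝ))) := hDo.preimage continuous_snd
  set Ω : Set (ℝ × (Fin n → ℝ)) := W ∩ Prod.snd ⁻¹' D with hΩ
  have hΩo : IsOpen Ω := hW.inter hDO
  have hψa : ∀ p ∈ Ω, AnalyticAt ℝ (fun q : ℝ × (Fin n → ℝ) => ψ q.2) p := fun p hp =>
    (hψ p.2 hp.2).comp (f := fun q : ℝ × (Fin n → ℝ) => q.2) analyticAt_snd
  have hψ1 := fun i => an_p i hDo hψ
  have hψ2 := fun i => an_p i hDo (hψ1 i)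
  have hψ1a : ∀ i, ∀ p ∈ Ω, AnalyticAt ℝ (fun q : ℝ × (Fin n → ℝ) => gradp ψ q.2 i) p :=
    fun i p hp => (hψ1 i p.2 hp.2).comp (f := fun q : ℝ × (Fin n → ℝ) => q.2) analyticAt_snd
  have hψ2a : ∀ i, ∀ p ∈ Ω, AnalyticAt ℝ
      (fun q : ℝ × (Fin n → ℝ) => gradp (fun x => gradp ψ x i) q.2 i) p :=
    fun i p hp => (hψ2 i p.2 hp.2).comp (f := fun q : ℝ × (Fin n → ℝ) => q.2) analyticAt_snd
  have hvt := an_t hW hv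
  have hvtt := an_t hW hvt
  have hvx := fun i => an_x i hW hv
  have hvxx := fun i => an_x i hW (hvx i)
  have hsa : ∀ p ∈ Ω, AnalyticAt ℝ (fun q : ℝ × (Fin n → ℝ) => q.1 - ψ q.2) p := fun p hp =>
    analyticAt_fst.sub (hψa p hp)
  set P : Set (ℝ × (Fin n → ℝ)) := {p | p ∈ Ω ∧ 0 < p.1 - ψ p.2} with hP
  have hPo : IsOpen P := by
    rw [isOpen_iff_mem_nhds]
    intro p hp
    exact Filter.inter_mem (hΩo.mem_nhds hp.1)
      ((hsa p hp.1).continuousAt.eventually (lt_mem_nhds hp.2))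
  set u : ℝ → (Fin n → ℝ) → ℝ := fun t x => -a * Real.log (t - ψ x) + v t x with hu
  have hut : ∀ t x, (t, x) ∈ P → ptd u t x = -a / (t - ψ x) + ptd v t x := by
    intro t x hp
    have h1 := hd_t (hv _ hp.1.1).differentiableAt
    have h2 : HasDerivAt (fun s => s - ψ x) 1 t := (hasDerivAt_id t).sub_const _
    have h3 := ((h2.log hp.2.ne').const_mul (-a)).add h1
    refine h3.deriv.trans ?_
    ring
  have hux : ∀ i t x, (t, x) ∈ P →
      pxd i u t x = a * gradp ψ x i / (t - ψ x) + pxd i v t x := by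
    intro i t x hp
    have h1 := hd_x i (hv _ hp.1.1).differentiableAt
    have h2 := (hd_p i (hψ _ hp.1.2).differentiableAt).const_sub t
    have h3 := ((h2.log (by rw [Function.update_eq_self]; exact hp.2.ne')).const_mul (-a)).add h1
    refine h3.deriv.trans ?_
    simp only [Function.update_eq_self]
    ring
  have hutt : ∀ t x, (t, x) ∈ P →
      ptd (ptd u) t x = a / (t - ψ x) ^ 2 + ptd (ptd v) t x := by
    intro t x hp
    have h1 := hd_t (hvt _ hp.1.1).differentiableAt
    have h2 : HasDerivAt (fun s => s - ψ x) 1 t := (hasDerivAt_id t).sub_const _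
    have h3 := (((hasDerivAt_const t (-a)).div h2 hp.2.ne')).add h1
    have hc : ContinuousAt (fun s : ℝ => (s, x)) t := by fun_prop
    have he : (fun s => ptd u s x) =ᶠ[nhds t] fun s => -a / (s - ψ x) + ptd v s x := by
      filter_upwards [hc (hPo.mem_nhds hp)] with s hs using hut s x hs
    refine he.deriv_eq.trans (h3.deriv.trans ?_)
    ring
  have huxx : ∀ i t x, (t, x) ∈ P →
      pxd i (pxd i u) t x = a * gradp (fun x => gradp ψ x i) x i / (t - ψ x)
        + a * gradp ψ x i ^ 2 / (t - ψ x) ^ 2 + pxd i (pxd i v) t x := by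
    intro i t x hp
    have h1 := hd_x i (hvx i _ hp.1.1).differentiableAt
    have h2 := (hd_p i (hψ _ hp.1.2).differentiableAt).const_sub t
    have h2' := (hd_p i (hψ1 i _ hp.1.2).differentiableAt).const_mul a
    have h3 := (h2'.div h2 (by rw [Function.update_eq_self]; exact hp.2.ne')).add h1
    have hc : ContinuousAt (fun y : ℝ => (t, Function.update x i y)) (x i) := by fun_prop
    have he : (fun y => pxd i u t (Function.update x i y)) =ᶠ[nhds (x i)]
        fun y => a * gradp ψ (Function.update x i y) i / (t - ψ (Function.update x i y))
          + pxd i v t (Function.update x i y) := by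
      have hm : P ∈ nhds (t, Function.update x i (x i)) := by
        rw [Function.update_eq_self]; exact hPo.mem_nhds hp
      filter_upwards [hc hm] with s hs using hux i t _ hs
    refine he.deriv_eq.trans (h3.deriv.trans ?_)
    simp only [Function.update_eq_self]
    have := hp.2.ne'
    simp only at this
    field_simp
    ring
  refine ⟨Ω, hΩo, ?_, Set.inter_subset_left, fun t x =>
    a + (t - ψ x) ^ 2 * ptd (ptd v) t x
      - ∑ i, (a * gradp (fun x => gradp ψ x i) x i * (t - ψ x)
        + a * gradp ψ x i ^ 2 + (t - ψ x) ^ 2 * pxd i (pxd i v) t x)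
      - (f₂ t x (-a + (t - ψ x) * ptd v t x)
          (fun i => a * gradp ψ x i + (t - ψ x) * pxd i v t x)
        + (t - ψ x) * f₁ t x (-a + (t - ψ x) * ptd v t x)
          (fun i => a * gradp ψ x i + (t - ψ x) * pxd i v t x)
        + (t - ψ x) ^ 2 * f₀ t x (-a + (t - ψ x) * ptd v t x)
          (fun i => a * gradp ψ x i + (t - ψ x) * pxd i v t x)), ?_, ?_, ?_⟩
  · rintro ⟨t, x⟩ hp
    refine ⟨hSW hp, ?_⟩
    obtain ⟨h1, h2⟩ := hp
    simp only at h2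
    subst h2
    exact h1
  · intro p hp
    have hs := hsa p hp
    have hτ : AnalyticAt ℝ (fun q : ℝ × (Fin n → ℝ) =>
        -a + (q.1 - ψ q.2) * ptd v q.1 q.2) p :=
      analyticAt_const.add (hs.mul (hvt p hp.1))
    have hξ : ∀ i, AnalyticAt ℝ (fun q : ℝ × (Fin n → ℝ) =>
        a * gradp ψ q.2 i + (q.1 - ψ q.2) * pxd i v q.1 q.2) p := fun i =>
      (analyticAt_const.mul (hψ1a i p hp)).add (hs.mul (hvx i p hp.1))
    have hpU := hWU hp.1
    refine ((analyticAt_const.add ((hs.pow 2).mul (hvtt p hp.1))).sub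
      (Finset.analyticAt_fun_sum _ fun i _ => ?_)).sub
      (((hf₂.analytic hpU hτ hξ).add (hs.mul (hf₁.analytic hpU hτ hξ))).add
        ((hs.pow 2).mul (hf₀.analytic hpU hτ hξ)))
    exact (((analyticAt_const.mul (hψ2a i p hp)).mul hs).add
      (analyticAt_const.mul ((hψ1a i p hp).pow 2))).add ((hs.pow 2).mul (hvxx i p hp.1))
  · intro t x hp hlt
    have hpP : (t, x) ∈ P := ⟨hp, sub_pos.2 hlt⟩
    have hs : t - ψ x ≠ 0 := (sub_pos.2 hlt).ne'
    have e1 : -a + (t - ψ x) * ptd v t x = (t - ψ x) * ptd u t x := by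
      rw [hut t x hpP]; field_simp
    have e2 : (fun i => a * gradp ψ x i + (t - ψ x) * pxd i v t x)
        = fun i => (t - ψ x) * gradx u t x i := by
      funext i
      rw [gradx, hux i t x hpP]; field_simp
    have e3 : ∑ i, (a * gradp (fun x => gradp ψ x i) x i * (t - ψ x)
        + a * gradp ψ x i ^ 2 + (t - ψ x) ^ 2 * pxd i (pxd i v) t x)
        = (t - ψ x) ^ 2 * lapx u t x := by
      rw [lapx, Finset.mul_sum]
      refine Finset.sum_congr rfl fun i _ => ?_
      rw [huxx i t x hpP]; field_simp
    have e4 : a + (t - ψ x) ^ 2 * ptd (ptd v) t x = (t - ψ x) ^ 2 * ptd (ptd u) t x := by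
      rw [hutt t x hpP]; field_simp
    simp only [e1, e2, e3, e4, hf₂.smul, hf₁.smul, hf₀.smul]
    ring
  · intro x hx
    have h := hcond x hx.2
    have e := hf₂.smul (ψ x) x a (-1) (gradp ψ x)
    have e' : a * (-1) = -a := by ring
    rw [e'] at e
    simp only [sub_self, zero_mul, mul_zero, add_zero, zero_add, ne_eq, OfNat.ofNat_ne_zero,
      not_false_eq_true, zero_pow, e, ← Finset.mul_sum]
    linear_combination a * h
end
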